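/- Let p, q : Fin n → EuclideanSpace ℝ (Fin d) be injective families whose values are exactly the extreme points of P := convexHull ℝ (Set.range p) and Q := convexHull ℝ (Set.range q) respectively, and assume P and Q are combinatorially equivalent with compatible labelling. Assume both are inscribed: there exist c_P, c_Q ∈ EuclideanSpace ℝ (Fin d) and r_P, r_Q ≥ 0 with ‖p i − c_P‖ = r_P and ‖q i − c_Q‖ = r_Q for all i. If ‖q i − q j‖ = ‖p i − p j‖ for every edge (i,j) of P, then there exists an isometry e : EuclideanSpace ℝ (Fin d) ≃ᵢ EuclideanSpace ℝ (Fin d) with e (p i) = q i for all i. (An inscribed polytope of a fixed combinatorial type is uniquely determined, up to isometry, by its edge lengths.) -/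

import Mathlib

/-- For `i ≠ j`, the pair `(i,j)` is an edge of the polytope `convexHull ℝ (Set.range p)`
if the closed segment between `p i` and `p j` is an extreme subset of it. -/
def IsEdge {n d : ℕ} (p : Fin n → EuclideanSpace ℝ (Fin d)) (i j : Fin n) : Prop :=
  i ≠ j ∧ IsExtreme ℝ (convexHull ℝ (Set.range p)) (segment ℝ (p i) (p j))

/-- Two polytopes with labelled vertices are combinatorially equivalent with compatible
labelling if for every `S ⊆ Fin n`, `convexHull ℝ (p '' S)` is an extreme subset of the
first polytope exactly when `convexHull ℝ (q '' S)` is an extreme subset of the second. -/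
def CombEquiv {n d : ℕ} (p q : Fin n → EuclideanSpace ℝ (Fin d)) : Prop :=
  ∀ S : Set (Fin n),
    IsExtreme ℝ (convexHull ℝ (Set.range p)) (convexHull ℝ (p '' S)) ↔
    IsExtreme ℝ (convexHull ℝ (Set.range q)) (convexHull ℝ (q '' S))

/-!
Induction on the number of vertices makes corresponding proper faces congruent. If some distance
were smaller in `q` than in `p`, choose a pair `i`, `j` for which the ratio
`‖p i - p j‖ / ‖q i - q j‖` is maximal and, among those, `‖p i - p j‖` is minimal. The inversions at
`p j` and `q j` flatten the spheres to hyperplanes, in which the images of the faces at `j` bound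
two polytopes with congruent facets, the images of `p i` and `q i` being interior points. Maximality
says that the image of `p i` is no farther from any boundary vertex than the image of `q i`.

From dimension two on, such an inequality between distances from interior points forces equality:
move one of the points towards a vertex until a first distance agrees and, at the vertex of contact,
compare the angles in the cones of the two polytopes, by induction on the dimension. At the bottom
are convex polygons, whose edges are seen from an interior point under angles with sum `2π`. By
minimality of the pair, equality puts the whole polytope on the wrong side of a hyperplane.

For inscribed polygons the inverted picture is a segment. Comparing its lengths shows that the
circumradius increases from `p` to `q` and that another distance increases, so that the argument
with `p` and `q` exchanged gives the opposite inequality between the circumradii.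
-/

namespace InscribedPolytope

open Set

/-! ### Polyhedral cones -/

section ConeFaces

variable {ι V : Type*} [AddCommGroup V] [Module ℝ V] {g : ι → V} {F G : Set ι} {a b : ι}

/-- `F` is the index set of a face of the polyhedral cone generated by the family `g`, encoded by
a supporting functional that vanishes on exactly these generators. -/
def IsConeFace (g : ι → V) (F : Set ι) : Prop :=
  ∃ n : Module.Dual ℝ V, (∀ a ∈ F, n (g a) = 0) ∧ ∀ a ∉ F, 0 < n (g a)

/-- The generator `g a` lies on the relative boundary of the cone generated by `g`. -/
def IsBoundary (g : ι → V) (a : ι) : Prop := ∃ F, IsConeFace g F ∧ F ≠ univ ∧ a ∈ F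

/-- The cone generated by `g` is pointed: its apex `0` is a face. Generators may be zero. -/
def IsPointed (g : ι → V) : Prop := IsConeFace g {a | g a = 0}

/-- The indices of the generators on the line through `g b`. -/
def lineIndices (g : ι → V) (b : ι) : Set ι := {a | g a ∈ Submodule.span ℝ {g b}}

/-- The generator `g b` spans an extreme ray (one-dimensional face) of the cone. -/
def IsExtremeRay (g : ι → V) (b : ι) : Prop := g b ≠ 0 ∧ IsConeFace g (lineIndices g b)

/-- `Z` lies in the relative interior of the cone generated by `g`, expressed dually: a
functional that is nonnegative on the cone and does not vanish on it is positive at `Z`. -/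
def IsInnerVector (g : ι → V) (Z : V) : Prop :=
  Z ∈ Submodule.span ℝ (range g) ∧
    ∀ n : Module.Dual ℝ V, (∀ a, 0 ≤ n (g a)) → (∃ a, 0 < n (g a)) → 0 < n Z

theorem isConeFace_univ (g : ι → V) : IsConeFace g univ := ⟨0, by simp, by simp⟩

theorem isConeFace_zeros {n : Module.Dual ℝ V} (hn : ∀ a, 0 ≤ n (g a)) :
    IsConeFace g {a | n (g a) = 0} :=
  ⟨n, fun _ ha ↦ ha, fun a ha ↦ (hn a).lt_of_ne' ha⟩

theorem IsConeFace.mem_of_mem_span (hF : IsConeFace g F) (ha : g a ∈ Submodule.span ℝ (g '' F)) :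
    a ∈ F := by
  obtain ⟨n, hn0, hn1⟩ := hF
  by_contra h
  have hle : Submodule.span ℝ (g '' F) ≤ LinearMap.ker n :=
    Submodule.span_le.2 (by rintro _ ⟨b, hb, rfl⟩; exact hn0 b hb)
  exact (hn1 a h).ne' (hle ha)

theorem IsConeFace.mem_of_eq_zero (hF : IsConeFace g F) (ha : g a = 0) : a ∈ F :=
  hF.mem_of_mem_span (ha ▸ zero_mem _)

theorem mem_lineIndices : a ∈ lineIndices g b ↔ g a ∈ Submodule.span ℝ {g b} := Iff.rfl

theorem mem_lineIndices_self (g : ι → V) (b : ι) : b ∈ lineIndices g b :=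
  Submodule.mem_span_singleton_self _

theorem IsConeFace.lineIndices_subset (hF : IsConeFace g F) (hb : b ∈ F) : lineIndices g b ⊆ F :=
  fun _ ha ↦ hF.mem_of_mem_span (Submodule.span_mono
    (singleton_subset_iff.2 (mem_image_of_mem g hb)) ha)

theorem IsPointed.exists_pos (hg : IsPointed g) :
    ∃ n : Module.Dual ℝ V, ∀ a, g a ≠ 0 → 0 < n (g a) :=
  let ⟨n, _, hn⟩ := hg; ⟨n, hn⟩

theorem IsConeFace.isConeFace_inter_zeros [Finite ι] (hF : IsConeFace g F) {m : Module.Dual ℝ V}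
    (hm : ∀ a ∈ F, 0 ≤ m (g a)) : IsConeFace g {a ∈ F | m (g a) = 0} := by
  obtain ⟨n, hn0, hn1⟩ := hF
  obtain ⟨M, hM⟩ := (finite_range fun a ↦ -m (g a) / n (g a)).bddAbove
  refine ⟨(M + 1) • n + m, fun a ⟨haF, ha⟩ ↦ by simp [hn0 a haF, ha], fun a ha ↦ ?_⟩
  by_cases haF : a ∈ F
  · simpa [hn0 a haF] using (hm a haF).lt_of_ne' fun h ↦ ha ⟨haF, h⟩
  · have hle := (div_le_iff₀ (hn1 a haF)).1 (hM (mem_range_self a))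
    simp only [LinearMap.add_apply, LinearMap.smul_apply, smul_eq_mul]
    linarith [hn1 a haF]

/-- Tilting a functional `m` by a pointing functional `n₀` until it supports `F` from below. -/
theorem IsConeFace.exists_tilt [Finite ι] {n₀ : Module.Dual ℝ V}
    (hn₀ : ∀ a, g a ≠ 0 → 0 < n₀ (g a)) (hF : IsConeFace g F) (hne : ∃ a ∈ F, g a ≠ 0)
    (m : Module.Dual ℝ V) :
    ∃ μ : ℝ, (∀ a ∈ F, μ * n₀ (g a) ≤ m (g a)) ∧
      IsConeFace g {a ∈ F | m (g a) = μ * n₀ (g a)} ∧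
      ∃ a ∈ F, g a ≠ 0 ∧ m (g a) = μ * n₀ (g a) := by
  obtain ⟨b, ⟨hbF, hb⟩, hmin⟩ := exists_min_image {a ∈ F | g a ≠ 0}
    (fun a ↦ m (g a) / n₀ (g a)) (toFinite _) hne
  set μ := m (g b) / n₀ (g b)
  have hle : ∀ a ∈ F, μ * n₀ (g a) ≤ m (g a) := fun a haF ↦ by
    by_cases ha : g a = 0
    · simp [ha]
    · exact (le_div_iff₀ (hn₀ a ha)).1 (hmin a ⟨haF, ha⟩)
  refine ⟨μ, hle, ?_, b, hbF, hb, (div_mul_cancel₀ _ (hn₀ b hb).ne').symm⟩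
  simpa [sub_eq_zero] using
    hF.isConeFace_inter_zeros (m := m - μ • n₀) fun a ha ↦ by simpa using hle a ha

/-- A nonzero minimal face is a ray: tilting any functional singles out the whole face, so all
functionals are proportional on it. -/
theorem IsConeFace.subset_lineIndices_of_minimal [Finite ι] (hg : IsPointed g)
    (hF : IsConeFace g F)
    (hmin : ∀ G, IsConeFace g G → (∃ a ∈ G, g a ≠ 0) → G ⊆ F → F ⊆ G)
    (hbF : b ∈ F) (hb : g b ≠ 0) : F ⊆ lineIndices g b := by
  obtain ⟨n₀, hn₀⟩ := hg.exists_pos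
  intro a haF
  refine Submodule.mem_span_singleton.2 ⟨n₀ (g a) / n₀ (g b), ?_⟩
  rw [← sub_eq_zero, ← Module.forall_dual_apply_eq_zero_iff ℝ]
  intro m
  obtain ⟨μ, -, hG, c, hcF, hc, hcμ⟩ := hF.exists_tilt hn₀ ⟨b, hbF, hb⟩ m
  have hsub := hmin _ hG ⟨c, ⟨hcF, hcμ⟩, hc⟩ (sep_subset _ _)
  have hb' := (hn₀ b hb).ne'
  rw [map_sub, map_smul, (hsub haF).2, (hsub hbF).2, smul_eq_mul]
  field_simp
  ring

theorem IsConeFace.exists_isExtremeRay [Finite ι] (hg : IsPointed g) (hF : IsConeFace g F)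
    (hne : ∃ a ∈ F, g a ≠ 0) : ∃ b ∈ F, IsExtremeRay g b := by
  obtain ⟨G, hGF, hG⟩ := (toFinite {G | IsConeFace g G ∧ ∃ a ∈ G, g a ≠ 0}).exists_le_minimal
    (a := F) ⟨hF, hne⟩
  obtain ⟨hGface, b, hbG, hb⟩ := hG.prop
  have hline : lineIndices g b = G := (hGface.lineIndices_subset hbG).antisymm <|
    hGface.subset_lineIndices_of_minimal hg (fun K hK hK' hKG ↦ hG.le_of_le ⟨hK, hK'⟩ hKG) hbG hb
  exact ⟨b, hGF hbG, hb, hline ▸ hGface⟩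

theorem IsConeFace.eq_lineIndices (hG : IsConeFace g G)
    (hsub : G ⊆ lineIndices g b) (hne : ∃ a ∈ G, g a ≠ 0) : G = lineIndices g b := by
  obtain ⟨a, haG, ha⟩ := hne
  refine hsub.antisymm fun c hc ↦ hG.lineIndices_subset haG ?_
  obtain ⟨t, ht⟩ := Submodule.mem_span_singleton.1 (hsub haG)
  have ht0 : t ≠ 0 := by rintro rfl; exact ha (by simpa using ht.symm)
  rwa [mem_lineIndices, ← ht, Submodule.span_singleton_smul_eq (IsUnit.mk0 t ht0)]

theorem IsPointed.nonneg_of_nonneg_isExtremeRay [Finite ι] (hg : IsPointed g)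
    {m : Module.Dual ℝ V} (hm : ∀ b, IsExtremeRay g b → 0 ≤ m (g b)) (a : ι) : 0 ≤ m (g a) := by
  obtain ⟨n₀, hn₀⟩ := hg.exists_pos
  by_cases ha : g a = 0
  · simp [ha]
  obtain ⟨μ, hμ, hface, c, -, hc, hcμ⟩ :=
    (isConeFace_univ g).exists_tilt hn₀ ⟨a, mem_univ a, ha⟩ m
  obtain ⟨b, hbF, hb⟩ := hface.exists_isExtremeRay hg ⟨c, ⟨mem_univ c, hcμ⟩, hc⟩
  have hμ0 : 0 ≤ μ := nonneg_of_mul_nonneg_left (hbF.2 ▸ hm b hb) (hn₀ b hb.1)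
  exact (mul_nonneg hμ0 (hn₀ a ha).le).trans (hμ a (mem_univ a))

end ConeFaces

section InnerVectors

variable {ι V W : Type*} [AddCommGroup V] [Module ℝ V] [AddCommGroup W] [Module ℝ W]
  {g : ι → V} {F : Set ι} {a b : ι} {Z : V}

theorem isInnerVector_of_not_isBoundary (ha : ¬ IsBoundary g a) : IsInnerVector g (g a) := by
  refine ⟨Submodule.subset_span (mem_range_self a), fun n hn ⟨b, hb⟩ ↦ (hn a).lt_of_ne' fun h ↦
    ha ⟨_, isConeFace_zeros hn, fun huniv ↦ hb.ne' ?_, h⟩⟩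
  exact huniv.ge (mem_univ b)

theorem IsInnerVector.smul_add_smul (hZ : IsInnerVector g Z) (b : ι) {x y : ℝ} (hx : 0 < x)
    (hy : 0 ≤ y) : IsInnerVector g (x • Z + y • g b) := by
  refine ⟨add_mem (Submodule.smul_mem _ _ hZ.1)
    (Submodule.smul_mem _ _ (Submodule.subset_span (mem_range_self b))), fun n hn hpos ↦ ?_⟩
  have hnZ := hZ.2 n hn hpos
  have hnb := hn b
  simp only [map_add, map_smul, smul_eq_mul]
  positivity

theorem IsInnerVector.exists_normal_pos (hZ : IsInnerVector g Z) (hF : IsConeFace g F)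
    (hne : F ≠ univ) :
    ∃ n : Module.Dual ℝ V, (∀ a ∈ F, n (g a) = 0) ∧ (∀ a ∉ F, 0 < n (g a)) ∧ 0 < n Z := by
  obtain ⟨n, hn0, hn1⟩ := hF
  obtain ⟨a, ha⟩ := (ne_univ_iff_exists_notMem F).1 hne
  refine ⟨n, hn0, hn1, hZ.2 n (fun b ↦ ?_) ⟨a, hn1 a ha⟩⟩
  by_cases hb : b ∈ F
  exacts [(hn0 b hb).ge, (hn1 b hb).le]

theorem IsInnerVector.map (hZ : IsInnerVector g Z) (π : V →ₗ[ℝ] W) :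
    IsInnerVector (π ∘ g) (π Z) := by
  refine ⟨?_, fun n hn hpos ↦ hZ.2 (n ∘ₗ π) hn hpos⟩
  rw [range_comp, Submodule.span_image]
  exact Submodule.mem_map_of_mem hZ.1

end InnerVectors

section Rank

variable {ι V W : Type*} [AddCommGroup V] [Module ℝ V] [AddCommGroup W] [Module ℝ W]
  {g : ι → V} {b : ι} {Z : V}

theorem exists_ne_zero_of_finrank_pos (h : 0 < (range g).finrank ℝ) : ∃ a, g a ≠ 0 := by
  by_contra! h0
  have hle : Submodule.span ℝ (range g) = ⊥ :=
    Submodule.span_eq_bot.2 (forall_mem_range.2 h0)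
  rw [Set.finrank, hle, finrank_bot] at h
  exact h.false

theorem exists_notMem_span_singleton (h : 2 ≤ (range g).finrank ℝ) (v : V) :
    ∃ a, g a ∉ Submodule.span ℝ {v} := by
  by_contra! hv
  have hle : Submodule.span ℝ (range g) ≤ Submodule.span ℝ {v} :=
    Submodule.span_le.2 (range_subset_iff.2 hv)
  have h1 := (Submodule.finrank_mono hle).trans (finrank_span_le_card ({v} : Set V))
  simp only [toFinset_singleton, Finset.card_singleton] at h1
  exact absurd (h.trans h1) (by norm_num)

theorem IsExtremeRay.isBoundary (hb : IsExtremeRay g b) (hr : 2 ≤ (range g).finrank ℝ) :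
    IsBoundary g b := by
  obtain ⟨a, ha⟩ := exists_notMem_span_singleton hr (g b)
  exact ⟨_, hb.2, ne_of_mem_of_not_mem' (mem_univ a) ha |>.symm, mem_lineIndices_self g b⟩

theorem IsPointed.nonneg_of_nonneg_isBoundary [Finite ι] (hg : IsPointed g)
    (hr : 2 ≤ (range g).finrank ℝ) {m : Module.Dual ℝ V} (hm : ∀ b, IsBoundary g b → 0 ≤ m (g b))
    (a : ι) : 0 ≤ m (g a) :=
  hg.nonneg_of_nonneg_isExtremeRay (fun b hb ↦ hm b (hb.isBoundary hr)) a

theorem IsPointed.exists_isExtremeRay [Finite ι] (hg : IsPointed g)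
    (hr : 0 < (range g).finrank ℝ) : ∃ b, IsExtremeRay g b := by
  obtain ⟨a, ha⟩ := exists_ne_zero_of_finrank_pos hr
  obtain ⟨b, -, hb⟩ := (isConeFace_univ g).exists_isExtremeRay hg ⟨a, mem_univ a, ha⟩
  exact ⟨b, hb⟩

theorem IsInnerVector.ne_zero (hZ : IsInnerVector g Z) (hg : IsPointed g)
    (hr : 0 < (range g).finrank ℝ) : Z ≠ 0 := by
  rintro rfl
  obtain ⟨a, ha⟩ := exists_ne_zero_of_finrank_pos hr
  obtain ⟨n, -, -, hn⟩ := hZ.exists_normal_pos hg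
    (ne_of_mem_of_not_mem' (mem_univ a) (show a ∉ {a | g a = 0} from ha)).symm
  exact hn.ne' (map_zero n)

theorem finrank_map_add_one {π : V →ₗ[ℝ] W} {v : V} (hπ : LinearMap.ker π = Submodule.span ℝ {v})
    (hv : v ≠ 0) (S : Submodule ℝ V) [FiniteDimensional ℝ S] (hvS : v ∈ S) :
    Module.finrank ℝ (S.map π) + 1 = Module.finrank ℝ S := by
  have hle : LinearMap.ker π ≤ S := hπ ▸ (Submodule.span_singleton_le_iff_mem v S).2 hvS
  rw [← LinearMap.finrank_range_add_finrank_ker (π.domRestrict S), LinearMap.range_domRestrict,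
    LinearMap.ker_domRestrict, (Submodule.comapSubtypeEquivOfLe hle).finrank_eq, hπ,
    finrank_span_singleton hv]

end Rank

section Quotients

variable {ι V W : Type*} [AddCommGroup V] [Module ℝ V] [AddCommGroup W] [Module ℝ W]
  {g : ι → V} {F : Set ι} {a b : ι} {π : V →ₗ[ℝ] W}

theorem exists_comp_eq_of_ker_eq_span {v : V} (hπ : LinearMap.ker π = Submodule.span ℝ {v})
    {n : Module.Dual ℝ V} (hn : n v = 0) : ∃ m : Module.Dual ℝ W, m ∘ₗ π = n := by
  have hmem : n ∈ LinearMap.range π.dualMap := by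
    rw [LinearMap.range_dualMap_eq_dualAnnihilator_ker, hπ, Submodule.mem_dualAnnihilator]
    intro w hw
    obtain ⟨c, rfl⟩ := Submodule.mem_span_singleton.1 hw
    rw [map_smul, hn, smul_zero]
  exact hmem

theorem isConeFace_comp_iff (hπ : LinearMap.ker π = Submodule.span ℝ {g b}) :
    IsConeFace (π ∘ g) F ↔ IsConeFace g F ∧ b ∈ F := by
  have hb : π (g b) = 0 := LinearMap.mem_ker.1 (hπ ▸ Submodule.mem_span_singleton_self _)
  constructor
  · intro h
    obtain ⟨n, hn0, hn1⟩ := id h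
    exact ⟨⟨n ∘ₗ π, hn0, hn1⟩, h.mem_of_eq_zero hb⟩
  · rintro ⟨⟨n, hn0, hn1⟩, hbF⟩
    obtain ⟨m, rfl⟩ := exists_comp_eq_of_ker_eq_span hπ (hn0 b hbF)
    exact ⟨m, hn0, hn1⟩

theorem map_eq_zero_iff_mem_lineIndices (hπ : LinearMap.ker π = Submodule.span ℝ {g b}) :
    π (g a) = 0 ↔ a ∈ lineIndices g b := by
  rw [← LinearMap.mem_ker, hπ, mem_lineIndices]

theorem IsExtremeRay.isPointed_comp (hb : IsExtremeRay g b)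
    (hπ : LinearMap.ker π = Submodule.span ℝ {g b}) : IsPointed (π ∘ g) := by
  have hzero : {a | (π ∘ g) a = 0} = lineIndices g b :=
    ext fun a ↦ map_eq_zero_iff_mem_lineIndices hπ
  rw [IsPointed, hzero, isConeFace_comp_iff hπ]
  exact ⟨hb.2, mem_lineIndices_self g b⟩

theorem isBoundary_comp_iff (hπ : LinearMap.ker π = Submodule.span ℝ {g b}) :
    IsBoundary (π ∘ g) a ↔ ∃ F, IsConeFace g F ∧ F ≠ univ ∧ b ∈ F ∧ a ∈ F := by
  simp only [IsBoundary, isConeFace_comp_iff hπ]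
  grind

theorem finrank_range_comp_add_one [Finite ι] (hπ : LinearMap.ker π = Submodule.span ℝ {g b})
    (hb : g b ≠ 0) : (range (π ∘ g)).finrank ℝ + 1 = (range g).finrank ℝ := by
  have := FiniteDimensional.span_of_finite ℝ (finite_range g)
  rw [Set.finrank, range_comp, Submodule.span_image, Set.finrank]
  exact finrank_map_add_one hπ hb _ (Submodule.subset_span (mem_range_self b))

/-- Convexity is local: in the quotient by the ray this says that the faces bound the cone. -/
theorem IsExtremeRay.nonneg_of_nonneg_on_faces [Finite ι] (hb : IsExtremeRay g b)
    (hr : 3 ≤ (range g).finrank ℝ) {m : Module.Dual ℝ V} (hmb : m (g b) = 0)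
    (hm : ∀ F, IsConeFace g F → F ≠ univ → b ∈ F → ∀ a ∈ F, 0 ≤ m (g a)) (a : ι) :
    0 ≤ m (g a) := by
  set π := (Submodule.span ℝ {g b}).mkQ
  have hπ : LinearMap.ker π = Submodule.span ℝ {g b} := Submodule.ker_mkQ _
  obtain ⟨m', rfl⟩ := exists_comp_eq_of_ker_eq_span hπ hmb
  have hr' := finrank_range_comp_add_one hπ hb.1
  refine (hb.isPointed_comp hπ).nonneg_of_nonneg_isBoundary (by lia) (m := m') (fun c hc ↦ ?_) a
  obtain ⟨F, hF, hne, hbF, hcF⟩ := (isBoundary_comp_iff hπ).1 hc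
  exact hm F hF hne hbF c hcF

end Quotients

section Projections

/-- Subtraction of the `φ`-component along `v`. When `φ v = 1` this is the projection along `v`
onto the kernel of `φ`. -/
def projAlong {V : Type*} [AddCommGroup V] [Module ℝ V] (φ : Module.Dual ℝ V) (v : V) :
    V →ₗ[ℝ] V :=
  LinearMap.id - φ.smulRight v

/-- The functional `⟪v, ·⟫ / ‖v‖²`, for which `projAlong (dualOf v) v` is the orthogonal projection
onto the complement of `v`. -/
noncomputable def dualOf {E : Type*} [NormedAddCommGroup E] [InnerProductSpace ℝ E] (v : E) :
    Module.Dual ℝ E :=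
  (‖v‖ ^ 2)⁻¹ • innerₛₗ ℝ v

section

variable {V : Type*} [AddCommGroup V] [Module ℝ V]

theorem projAlong_apply (φ : Module.Dual ℝ V) (v x : V) : projAlong φ v x = x - φ x • v := by
  simp [projAlong]

theorem ker_projAlong {φ : Module.Dual ℝ V} {v : V} (hφ : φ v = 1) :
    LinearMap.ker (projAlong φ v) = Submodule.span ℝ {v} := by
  ext x
  rw [LinearMap.mem_ker, Submodule.mem_span_singleton, projAlong_apply]
  constructor
  · exact fun h ↦ ⟨_, (sub_eq_zero.1 h).symm⟩
  · rintro ⟨c, rfl⟩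
    simp [hφ]

end

variable {E : Type*} [NormedAddCommGroup E] [InnerProductSpace ℝ E] {v : E}

theorem dualOf_apply (v x : E) : dualOf v x = (‖v‖ ^ 2)⁻¹ * inner ℝ v x := rfl

theorem dualOf_self (hv : v ≠ 0) : dualOf v v = 1 := by
  rw [dualOf_apply, real_inner_self_eq_norm_sq]
  exact inv_mul_cancel₀ (pow_ne_zero 2 (norm_ne_zero_iff.2 hv))

theorem ker_projAlong_dualOf (hv : v ≠ 0) :
    LinearMap.ker (projAlong (dualOf v) v) = Submodule.span ℝ {v} :=
  ker_projAlong (dualOf_self hv)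

theorem inner_projAlong_dualOf (hv : v ≠ 0) (x y : E) :
    inner ℝ (projAlong (dualOf v) v x) (projAlong (dualOf v) v y) =
      inner ℝ x y - (‖v‖ ^ 2)⁻¹ * inner ℝ v x * inner ℝ v y := by
  have hv' : ‖v‖ ≠ 0 := norm_ne_zero_iff.2 hv
  simp only [projAlong_apply, dualOf_apply, inner_sub_left, inner_sub_right, real_inner_smul_left,
    real_inner_smul_right, real_inner_self_eq_norm_sq, real_inner_comm v x]
  field_simp
  ring

end Projections

section Rays

variable {ι V : Type*} [AddCommGroup V] [Module ℝ V] {g : ι → V} {F : Set ι} {a e f : ι}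

/-- Tilting the negative of a normal of one ray finds a ray on the other side. -/
theorem IsConeFace.exists_isExtremeRay_notMem [Finite ι] (hg : IsPointed g) (hF : IsConeFace g F)
    (he : IsExtremeRay g e) (hFe : ¬ F ⊆ lineIndices g e) :
    ∃ f ∈ F, IsExtremeRay g f ∧ f ∉ lineIndices g e := by
  obtain ⟨n, hn0, hn1⟩ := id he.2
  obtain ⟨n₀, hn₀⟩ := hg.exists_pos
  obtain ⟨a, haF, hae⟩ := not_subset.1 hFe
  have ha : g a ≠ 0 := fun h ↦ hae (he.2.mem_of_eq_zero h)
  obtain ⟨μ, hμ, hface, c, hcF, hc, hcμ⟩ := hF.exists_tilt hn₀ ⟨a, haF, ha⟩ (-n)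
  obtain ⟨f, ⟨hfF, hfμ⟩, hf⟩ := hface.exists_isExtremeRay hg ⟨c, ⟨hcF, hcμ⟩, hc⟩
  refine ⟨f, hfF, hf, fun hfe ↦ ?_⟩
  have hμ0 : μ = 0 := by simpa [hn0 f hfe, (hn₀ f hf.1).ne'] using hfμ
  have hle := hμ a haF
  simp only [hμ0, zero_mul, LinearMap.neg_apply] at hle
  linarith [hn1 a hae]

theorem IsExtremeRay.lineIndices_eq (he : IsExtremeRay g e) (hf : IsExtremeRay g f)
    (hfe : f ∈ lineIndices g e) : lineIndices g f = lineIndices g e :=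
  hf.2.eq_lineIndices (he.2.lineIndices_subset hfe) ⟨f, mem_lineIndices_self g f, hf.1⟩

theorem IsExtremeRay.linearIndependent_pair (he : IsExtremeRay g e) (hfe : f ∉ lineIndices g e) :
    LinearIndependent ℝ ![g e, g f] :=
  (LinearIndependent.pair_iff' he.1).2 fun c hc ↦ hfe (Submodule.mem_span_singleton.2 ⟨c, hc⟩)

/-- The coefficients are read off from the normals of the two rays. -/
theorem IsExtremeRay.exists_nonneg_combination (he : IsExtremeRay g e)
    (hf : IsExtremeRay g f) (hfe : f ∉ lineIndices g e)
    (ha : g a ∈ Submodule.span ℝ {g e, g f}) :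
    ∃ x y : ℝ, 0 ≤ x ∧ 0 ≤ y ∧ g a = x • g e + y • g f := by
  have hef : e ∉ lineIndices g f := fun h ↦
    hfe (hf.lineIndices_eq he h ▸ mem_lineIndices_self g f)
  obtain ⟨x, y, hxy⟩ := Submodule.mem_span_pair.1 ha
  have key : ∀ {b c : ι} {s t : ℝ}, IsExtremeRay g b → c ∉ lineIndices g b →
      s • g b + t • g c = g a → 0 ≤ t := by
    rintro b c s t ⟨-, n, hn0, hn1⟩ hc h
    have hna : 0 ≤ n (g a) := by
      by_cases ha : a ∈ lineIndices g b
      exacts [(hn0 a ha).ge, (hn1 a ha).le]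
    rw [← h, map_add, map_smul, map_smul, hn0 b (mem_lineIndices_self g b), smul_zero,
      zero_add, smul_eq_mul] at hna
    exact nonneg_of_mul_nonneg_left hna (hn1 c hc)
  exact ⟨x, y, key hf hef (add_comm (x • g e) _ ▸ hxy), key he hfe hxy, hxy.symm⟩

end Rays

/-! ### Cones with congruent faces -/

section Gram

variable {ι E : Type*} [NormedAddCommGroup E] [InnerProductSpace ℝ E] {g g' : ι → E}

theorem norm_linearCombination_eq (h : ∀ i j, inner ℝ (g i) (g j) = inner ℝ (g' i) (g' j))
    (x : ι →₀ ℝ) :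
    ‖Finsupp.linearCombination ℝ g x‖ = ‖Finsupp.linearCombination ℝ g' x‖ := by
  rw [← sq_eq_sq₀ (norm_nonneg _) (norm_nonneg _), ← real_inner_self_eq_norm_sq,
    ← real_inner_self_eq_norm_sq]
  simp only [Finsupp.linearCombination_apply, Finsupp.sum_inner, Finsupp.inner_sum,
    real_inner_smul_left,
    real_inner_smul_right, h]

theorem exists_linearIsometry_of_inner_eq [FiniteDimensional ℝ E]
    (h : ∀ i j, inner ℝ (g i) (g j) = inner ℝ (g' i) (g' j)) :
    ∃ L : E →ₗᵢ[ℝ] E, ∀ i, L (g i) = g' i := by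
  set T := Finsupp.linearCombination ℝ g
  set T' := Finsupp.linearCombination ℝ g'
  obtain ⟨S, hS⟩ := T.rangeRestrict.exists_rightInverse_of_surjective T.range_rangeRestrict
  have hTS : ∀ y, T (S y) = y := fun y ↦ congrArg Subtype.val (LinearMap.congr_fun hS y)
  let L : LinearMap.range T →ₗᵢ[ℝ] E :=
    { toLinearMap := T' ∘ₗ S
      norm_map' := fun y ↦ by
        rw [LinearMap.comp_apply, ← norm_linearCombination_eq h, hTS, Submodule.coe_norm] }
  refine ⟨L.extend, fun i ↦ ?_⟩
  have hgi : T (Finsupp.single i 1) = g i := by simp [T]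
  have hgi' : T' (Finsupp.single i 1) = g' i := by simp [T']
  have hker : T' (S ⟨g i, _, hgi⟩ - Finsupp.single i 1) = 0 := by
    rw [← norm_eq_zero, ← norm_linearCombination_eq h, map_sub, hTS, hgi, sub_self, norm_zero]
  rw [map_sub, sub_eq_zero, hgi'] at hker
  exact (L.extend_apply ⟨g i, _, hgi⟩).trans hker

end Gram

section FaceIsometric

variable {ι E : Type*} [NormedAddCommGroup E] [InnerProductSpace ℝ E] {g g' : ι → E}
  {F : Set ι} {a b : ι}

/-- Two pointed cones with the same faces, such that corresponding proper faces are congruent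
(compatibly with the generators). This is the hypothesis of Cauchy's rigidity theorem, for
cones. -/
structure FaceIsometric (g g' : ι → E) : Prop where
  isConeFace_iff : ∀ F, IsConeFace g F ↔ IsConeFace g' F
  inner_eq : ∀ F, IsConeFace g F → F ≠ univ → ∀ a ∈ F, ∀ b ∈ F,
    inner ℝ (g a) (g b) = inner ℝ (g' a) (g' b)
  pointed_left : IsPointed g
  pointed_right : IsPointed g'

namespace FaceIsometric

theorem symm (H : FaceIsometric g g') : FaceIsometric g' g where
  isConeFace_iff F := (H.isConeFace_iff F).symm
  inner_eq F hF hne a ha b hb := (H.inner_eq F ((H.isConeFace_iff F).2 hF) hne a ha b hb).symm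
  pointed_left := H.pointed_right
  pointed_right := H.pointed_left

theorem eq_zero_iff (H : FaceIsometric g g') : g a = 0 ↔ g' a = 0 :=
  ⟨fun h ↦ ((H.isConeFace_iff _).2 H.pointed_right).mem_of_eq_zero h,
    fun h ↦ ((H.isConeFace_iff _).1 H.pointed_left).mem_of_eq_zero h⟩

theorem isBoundary_iff (H : FaceIsometric g g') : IsBoundary g a ↔ IsBoundary g' a := by
  simp only [IsBoundary, H.isConeFace_iff]

theorem norm_eq (H : FaceIsometric g g') (ha : IsBoundary g a) : ‖g a‖ = ‖g' a‖ := by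
  obtain ⟨F, hF, hne, haF⟩ := ha
  rw [← sq_eq_sq₀ (norm_nonneg _) (norm_nonneg _), ← real_inner_self_eq_norm_sq,
    ← real_inner_self_eq_norm_sq, H.inner_eq F hF hne a haF a haF]

theorem lineIndices_eq [Finite ι] (H : FaceIsometric g g') (hb : IsExtremeRay g b) :
    lineIndices g' b = lineIndices g b := by
  have hF' := (H.isConeFace_iff _).1 hb.2
  refine (hF'.lineIndices_subset (mem_lineIndices_self g b)).antisymm <|
    hF'.subset_lineIndices_of_minimal H.pointed_right (fun G hG ⟨a, haG, ha⟩ hsub ↦ ?_)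
    (mem_lineIndices_self g b) (fun h ↦ hb.1 (H.eq_zero_iff.2 h))
  exact (((H.isConeFace_iff G).2 hG).eq_lineIndices hsub
    ⟨a, haG, fun h ↦ ha (H.eq_zero_iff.1 h)⟩).ge

theorem isExtremeRay [Finite ι] (H : FaceIsometric g g') (hb : IsExtremeRay g b) :
    IsExtremeRay g' b :=
  ⟨fun h ↦ hb.1 (H.eq_zero_iff.2 h), H.lineIndices_eq hb ▸ (H.isConeFace_iff _).1 hb.2⟩

theorem comp [Finite ι] (H : FaceIsometric g g') (hb : IsExtremeRay g b) {π π' : E →ₗ[ℝ] E}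
    (hπ : LinearMap.ker π = Submodule.span ℝ {g b})
    (hπ' : LinearMap.ker π' = Submodule.span ℝ {g' b})
    (hinner : ∀ F, IsConeFace g F → F ≠ univ → b ∈ F → ∀ a ∈ F, ∀ c ∈ F,
      inner ℝ (π (g a)) (π (g c)) = inner ℝ (π' (g' a)) (π' (g' c))) :
    FaceIsometric (π ∘ g) (π' ∘ g') where
  isConeFace_iff F := by rw [isConeFace_comp_iff hπ, isConeFace_comp_iff hπ', H.isConeFace_iff]
  inner_eq F hF hne := by
    rw [isConeFace_comp_iff hπ] at hF
    exact hinner F hF.1 hne hF.2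
  pointed_left := hb.isPointed_comp hπ
  pointed_right := (H.isExtremeRay hb).isPointed_comp hπ'

theorem link [Finite ι] (H : FaceIsometric g g') (hb : IsExtremeRay g b) :
    FaceIsometric (projAlong (dualOf (g b)) (g b) ∘ g)
      (projAlong (dualOf (g' b)) (g' b) ∘ g') := by
  have hb' := H.isExtremeRay hb
  refine H.comp hb (ker_projAlong_dualOf hb.1) (ker_projAlong_dualOf hb'.1) ?_
  intro F hF hne hbF a ha c hc
  rw [inner_projAlong_dualOf hb.1, inner_projAlong_dualOf hb'.1, H.norm_eq ⟨F, hF, hne, hbF⟩,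
    H.inner_eq F hF hne a ha c hc, H.inner_eq F hF hne b hbF a ha, H.inner_eq F hF hne b hbF c hc]

theorem finrank_le [Finite ι] (H : FaceIsometric g g') :
    (range g).finrank ℝ ≤ (range g').finrank ℝ := by
  induction hk : (range g).finrank ℝ generalizing g g' with
  | zero => exact zero_le
  | succ k ih =>
    obtain ⟨b, hb⟩ := H.pointed_left.exists_isExtremeRay (hk ▸ k.succ_pos)
    have hb' := H.isExtremeRay hb
    have h := finrank_range_comp_add_one (ker_projAlong_dualOf hb.1) hb.1
    have h' := finrank_range_comp_add_one (ker_projAlong_dualOf hb'.1) hb'.1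
    have := ih (H.link hb) (by lia)
    lia

theorem finrank_eq [Finite ι] (H : FaceIsometric g g') :
    (range g).finrank ℝ = (range g').finrank ℝ :=
  H.finrank_le.antisymm H.symm.finrank_le

variable [FiniteDimensional ℝ E]

theorem exists_linearIsometry (H : FaceIsometric g g') (hF : IsConeFace g F) (hne : F ≠ univ) :
    ∃ L : E →ₗᵢ[ℝ] E, ∀ a ∈ F, L (g a) = g' a := by
  obtain ⟨L, hL⟩ := exists_linearIsometry_of_inner_eq (g := fun a : F ↦ g a)
    (g' := fun a : F ↦ g' a) fun a b ↦ H.inner_eq F hF hne a a.2 b b.2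
  exact ⟨L, fun a ha ↦ hL ⟨a, ha⟩⟩

theorem vertexFigure [Finite ι] (H : FaceIsometric g g') (hb : IsExtremeRay g b)
    {h h' : Module.Dual ℝ E} (hh : ∀ a, g a ≠ 0 → h (g a) = 1)
    (hh' : ∀ a, g' a ≠ 0 → h' (g' a) = 1) :
    FaceIsometric (projAlong h (g b) ∘ g) (projAlong h' (g' b) ∘ g') := by
  have hb' := H.isExtremeRay hb
  refine H.comp hb (ker_projAlong (hh b hb.1)) (ker_projAlong (hh' b hb'.1)) ?_
  intro F hF hne hbF a ha c hc
  obtain ⟨L, hL⟩ := H.exists_linearIsometry hF hne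
  have hproj : ∀ a ∈ F, projAlong h' (g' b) (g' a) = L (projAlong h (g b) (g a)) := by
    intro a ha
    rw [projAlong_apply, projAlong_apply, map_sub, map_smul, hL a ha, hL b hbF]
    by_cases h0 : g a = 0
    · simp [h0, H.eq_zero_iff.1 h0]
    · rw [hh a h0, hh' a fun h ↦ h0 (H.eq_zero_iff.2 h)]
  rw [hproj a ha, hproj c hc, LinearIsometry.inner_map_map]

end FaceIsometric

end FaceIsometric

section Contact

/-- The boundary of a cone of rank at least three is connected through its faces. Otherwise, tilt
the supporting hyperplane of a face outside `C` until it touches `C`; by local convexity at the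
contact ray it would support the whole cone from the wrong side. -/
theorem IsPointed.mem_of_isBoundary_of_propagates {ι V : Type*} [Finite ι] [AddCommGroup V]
    [Module ℝ V] {g : ι → V} (hg : IsPointed g) (hr : 3 ≤ (range g).finrank ℝ) {C : Set ι}
    (hC : ∃ b ∈ C, IsBoundary g b ∧ g b ≠ 0)
    (hprop : ∀ F, IsConeFace g F → F ≠ univ → (∃ b ∈ F, b ∈ C ∧ g b ≠ 0) → F ⊆ C)
    {a : ι} (ha : IsBoundary g a) : a ∈ C := by
  obtain ⟨F, ⟨f, hf0, hf1⟩, hFne, haF⟩ := ha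
  by_contra haC
  have hfC : ∀ c ∈ C, g c ≠ 0 → 0 < f (g c) := fun c hcC hc ↦ hf1 c fun hcF ↦
    haC (hprop F ⟨f, hf0, hf1⟩ hFne ⟨c, hcF, hcC, hc⟩ haF)
  obtain ⟨n₀, hn₀⟩ := hg.exists_pos
  obtain ⟨b, ⟨hbC, ⟨G, hG, hGne, hbG⟩, hb⟩, hmin⟩ := exists_min_image
    {b | b ∈ C ∧ IsBoundary g b ∧ g b ≠ 0} (fun b ↦ f (g b) / n₀ (g b)) (toFinite _) hC
  set ρ := f (g b) / n₀ (g b) with hρ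
  have hρpos : 0 < ρ := div_pos (hfC b hbC hb) (hn₀ b hb)
  have hnonneg : ∀ c ∈ C, IsBoundary g c → 0 ≤ (f - ρ • n₀) (g c) := by
    intro c hcC hcB
    by_cases hc : g c = 0
    · simp [hc]
    · simpa using (le_div_iff₀ (hn₀ c hc)).1 (hmin c ⟨hcC, hcB, hc⟩)
  have hGC : G ⊆ C := hprop G hG hGne ⟨b, hbG, hbC, hb⟩
  obtain ⟨e, ⟨heG, he0⟩, he⟩ := (hG.isConeFace_inter_zeros (m := f - ρ • n₀) fun c hc ↦
    hnonneg c (hGC hc) ⟨G, hG, hGne, hc⟩).exists_isExtremeRay hg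
      ⟨b, ⟨hbG, by simp [hρ, div_mul_cancel₀ _ (hn₀ b hb).ne']⟩, hb⟩
  have hall : ∀ c, 0 ≤ (f - ρ • n₀) (g c) := by
    refine he.nonneg_of_nonneg_on_faces hr he0 fun K hK hKne heK c hcK ↦ ?_
    exact hnonneg c (hprop K hK hKne ⟨e, heK, hGC heG, he.1⟩ hcK) ⟨K, hK, hKne, hcK⟩
  have hga : g a ≠ 0 := fun h ↦ haC <| hGC (hG.mem_of_eq_zero h)
  have := hall a
  simp only [LinearMap.sub_apply, LinearMap.smul_apply, smul_eq_mul, hf0 a haF] at this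
  linarith [mul_pos hρpos (hn₀ a hga)]

theorem FaceIsometric.isConeFace_contact {ι E : Type*} [Finite ι] [NormedAddCommGroup E]
    [InnerProductSpace ℝ E] [FiniteDimensional ℝ E] {g g' : ι → E} (H : FaceIsometric g g')
    {Λ Λ' : Module.Dual ℝ E} (hle : ∀ a, IsBoundary g a → Λ (g a) ≤ Λ' (g' a))
    {F : Set ι} (hF : IsConeFace g F) (hne : F ≠ univ) :
    IsConeFace g {a ∈ F | Λ (g a) = Λ' (g' a)} := by
  obtain ⟨L, hL⟩ := H.exists_linearIsometry hF hne
  have happly : ∀ a ∈ F, (Λ' ∘ₗ L.toLinearMap - Λ) (g a) = Λ' (g' a) - Λ (g a) :=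
    fun a ha ↦ by simp [hL a ha]
  convert hF.isConeFace_inter_zeros (m := Λ' ∘ₗ L.toLinearMap - Λ) fun a ha ↦ by
    rw [happly a ha]; exact sub_nonneg.2 (hle a ⟨F, hF, hne, ha⟩) using 1
  ext a
  refine and_congr_right fun ha ↦ ?_
  rw [happly a ha, sub_eq_zero, eq_comm]

theorem FaceIsometric.eq_of_contact {ι E : Type*} [Finite ι] [NormedAddCommGroup E]
    [InnerProductSpace ℝ E] [FiniteDimensional ℝ E] {g g' : ι → E} (H : FaceIsometric g g')
    (hr : 3 ≤ (range g).finrank ℝ) {Λ Λ' : Module.Dual ℝ E}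
    (hle : ∀ a, IsBoundary g a → Λ (g a) ≤ Λ' (g' a))
    (hcontact : ∃ b, IsBoundary g b ∧ g b ≠ 0 ∧ Λ (g b) = Λ' (g' b))
    (hray : ∀ b, IsExtremeRay g b → Λ (g b) = Λ' (g' b) → ∀ F, IsConeFace g F → F ≠ univ →
      b ∈ F → ∀ a ∈ F, Λ (g a) = Λ' (g' a)) {a : ι} (ha : IsBoundary g a) :
    Λ (g a) = Λ' (g' a) := by
  obtain ⟨b, hbB, hb, hbc⟩ := hcontact
  refine H.pointed_left.mem_of_isBoundary_of_propagates (C := {a | Λ (g a) = Λ' (g' a)}) hr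
    ⟨b, hbc, hbB, hb⟩ (fun F hF hne ⟨c, hcF, hcC, hc⟩ ↦ ?_) ha
  obtain ⟨e, ⟨heF, heC⟩, he⟩ :=
    (H.isConeFace_contact hle hF hne).exists_isExtremeRay H.pointed_left ⟨c, ⟨hcF, hcC⟩, hc⟩
  exact hray e he heC F hF hne heF

end Contact

/-! ### Sectors in the plane -/

section Sectors

open MeasureTheory InnerProductGeometry

/-- The open convex cone spanned by `u` and `v`. -/
def openSector {V : Type*} [AddCommGroup V] [Module ℝ V] (u v : V) : Set V :=
  {w | ∃ x y : ℝ, 0 < x ∧ 0 < y ∧ x • u + y • v = w}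

/-- The closed sectors spanned by the pairs `u i, v i` cover the space and their interiors are
disjoint. -/
structure IsSectorTiling {κ V : Type*} [AddCommGroup V] [Module ℝ V] (u v : κ → V) : Prop where
  linearIndependent : ∀ i, LinearIndependent ℝ ![u i, v i]
  cover : ∀ w, ∃ i, ∃ x y : ℝ, 0 ≤ x ∧ 0 ≤ y ∧ x • u i + y • v i = w
  disjoint : Pairwise fun i j ↦ Disjoint (openSector (u i) (v i)) (openSector (u j) (v j))

section

variable {κ V W : Type*} [AddCommGroup V] [Module ℝ V] [AddCommGroup W] [Module ℝ W] {u v : V}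

theorem openSector_smul_smul {a b : ℝ} (ha : 0 < a) (hb : 0 < b) :
    openSector (a • u) (b • v) = openSector u v := by
  ext w
  constructor
  · rintro ⟨x, y, hx, hy, rfl⟩
    exact ⟨x * a, y * b, by positivity, by positivity, by simp only [mul_smul]⟩
  · rintro ⟨x, y, hx, hy, rfl⟩
    refine ⟨x / a, y / b, by positivity, by positivity, ?_⟩
    rw [smul_smul, smul_smul, div_mul_cancel₀ _ ha.ne', div_mul_cancel₀ _ hb.ne']

theorem preimage_openSector {L : V →ₗ[ℝ] W} (hL : Function.Injective L) :
    L ⁻¹' openSector (L u) (L v) = openSector u v := by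
  ext w
  simp only [openSector, mem_preimage, mem_ofPred_eq, ← map_smul, ← map_add, hL.eq_iff]

theorem IsSectorTiling.map {u v : κ → V} (h : IsSectorTiling u v) (L : V ≃ₗ[ℝ] W) :
    IsSectorTiling (fun i ↦ L (u i)) (fun i ↦ L (v i)) where
  linearIndependent i := by
    have hi := h.linearIndependent i
    rw [LinearIndependent.pair_iff] at hi ⊢
    intro x y hxy
    exact hi x y (L.injective (by simpa using hxy))
  cover w := by
    obtain ⟨i, x, y, hx, hy, hw⟩ := h.cover (L.symm w)
    exact ⟨i, x, y, hx, hy, by simp only [← map_smul, ← map_add, hw, L.apply_symm_apply]⟩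
  disjoint i j hij := by
    have hL : Function.Injective L.toLinearMap := L.injective
    refine Disjoint.of_preimage L.surjective ?_
    have hdis : Disjoint (openSector (u i) (v i)) (openSector (u j) (v j)) := h.disjoint hij
    rwa [← preimage_openSector hL, ← preimage_openSector hL] at hdis

end

theorem mem_openSector_one_exp_iff {θ : ℝ} (hθ0 : 0 < θ) (hθπ : θ < Real.pi) (w : ℂ) :
    w ∈ openSector 1 (Complex.exp (θ * Complex.I)) ↔ w.arg ∈ Ioo 0 θ := by
  have hsinθ := Real.sin_pos_of_pos_of_lt_pi hθ0 hθπ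
  constructor
  · rintro ⟨x, y, hx, hy, rfl⟩
    set w := x • (1 : ℂ) + y • Complex.exp (θ * Complex.I)
    have hre : ‖w‖ * Real.cos w.arg = x + y * Real.cos θ := by
      simp [w, Complex.norm_mul_cos_arg, Complex.exp_ofReal_mul_I_re]
    have him : ‖w‖ * Real.sin w.arg = y * Real.sin θ := by
      simp [w, Complex.norm_mul_sin_arg, Complex.exp_ofReal_mul_I_im]
    have hsin : 0 < ‖w‖ * Real.sin w.arg := him ▸ mul_pos hy hsinθ
    have hsin' : 0 < ‖w‖ * Real.sin (θ - w.arg) := by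
      rw [Real.sin_sub, show ‖w‖ * (Real.sin θ * Real.cos w.arg - Real.cos θ * Real.sin w.arg) =
        x * Real.sin θ by linear_combination Real.sin θ * hre - Real.cos θ * him]
      exact mul_pos hx hsinθ
    have hlo := Complex.neg_pi_lt_arg w
    have harg : 0 < w.arg := by
      by_contra! hle
      exact (pos_of_mul_pos_right hsin (norm_nonneg w)).not_ge
        (Real.sin_nonpos_of_nonpos_of_neg_pi_le hle hlo.le)
    refine ⟨harg, ?_⟩
    by_contra! hle
    exact (pos_of_mul_pos_right hsin' (norm_nonneg w)).not_ge
      (Real.sin_nonpos_of_nonpos_of_neg_pi_le (by linarith)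
        (by linarith [Complex.arg_le_pi w]))
  · rintro ⟨h0, hθ⟩
    have hw : 0 < ‖w‖ := norm_pos_iff.2 fun h ↦ by simp [h] at h0
    have hsin := Real.sin_pos_of_pos_of_lt_pi h0 (hθ.trans hθπ)
    have hsin' := Real.sin_pos_of_pos_of_lt_pi (sub_pos.2 hθ) (by linarith)
    refine ⟨‖w‖ * Real.sin (θ - w.arg) / Real.sin θ, ‖w‖ * Real.sin w.arg / Real.sin θ,
      by positivity, by positivity, Complex.ext ?_ ?_⟩
    · simp only [Complex.add_re, Complex.real_smul, Complex.re_ofReal_mul, Complex.one_re,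
        Complex.exp_ofReal_mul_I_re, Real.sin_sub]
      rw [← Complex.norm_mul_cos_arg w]
      field_simp
      ring
    · simp only [Complex.add_im, Complex.real_smul, Complex.im_ofReal_mul, Complex.one_im,
        Complex.exp_ofReal_mul_I_im]
      rw [← Complex.norm_mul_sin_arg w]
      field_simp
      ring

theorem measurableSet_arg_mem_Ioo (a b : ℝ) : MeasurableSet {w : ℂ | w.arg ∈ Ioo a b} :=
  Complex.measurable_arg measurableSet_Ioo

theorem polarCoord_symm_mem_iff {p : ℝ × ℝ} (hp : p ∈ Complex.polarCoord.target) (θ : ℝ) :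
    Complex.polarCoord.symm p ∈ Metric.ball 0 1 ∩ {w : ℂ | w.arg ∈ Ioo 0 θ} ↔
      p ∈ Ioo (0 : ℝ) 1 ×ˢ Ioo (0 : ℝ) θ := by
  have hinv := Complex.polarCoord.right_inv hp
  rw [Complex.polarCoord_apply] at hinv
  have hr : ‖Complex.polarCoord.symm p‖ = p.1 := congrArg Prod.fst hinv
  have harg : (Complex.polarCoord.symm p).arg = p.2 := congrArg Prod.snd hinv
  rw [Complex.polarCoord_target] at hp
  have hp1 : 0 < p.1 := hp.1
  simp only [mem_inter_iff, mem_ball_zero_iff, mem_ofPred_eq, hr, harg, mem_prod, mem_Ioo, hp1,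
    true_and]

theorem volume_ball_inter_arg {θ : ℝ} (hθπ : θ < Real.pi) :
    volume (Metric.ball 0 1 ∩ {w : ℂ | w.arg ∈ Ioo 0 θ}) = ENNReal.ofReal (θ / 2) := by
  set S := Metric.ball 0 1 ∩ {w : ℂ | w.arg ∈ Ioo 0 θ}
  set T := Ioo (0 : ℝ) 1 ×ˢ Ioo (0 : ℝ) θ
  have hT : T ⊆ Complex.polarCoord.target := by
    rw [Complex.polarCoord_target]
    exact prod_mono Ioo_subset_Ioi_self (Ioo_subset_Ioo (by linarith [Real.pi_pos]) hθπ.le)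
  have hradial : ∫⁻ r in Ioo (0 : ℝ) 1, ENNReal.ofReal r = ENNReal.ofReal (1 / 2) := by
    rw [← ofReal_integral_eq_lintegral_ofReal, ← integral_Ioc_eq_integral_Ioo,
      ← intervalIntegral.integral_of_le zero_le_one, integral_id]
    · norm_num
    · exact (continuous_id.integrableOn_Icc (a := 0) (b := 1)).mono_set Ioo_subset_Icc_self
    · exact (ae_restrict_mem measurableSet_Ioo).mono fun r hr ↦ hr.1.le
  calc volume S
      = ∫⁻ p in Complex.polarCoord.target,
          ENNReal.ofReal p.1 • S.indicator 1 (Complex.polarCoord.symm p) := by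
        rw [← lintegral_indicator_one
          (measurableSet_ball.inter (measurableSet_arg_mem_Ioo 0 θ))]
        exact (Complex.lintegral_comp_polarCoord_symm _).symm
    _ = ∫⁻ p in Complex.polarCoord.target, T.indicator (fun p ↦ ENNReal.ofReal p.1) p := by
        refine setLIntegral_congr_fun Complex.polarCoord.open_target.measurableSet fun p hp ↦ ?_
        by_cases h : p ∈ T
        · have hS : Complex.polarCoord.symm p ∈ S := (polarCoord_symm_mem_iff hp θ).2 h
          simp only [indicator_of_mem h, indicator_of_mem hS, Pi.one_apply, smul_eq_mul, mul_one]
        · have hS : Complex.polarCoord.symm p ∉ S := fun h' ↦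
            h ((polarCoord_symm_mem_iff hp θ).1 h')
          rw [indicator_of_notMem h, indicator_of_notMem hS, smul_zero]
    _ = ∫⁻ p in T, ENNReal.ofReal p.1 := by
        rw [setLIntegral_indicator (measurableSet_Ioo.prod measurableSet_Ioo),
          inter_eq_left.2 hT]
    _ = ENNReal.ofReal (θ / 2) := by
        rw [Measure.volume_eq_prod, ← Measure.prod_restrict, lintegral_prod _ (by fun_prop)]
        simp only [lintegral_const, Measure.restrict_apply_univ, Real.volume_Ioo, sub_zero]
        rw [lintegral_mul_const _ (by fun_prop), hradial, ← ENNReal.ofReal_mul (by norm_num)]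
        congr 1
        ring

theorem angle_mem_Ioo_of_linearIndependent {E : Type*} [NormedAddCommGroup E]
    [InnerProductSpace ℝ E] {u v : E} (h : LinearIndependent ℝ ![u, v]) :
    angle u v ∈ Ioo 0 Real.pi := by
  rw [LinearIndependent.pair_iff] at h
  refine ⟨(angle_nonneg u v).lt_of_ne' fun h0 ↦ ?_, (angle_le_pi u v).lt_of_ne fun hπ ↦ ?_⟩
  · obtain ⟨_, r, _, hr⟩ := angle_eq_zero_iff.1 h0
    simpa using (h r (-1) (by simp [hr])).2
  · obtain ⟨_, r, _, hr⟩ := angle_eq_pi_iff.1 hπ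
    simpa using (h r (-1) (by simp [hr])).2

theorem exists_linearIsometryEquiv_openSector {u v : ℂ} (h : LinearIndependent ℝ ![u, v]) :
    ∃ L : ℂ ≃ₗᵢ[ℝ] ℂ, openSector u v = L ⁻¹' {w | w.arg ∈ Ioo 0 (angle u v)} := by
  have hu : 0 < ‖u‖ := norm_pos_iff.2 (h.ne_zero 0)
  have hv : 0 < ‖v‖ := norm_pos_iff.2 (h.ne_zero 1)
  set θ := angle u v with hθ
  obtain ⟨hθ0, hθπ⟩ := angle_mem_Ioo_of_linearIndependent h
  have hcos : inner ℝ (1 : ℂ) (Complex.exp (θ * Complex.I)) = Real.cos θ := by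
    simp [Complex.inner, Complex.exp_ofReal_mul_I_re]
  have huv : inner ℝ u v = ‖u‖ * ‖v‖ * Real.cos θ := by
    rw [hθ, cos_angle]
    field_simp
  obtain ⟨L, hL⟩ := exists_linearIsometry_of_inner_eq
    (g := ![u, v]) (g' := ![‖u‖ • (1 : ℂ), ‖v‖ • Complex.exp (θ * Complex.I)]) (by
      have hexp : ‖Complex.exp (θ * Complex.I)‖ = 1 := Complex.norm_exp_ofReal_mul_I θ
      intro i j
      fin_cases i <;> fin_cases j <;>
        simp only [Fin.zero_eta, Fin.mk_one, Matrix.cons_val_zero, Matrix.cons_val_one,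
          inner_smul_left, inner_smul_right, real_inner_self_eq_norm_sq, RCLike.conj_to_real,
          hexp, hcos, huv, real_inner_comm u v, norm_one,
          real_inner_comm (1 : ℂ) (Complex.exp (θ * Complex.I))] <;> ring)
  refine ⟨L.toLinearIsometryEquiv rfl, ?_⟩
  rw [← preimage_openSector (L := L.toLinearMap) L.injective]
  ext w
  change L w ∈ openSector (L u) (L v) ↔ (L w).arg ∈ Ioo 0 θ
  rw [show L u = _ from hL 0, show L v = _ from hL 1]
  simp only [Matrix.cons_val_zero, Matrix.cons_val_one]
  rw [openSector_smul_smul hu hv, mem_openSector_one_exp_iff hθ0 hθπ]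

theorem measurableSet_openSector {u v : ℂ} (h : LinearIndependent ℝ ![u, v]) :
    MeasurableSet (openSector u v) := by
  obtain ⟨L, hL⟩ := exists_linearIsometryEquiv_openSector h
  exact hL ▸ L.continuous.measurable (measurableSet_arg_mem_Ioo _ _)

theorem volume_ball_inter_openSector {u v : ℂ} (h : LinearIndependent ℝ ![u, v]) :
    volume (Metric.ball 0 1 ∩ openSector u v) = ENNReal.ofReal (angle u v / 2) := by
  obtain ⟨L, hL⟩ := exists_linearIsometryEquiv_openSector h
  have hball : Metric.ball (0 : ℂ) 1 = L ⁻¹' Metric.ball 0 1 := by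
    ext w
    simp
  rw [hL, hball, ← preimage_inter, L.measurePreserving.measure_preimage
    (measurableSet_ball.inter (measurableSet_arg_mem_Ioo _ _)).nullMeasurableSet]
  exact volume_ball_inter_arg (angle_mem_Ioo_of_linearIndependent h).2

theorem volume_span_singleton_eq_zero (v : ℂ) : volume (ℝ ∙ v : Set ℂ) = 0 := by
  refine Measure.addHaar_submodule _ _ fun h ↦ ?_
  have hle := finrank_span_le_card (R := ℝ) ({v} : Set ℂ)
  rw [h, finrank_top, Complex.finrank_real_complex, toFinset_singleton,
    Finset.card_singleton] at hle
  lia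

section

variable {κ : Type*}

theorem IsSectorTiling.ae_mem_iUnion_openSector [Finite κ] {u v : κ → ℂ} (h : IsSectorTiling u v) :
    ∀ᵐ w : ℂ, w ∈ ⋃ i, openSector (u i) (v i) := by
  have hnull : volume (⋃ i, (ℝ ∙ u i : Set ℂ) ∪ (ℝ ∙ v i : Set ℂ)) = 0 := by
    simp only [measure_iUnion_null_iff, measure_union_null_iff, volume_span_singleton_eq_zero,
      and_self, implies_true]
  filter_upwards [measure_eq_zero_iff_ae_notMem.1 hnull] with w hw
  obtain ⟨i, x, y, hx, hy, rfl⟩ := h.cover w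
  simp only [mem_iUnion, mem_union, SetLike.mem_coe, Submodule.mem_span_singleton, not_exists,
    not_or] at hw
  have hx0 : x ≠ 0 := fun h0 ↦ (hw i).2 y (by simp [h0])
  have hy0 : y ≠ 0 := fun h0 ↦ (hw i).1 x (by simp [h0])
  exact mem_iUnion.2 ⟨i, x, y, hx.lt_of_ne' hx0, hy.lt_of_ne' hy0, rfl⟩

variable [Fintype κ]

theorem IsSectorTiling.sum_angle_eq_two_pi_complex {u v : κ → ℂ} (h : IsSectorTiling u v) :
    ∑ i, angle (u i) (v i) = 2 * Real.pi := by
  have harea : volume (Metric.ball (0 : ℂ) 1) =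
      ENNReal.ofReal (∑ i, angle (u i) (v i) / 2) := by
    calc volume (Metric.ball (0 : ℂ) 1)
        = volume (Metric.ball (0 : ℂ) 1 ∩ ⋃ i, openSector (u i) (v i)) :=
          (by rw [inter_comm, Measure.measure_inter_eq_of_ae h.ae_mem_iUnion_openSector])
      _ = ∑ i, volume (Metric.ball (0 : ℂ) 1 ∩ openSector (u i) (v i)) := by
          rw [inter_iUnion, measure_iUnion
            (fun i j hij ↦ (h.disjoint hij).mono inter_subset_right inter_subset_right)
            (fun i ↦ measurableSet_ball.inter (measurableSet_openSector (h.linearIndependent i))),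
            tsum_fintype]
      _ = ENNReal.ofReal (∑ i, angle (u i) (v i) / 2) := by
          rw [ENNReal.ofReal_sum_of_nonneg fun i _ ↦ by linarith [angle_nonneg (u i) (v i)]]
          exact Finset.sum_congr rfl fun i _ ↦
            volume_ball_inter_openSector (h.linearIndependent i)
  have hnonneg : 0 ≤ ∑ i, angle (u i) (v i) / 2 :=
    Finset.sum_nonneg fun i _ ↦ by linarith [angle_nonneg (u i) (v i)]
  have hsum := congrArg ENNReal.toReal harea
  rw [ENNReal.toReal_ofReal hnonneg, Complex.volume_ball, ← Finset.sum_div] at hsum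
  simp only [ENNReal.ofReal_one, one_pow, one_mul, ENNReal.coe_toReal, NNReal.coe_real_pi] at hsum
  linarith

theorem IsSectorTiling.sum_angle_eq_two_pi {W : Type*} [NormedAddCommGroup W]
    [InnerProductSpace ℝ W] (hW : Module.finrank ℝ W = 2) {u v : κ → W}
    (h : IsSectorTiling u v) : ∑ i, angle (u i) (v i) = 2 * Real.pi := by
  have : FiniteDimensional ℝ W := Module.finite_of_finrank_pos (by lia)
  let L : W ≃ₗᵢ[ℝ] ℂ := ((stdOrthonormalBasis ℝ W).reindex (finCongr hW)).equiv
    Complex.orthonormalBasisOneI (Equiv.refl _)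
  rw [← (h.map L.toLinearEquiv).sum_angle_eq_two_pi_complex]
  exact Finset.sum_congr rfl fun i _ ↦ (L.toLinearIsometry.angle_map _ _).symm

end

end Sectors

/-! ### Angles of polygons seen from an interior point -/

section AngleVariation

theorem hasDerivAt_arccos_div_sqrt {N P Q : ℝ → ℝ} {N' P' Q' t : ℝ} (hN : HasDerivAt N N' t)
    (hP : HasDerivAt P P' t) (hQ : HasDerivAt Q Q' t) (hP0 : 0 < P t)
    (h : 0 < P t * Q t - N t ^ 2) :
    HasDerivAt (fun t ↦ Real.arccos (N t / √(P t * Q t)))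
      (-(N' - N t * (P' / (2 * P t) + Q' / (2 * Q t))) / √(P t * Q t - N t ^ 2)) t := by
  have hPQ : 0 < P t * Q t := by nlinarith [sq_nonneg (N t)]
  have hQ0 : 0 < Q t := (mul_pos_iff_of_pos_left hP0).1 hPQ
  have hq := Real.sqrt_pos.2 hPQ
  have hq2 := Real.sq_sqrt hPQ.le
  have hcos : 1 - (N t / √(P t * Q t)) ^ 2 = (P t * Q t - N t ^ 2) / √(P t * Q t) ^ 2 := by
    rw [div_pow, eq_div_iff (by positivity), sub_mul, div_mul_cancel₀ _ (by positivity), hq2,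
      one_mul]
  have hlt : (N t / √(P t * Q t)) ^ 2 < 1 := by
    rw [← sub_pos, hcos]
    positivity
  have harccos := Real.hasDerivAt_arccos (x := N t / √(P t * Q t))
    (by rintro h; norm_num [h] at hlt) (by rintro h; norm_num [h] at hlt)
  refine (harccos.comp t (hN.div ((hP.mul hQ).sqrt hPQ.ne') hq.ne')).congr_deriv ?_
  rw [hcos, Real.sqrt_div h.le, Real.sqrt_sq hq.le]
  simp only [Pi.mul_apply]
  field_simp
  rw [hq2]

theorem div_sqrt_sub_sq_add_pos {D x y : ℝ} (hx : x ^ 2 < D) (hy : y ^ 2 < D) (h : 0 < x + y) :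
    0 < x / √(D - x ^ 2) + y / √(D - y ^ 2) := by
  wlog hxy : y ≤ x generalizing x y
  · rw [add_comm]
    exact this hy hx (by linarith) (by linarith)
  have h1 : 0 < √(D - x ^ 2) := Real.sqrt_pos.2 (by linarith)
  have h2 : 0 < √(D - y ^ 2) := Real.sqrt_pos.2 (by linarith)
  have hx0 : 0 < x := by linarith
  by_cases hy0 : 0 ≤ y
  · positivity
  · have : √(D - x ^ 2) ≤ √(D - y ^ 2) := Real.sqrt_le_sqrt (by nlinarith)
    rw [div_add_div _ _ h1.ne' h2.ne']
    exact div_pos (by nlinarith) (by positivity)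

/-- The inner product of two vectors seen from an interior point, as a function of one real
parameter `s`, `t` attached to each of them. With `a = 1 / 2`, `b = 0`, `y = -‖u - v‖ ^ 2 / 2` it is
the law of cosines in terms of the squared lengths `s`, `t`; with `a = 0`, `b = -(‖Z‖ ^ 2)⁻¹`,
`y = ⟪u, v⟫` it is the inner product of the projections of `u`, `v` orthogonal to `Z`, in terms of
`s = ±⟪Z, u⟫`, `t = ±⟪Z, v⟫`. -/
def viewInner (a b y s t : ℝ) : ℝ := y + a * (s + t) + b * s * t

/-- The numerator of the derivative in `s` of the angle whose cosine is
`viewInner a b y s t / √(viewInner a b x s s * viewInner a b z t t)`; it is affine in `(s, t)`. -/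
def viewSlope (a b x y s t : ℝ) : ℝ := a * (x - y) + b * (x * t - y * s) + a ^ 2 * (s - t)

variable {a b x y z s t : ℝ}

theorem viewInner_comm (a b y s t : ℝ) : viewInner a b y s t = viewInner a b y t s := by
  simp only [viewInner]
  ring

theorem viewSlope_sq_add (a b x y z s t : ℝ) :
    viewSlope a b x y s t ^ 2 + (a ^ 2 - b * x) *
        (viewInner a b x s s * viewInner a b z t t - viewInner a b y s t ^ 2) =
      viewInner a b x s s * (-b * (x * z - y ^ 2) + a ^ 2 * (x + z - 2 * y)) := by
  simp only [viewSlope, viewInner]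
  ring

theorem hasDerivAt_arccos_viewInner {f g : ℝ → ℝ} {f' g' t : ℝ} (hf : HasDerivAt f f' t)
    (hg : HasDerivAt g g' t) (hD : 0 < viewInner a b x (f t) (f t))
    (hL : 0 < viewInner a b x (f t) (f t) * viewInner a b z (g t) (g t) -
      viewInner a b y (f t) (g t) ^ 2) :
    HasDerivAt (fun t ↦ Real.arccos (viewInner a b y (f t) (g t) /
        √(viewInner a b x (f t) (f t) * viewInner a b z (g t) (g t))))
      (-(viewSlope a b x y (f t) (g t) * (f' / viewInner a b x (f t) (f t)) +
          viewSlope a b z y (g t) (f t) * (g' / viewInner a b z (g t) (g t))) /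
        √(viewInner a b x (f t) (f t) * viewInner a b z (g t) (g t) -
          viewInner a b y (f t) (g t) ^ 2)) t := by
  have hInner {y : ℝ} {f g : ℝ → ℝ} {f' g' : ℝ} (hf : HasDerivAt f f' t) (hg : HasDerivAt g g' t) :
      HasDerivAt (fun t ↦ viewInner a b y (f t) (g t))
        ((a + b * g t) * f' + (a + b * f t) * g') t :=
    ((((hf.add hg).const_mul a).const_add y).add ((hf.const_mul b).mul hg)).congr_deriv (by ring)
  have hD' : 0 < viewInner a b z (g t) (g t) :=
    (mul_pos_iff_of_pos_left hD).1 (by nlinarith [sq_nonneg (viewInner a b y (f t) (g t))])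
  refine (hasDerivAt_arccos_div_sqrt (hInner hf hg) (hInner hf hf) (hInner hg hg) hD
    hL).congr_deriv ?_
  have e₁ : viewSlope a b x y (f t) (g t) = viewInner a b x (f t) (f t) * (a + b * g t) -
      viewInner a b y (f t) (g t) * (a + b * f t) := by
    simp only [viewSlope, viewInner]
    ring
  have e₂ : viewSlope a b z y (g t) (f t) = viewInner a b z (g t) (g t) * (a + b * f t) -
      viewInner a b y (f t) (g t) * (a + b * g t) := by
    simp only [viewSlope, viewInner]
    ring
  rw [e₁, e₂]
  field_simp
  ring

end AngleVariation

section FlagSystem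

/-- Constants describing a closed polygon seen from an interior point, indexed by its flags
(pairs of an edge and one of its ends): `opp` exchanges the two ends of an edge, `mate` the two
edges at a vertex, and `x`, `y` are the diagonal and off-diagonal constants of `viewInner`. -/
structure FlagSystem (Φ : Type*) where
  opp : Equiv.Perm Φ
  mate : Equiv.Perm Φ
  a : ℝ
  b : ℝ
  x : Φ → ℝ
  y : Φ → ℝ
  opp_opp : ∀ φ, opp (opp φ) = φ
  x_mate : ∀ φ, x (mate φ) = x φ
  y_opp : ∀ φ, y (opp φ) = y φ
  edge_pos : ∀ φ, 0 < -b * (x φ * x (opp φ) - y φ ^ 2) + a ^ 2 * (x φ + x (opp φ) - 2 * y φ)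
  sub_pos : ∀ φ, 0 < a ^ 2 - b * x φ
  b_nonpos : b ≤ 0

namespace FlagSystem

variable {Φ : Type*} (S : FlagSystem Φ) (s : Φ → ℝ) (φ : Φ)

/-- The squared distance to the vertex of a flag as seen from the interior point. -/
def normSq : ℝ := viewInner S.a S.b (S.x φ) (s φ) (s φ)

/-- The inner product of the two ends of the edge of a flag as seen from the interior point. -/
def edgeInner : ℝ := viewInner S.a S.b (S.y φ) (s φ) (s (S.opp φ))

/-- The normalization of `viewSlope` along the edge of a flag, in the Euclidean case `a = 1 / 2`,
`b = 0` half the length of the edge. -/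
noncomputable def κ : ℝ :=
  √(-S.b * (S.x φ * S.x (S.opp φ) - S.y φ ^ 2) + S.a ^ 2 * (S.x φ + S.x (S.opp φ) - 2 * S.y φ))

/-- The normalized `viewSlope` of a flag. In the Euclidean case `a = 1 / 2`, `b = 0` it is the
signed distance from the vertex of the flag to the foot of the perpendicular dropped from the
interior point on its edge. -/
noncomputable def slope : ℝ :=
  viewSlope S.a S.b (S.x φ) (S.y φ) (s φ) (s (S.opp φ)) / S.κ φ

/-- The angle under which the edge of a flag is seen from the interior point. -/
noncomputable def viewAngle : ℝ :=
  Real.arccos (S.edgeInner s φ / √(S.normSq s φ * S.normSq s (S.opp φ)))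

/-- The conditions on the parameters which hold when they come from an interior point of a convex
polygon. -/
structure IsAdmissible : Prop where
  mate_eq : ∀ φ, s (S.mate φ) = s φ
  slope_sq_lt : ∀ φ, S.slope s φ ^ 2 < S.normSq s φ
  slope_add_pos : ∀ φ, 0 < S.slope s φ + S.slope s (S.mate φ)

variable {S s φ}

theorem κ_pos (S : FlagSystem Φ) (φ : Φ) : 0 < S.κ φ := Real.sqrt_pos.2 (S.edge_pos φ)

theorem gram_eq (S : FlagSystem Φ) (s : Φ → ℝ) (φ : Φ) :
    S.normSq s φ * S.normSq s (S.opp φ) - S.edgeInner s φ ^ 2 =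
      S.κ φ ^ 2 * (S.normSq s φ - S.slope s φ ^ 2) / (S.a ^ 2 - S.b * S.x φ) := by
  have hκ := S.κ_pos φ
  rw [eq_div_iff (S.sub_pos φ).ne', slope, div_pow, mul_sub (S.κ φ ^ 2),
    mul_div_cancel₀ _ (by positivity), κ, Real.sq_sqrt (S.edge_pos φ).le, normSq, normSq, edgeInner]
  linear_combination viewSlope_sq_add S.a S.b (S.x φ) (S.y φ) (S.x (S.opp φ)) (s φ) (s (S.opp φ))

theorem slope_sq_lt_iff :
    S.slope s φ ^ 2 < S.normSq s φ ↔
      0 < S.normSq s φ * S.normSq s (S.opp φ) - S.edgeInner s φ ^ 2 := by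
  rw [gram_eq, div_pos_iff_of_pos_right (S.sub_pos φ),
    mul_pos_iff_of_pos_left (pow_pos (S.κ_pos φ) 2), _root_.sub_pos]

theorem normSq_opp_mul_sub (S : FlagSystem Φ) (s : Φ → ℝ) (φ : Φ) :
    S.normSq s (S.opp φ) * S.normSq s (S.opp (S.opp φ)) - S.edgeInner s (S.opp φ) ^ 2 =
      S.normSq s φ * S.normSq s (S.opp φ) - S.edgeInner s φ ^ 2 := by
  rw [edgeInner, edgeInner, S.opp_opp, S.y_opp, viewInner_comm, mul_comm]

theorem slope_add {u v : ℝ} (huv : u + v = 1) (s s' : Φ → ℝ) (φ : Φ) :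
    S.slope (u • s + v • s') φ = u * S.slope s φ + v * S.slope s' φ := by
  obtain rfl : u = 1 - v := by linarith
  simp only [slope, viewSlope, Pi.add_apply, Pi.smul_apply, smul_eq_mul]
  ring

theorem convex_isAdmissible (S : FlagSystem Φ) : Convex ℝ {s | S.IsAdmissible s} := by
  intro s hs s' hs' u v hu hv huv
  refine ⟨fun φ ↦ ?_, fun φ ↦ ?_, fun φ ↦ ?_⟩
  · simp [hs.mate_eq, hs'.mate_eq]
  · have hpos : 0 < u * (S.normSq s φ - S.slope s φ ^ 2) +
        v * (S.normSq s' φ - S.slope s' φ ^ 2) :=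
      convex_Ioi (0 : ℝ) (_root_.sub_pos.2 (hs.slope_sq_lt φ))
        (_root_.sub_pos.2 (hs'.slope_sq_lt φ)) hu hv huv
    have hconcave : S.normSq (u • s + v • s') φ - S.slope (u • s + v • s') φ ^ 2 =
        u * (S.normSq s φ - S.slope s φ ^ 2) + v * (S.normSq s' φ - S.slope s' φ ^ 2) +
          u * v * (-S.b * (s φ - s' φ) ^ 2 + (S.slope s φ - S.slope s' φ) ^ 2) := by
      obtain rfl : u = 1 - v := by linarith
      rw [slope_add huv]
      simp only [normSq, viewInner, Pi.add_apply, Pi.smul_apply, smul_eq_mul]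
      ring
    have hb := neg_nonneg.2 S.b_nonpos
    rw [← _root_.sub_pos, hconcave]
    positivity
  · have := convex_Ioi (0 : ℝ) (hs.slope_add_pos φ) (hs'.slope_add_pos φ) hu hv huv
    simp only [smul_eq_mul, mem_Ioi] at this
    simp only [slope_add huv]
    linarith

/-- The contribution of the vertex of a flag to minus the derivative of its angle, when the
parameters `s` vary with velocity `w`. -/
noncomputable def vertexRate (S : FlagSystem Φ) (s w : Φ → ℝ) (φ : Φ) : ℝ :=
  √(S.a ^ 2 - S.b * S.x φ) * (S.slope s φ / √(S.normSq s φ - S.slope s φ ^ 2)) *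
    (w φ / S.normSq s φ)

theorem vertexRate_eq (h : S.slope s φ ^ 2 < S.normSq s φ) (w : Φ → ℝ) :
    S.vertexRate s w φ = viewSlope S.a S.b (S.x φ) (S.y φ) (s φ) (s (S.opp φ)) *
      (w φ / S.normSq s φ) / √(S.normSq s φ * S.normSq s (S.opp φ) - S.edgeInner s φ ^ 2) := by
  have hκ := S.κ_pos φ
  have hω := Real.sqrt_pos.2 (S.sub_pos φ)
  have hd := Real.sqrt_pos.2 (_root_.sub_pos.2 h)
  have hslope : viewSlope S.a S.b (S.x φ) (S.y φ) (s φ) (s (S.opp φ)) = S.slope s φ * S.κ φ := by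
    rw [slope, div_mul_cancel₀ _ hκ.ne']
  rw [gram_eq, Real.sqrt_div (mul_nonneg (sq_nonneg _) (sub_nonneg.2 h.le)),
    Real.sqrt_mul (sq_nonneg _), Real.sqrt_sq hκ.le, vertexRate, hslope]
  field_simp

theorem hasDerivAt_viewAngle {σ : ℝ → Φ → ℝ} {w : Φ → ℝ} {t : ℝ} (hσ : HasDerivAt σ w t)
    (h : ∀ φ, S.slope (σ t) φ ^ 2 < S.normSq (σ t) φ) (φ : Φ) :
    HasDerivAt (fun t ↦ S.viewAngle (σ t) φ)
      (-(S.vertexRate (σ t) w φ + S.vertexRate (σ t) w (S.opp φ))) t := by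
  have hσ' := hasDerivAt_pi.1 hσ
  refine (hasDerivAt_arccos_viewInner (hσ' φ) (hσ' (S.opp φ))
    ((sq_nonneg _).trans_lt (h φ)) (slope_sq_lt_iff.1 (h φ))).congr_deriv ?_
  rw [vertexRate_eq (h φ), vertexRate_eq (h (S.opp φ)), normSq_opp_mul_sub, S.opp_opp, S.y_opp,
    ← add_div, ← neg_div]
  rfl

theorem IsAdmissible.exists_vertexRate_add_eq (hs : S.IsAdmissible s) (φ : Φ) :
    ∃ c > 0, ∀ w : Φ → ℝ, w (S.mate φ) = w φ →
      S.vertexRate s w φ + S.vertexRate s w (S.mate φ) = c * w φ := by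
  have hnormSq : S.normSq s (S.mate φ) = S.normSq s φ := by
    rw [normSq, normSq, S.x_mate, hs.mate_eq]
  have hpos := div_sqrt_sub_sq_add_pos (hs.slope_sq_lt φ)
    ((hs.slope_sq_lt (S.mate φ)).trans_eq hnormSq) (hs.slope_add_pos φ)
  have hω := Real.sqrt_pos.2 (S.sub_pos φ)
  have hD := (sq_nonneg _).trans_lt (hs.slope_sq_lt φ)
  refine ⟨_, div_pos (mul_pos hω hpos) hD, fun w hw ↦ ?_⟩
  simp only [vertexRate, hnormSq, S.x_mate, hw]
  ring

variable [Fintype Φ]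

theorem IsAdmissible.sum_vertexRate_pos (hs : S.IsAdmissible s) {w : Φ → ℝ}
    (hw : ∀ φ, w (S.mate φ) = w φ) (hw₀ : 0 < w) : 0 < ∑ φ, S.vertexRate s w φ := by
  obtain ⟨hw₀, φ₀, hφ₀⟩ := Pi.lt_def.1 hw₀
  choose c hc₀ hc using hs.exists_vertexRate_add_eq
  have hdouble : 2 * ∑ φ, S.vertexRate s w φ = ∑ φ, c φ * w φ := by
    rw [two_mul]
    nth_rewrite 2 [← Equiv.sum_comp S.mate]
    rw [← Finset.sum_add_distrib]
    exact Finset.sum_congr rfl fun φ _ ↦ hc φ w (hw φ)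
  have : 0 < ∑ φ, c φ * w φ := Finset.sum_pos'
    (fun φ _ ↦ mul_nonneg (hc₀ φ).le (hw₀ φ)) ⟨φ₀, Finset.mem_univ _, mul_pos (hc₀ φ₀) hφ₀⟩
  linarith

theorem IsAdmissible.sum_viewAngle_lt {s s' : Φ → ℝ} (hs : S.IsAdmissible s)
    (hs' : S.IsAdmissible s') (hlt : s < s') :
    ∑ φ, S.viewAngle s' φ < ∑ φ, S.viewAngle s φ := by
  let σ : ℝ → Φ → ℝ := AffineMap.lineMap s s'
  have hσ (t : ℝ) (ht : t ∈ Icc (0 : ℝ) 1) : S.IsAdmissible (σ t) :=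
    S.convex_isAdmissible.lineMap_mem hs hs' ht
  have hderiv (t : ℝ) (ht : t ∈ Icc (0 : ℝ) 1) :
      HasDerivAt (fun t ↦ ∑ φ, S.viewAngle (σ t) φ)
        (-(2 * ∑ φ, S.vertexRate (σ t) (s' - s) φ)) t := by
    refine (HasDerivAt.fun_sum fun φ _ ↦ hasDerivAt_viewAngle AffineMap.hasDerivAt_lineMap
      (hσ t ht).slope_sq_lt φ).congr_deriv ?_
    rw [Finset.sum_neg_distrib, Finset.sum_add_distrib, Equiv.sum_comp S.opp, two_mul]
  have hanti : StrictAntiOn (fun t ↦ ∑ φ, S.viewAngle (σ t) φ) (Icc 0 1) := by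
    refine strictAntiOn_of_deriv_neg (convex_Icc 0 1)
      (fun t ht ↦ (hderiv t ht).continuousAt.continuousWithinAt) fun t ht ↦ ?_
    rw [(hderiv t (interior_subset ht)).deriv, neg_neg_iff_pos]
    refine mul_pos two_pos ((hσ t (interior_subset ht)).sum_vertexRate_pos (fun φ ↦ ?_)
      (_root_.sub_pos.2 hlt))
    simp only [Pi.sub_apply, hs.mate_eq, hs'.mate_eq]
  simpa [σ] using hanti (left_mem_Icc.2 zero_le_one) (right_mem_Icc.2 zero_le_one) zero_lt_one

end FlagSystem

end FlagSystem

/-! ### Cones of rank three -/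

section Facets

variable {ι V : Type*} [AddCommGroup V] [Module ℝ V] {g : ι → V} {F G K : Set ι} {a b e f : ι}

theorem mem_span_pair_of_linearIndependent {u v w : V} (h : LinearIndependent ℝ ![u, v])
    {S : Submodule ℝ V} [FiniteDimensional ℝ S] (hS : Module.finrank ℝ S ≤ 2) (hu : u ∈ S)
    (hv : v ∈ S) (hw : w ∈ S) : w ∈ Submodule.span ℝ {u, v} := by
  have hcard := finrank_span_eq_card h
  rw [Matrix.range_cons_cons_empty, Fintype.card_fin] at hcard
  rwa [Submodule.eq_of_le_of_finrank_le (Submodule.span_le.2 (pair_subset hu hv))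
    (hS.trans_eq hcard.symm)]

theorem IsConeFace.finrank_lt [Finite ι] (hF : IsConeFace g F) (hne : F ≠ univ) :
    (g '' F).finrank ℝ < (range g).finrank ℝ := by
  have := FiniteDimensional.span_of_finite ℝ (finite_range g)
  obtain ⟨a, ha⟩ := (ne_univ_iff_exists_notMem F).1 hne
  refine Submodule.finrank_lt_finrank_of_lt <|
    (Submodule.span_mono (image_subset_range g F)).lt_of_not_ge fun hle ↦
      ha (hF.mem_of_mem_span (hle (Submodule.subset_span (mem_range_self a))))

theorem IsConeFace.mem_or_mem_of_combination (hG : IsConeFace g G) (hb : b ∈ G) {x y : ℝ}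
    (hx : 0 ≤ x) (hy : 0 ≤ y) (hxy : g b = x • g e + y • g f) :
    (x = 0 ∨ e ∈ G) ∧ (y = 0 ∨ f ∈ G) := by
  obtain ⟨n, hn0, hn1⟩ := hG
  have hn (c : ι) : 0 ≤ n (g c) := by
    by_cases hc : c ∈ G
    exacts [(hn0 c hc).ge, (hn1 c hc).le]
  have hsum : x * n (g e) + y * n (g f) = 0 := by
    simpa [hxy] using hn0 b hb
  have hzero (c : ι) (h : n (g c) = 0) : c ∈ G := by_contra fun hc ↦ (hn1 c hc).ne' h
  obtain ⟨hex, hfy⟩ := (add_eq_zero_iff_of_nonneg (mul_nonneg hx (hn e))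
    (mul_nonneg hy (hn f))).1 hsum
  exact ⟨(mul_eq_zero.1 hex).imp_right (hzero e), (mul_eq_zero.1 hfy).imp_right (hzero f)⟩

/-- `F` is the index set of a facet of a cone of rank three, that is, of a proper face which is not
contained in a line. -/
def IsFacet (g : ι → V) (F : Set ι) : Prop :=
  IsConeFace g F ∧ F ≠ univ ∧ ∀ b, ¬ F ⊆ lineIndices g b

theorem IsConeFace.isFacet_iff (hF : IsConeFace g F) (hbF : b ∈ F) (hb : g b ≠ 0) :
    IsFacet g F ↔ F ≠ univ ∧ ¬ F ⊆ lineIndices g b := by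
  refine ⟨fun h ↦ ⟨h.2.1, h.2.2 b⟩, fun h ↦ ⟨hF, h.1, fun c hsub ↦ h.2 fun a ha ↦ ?_⟩⟩
  obtain ⟨s, hs⟩ := Submodule.mem_span_singleton.1 (hsub ha)
  obtain ⟨t, ht⟩ := Submodule.mem_span_singleton.1 (hsub hbF)
  have ht0 : t ≠ 0 := by rintro rfl; exact hb (by simpa using ht.symm)
  exact Submodule.mem_span_singleton.2 ⟨s / t, by
    rw [← hs, ← ht, smul_smul, div_mul_cancel₀ _ ht0]⟩

theorem IsConeFace.mem_span_pair [Finite ι] (hr : (range g).finrank ℝ = 3) (hF : IsConeFace g F)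
    (hne : F ≠ univ) (he : e ∈ F) (hf : f ∈ F) (hef : LinearIndependent ℝ ![g e, g f])
    (ha : a ∈ F) : g a ∈ Submodule.span ℝ {g e, g f} := by
  have := FiniteDimensional.span_of_finite ℝ ((toFinite F).image g)
  have hlt := hF.finrank_lt hne
  exact mem_span_pair_of_linearIndependent hef (S := Submodule.span ℝ (g '' F))
    (by rw [Set.finrank] at hlt; lia) (Submodule.subset_span (mem_image_of_mem g he))
    (Submodule.subset_span (mem_image_of_mem g hf))
    (Submodule.subset_span (mem_image_of_mem g ha))

theorem IsConeFace.eq_of_linearIndependent [Finite ι] (hr : (range g).finrank ℝ = 3)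
    (hF : IsConeFace g F) (hFne : F ≠ univ) (hG : IsConeFace g G) (hGne : G ≠ univ)
    (heF : e ∈ F) (hfF : f ∈ F) (heG : e ∈ G) (hfG : f ∈ G)
    (hef : LinearIndependent ℝ ![g e, g f]) : F = G := by
  have key {F G : Set ι} (hF : IsConeFace g F) (hFne : F ≠ univ) (hG : IsConeFace g G)
      (heF : e ∈ F) (hfF : f ∈ F) (heG : e ∈ G) (hfG : f ∈ G) : F ⊆ G := fun a ha ↦ by
    refine hG.mem_of_mem_span (Submodule.span_mono ?_ (hF.mem_span_pair hr hFne heF hfF hef ha))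
    exact pair_subset (mem_image_of_mem g heG) (mem_image_of_mem g hfG)
  exact (key hF hFne hG heF hfF heG hfG).antisymm (key hG hGne hF heG hfG heF hfF)

theorem IsFacet.exists_isExtremeRay_pair [Finite ι] (hg : IsPointed g) (hF : IsFacet g F) :
    ∃ e ∈ F, ∃ f ∈ F, IsExtremeRay g e ∧ IsExtremeRay g f ∧ f ∉ lineIndices g e := by
  obtain ⟨e, heF, he⟩ := hF.1.exists_isExtremeRay hg <| by
    by_contra! h
    exact (isEmpty_or_nonempty ι).elim (fun _ ↦ hF.2.1 (Subsingleton.elim _ _))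
      fun ⟨b⟩ ↦ hF.2.2 b fun a ha ↦ by simp [mem_lineIndices, h a ha]
  obtain ⟨f, hfF, hf, hfe⟩ := hF.1.exists_isExtremeRay_notMem hg he (hF.2.2 e)
  exact ⟨e, heF, f, hfF, he, hf, hfe⟩

theorem IsConeFace.lineIndices_eq_or [Finite ι] (hr : (range g).finrank ℝ = 3)
    (hF : IsConeFace g F) (hne : F ≠ univ) (heF : e ∈ F) (hfF : f ∈ F) (he : IsExtremeRay g e)
    (hf : IsExtremeRay g f) (hfe : f ∉ lineIndices g e) (hbF : b ∈ F) (hb : IsExtremeRay g b) :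
    lineIndices g b = lineIndices g e ∨ lineIndices g b = lineIndices g f := by
  obtain ⟨x, y, hx, hy, hxy⟩ := he.exists_nonneg_combination hf hfe
    (hF.mem_span_pair hr hne heF hfF (he.linearIndependent_pair hfe) hbF)
  obtain ⟨hxe, hyf⟩ :=
    hb.2.mem_or_mem_of_combination (mem_lineIndices_self g b) hx hy hxy
  rcases hxe with rfl | heb
  · refine hyf.elim ?_ fun hfb ↦ .inr (hb.lineIndices_eq hf hfb).symm
    rintro rfl
    exact absurd (by simpa using hxy) hb.1
  · exact .inl (hb.lineIndices_eq he heb).symm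

theorem IsConeFace.eq_lineIndices_of_combination
    (hcomb : ∀ a, ∃ x y : ℝ, 0 ≤ x ∧ 0 ≤ y ∧ g a = x • g e + y • g f) (hG : IsConeFace g G)
    (heG : e ∉ G) (hne : ∃ a ∈ G, g a ≠ 0) : G = lineIndices g f := by
  refine hG.eq_lineIndices (fun b hb ↦ ?_) hne
  obtain ⟨x, y, hx, hy, hxy⟩ := hcomb b
  obtain rfl := ((hG.mem_or_mem_of_combination hb hx hy hxy).1).resolve_right heG
  exact Submodule.mem_span_singleton.2 ⟨y, by simp [hxy]⟩

theorem IsConeFace.eq_univ_of_combination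
    (hcomb : ∀ a, ∃ x y : ℝ, 0 ≤ x ∧ 0 ≤ y ∧ g a = x • g e + y • g f) (hG : IsConeFace g G)
    (heG : e ∈ G) (hfG : f ∈ G) : G = univ := by
  refine eq_univ_of_forall fun a ↦ ?_
  obtain ⟨x, y, -, -, hxy⟩ := hcomb a
  refine hG.mem_of_mem_span (hxy ▸ add_mem ?_ ?_)
  exacts [Submodule.smul_mem _ _ (Submodule.subset_span (mem_image_of_mem g heG)),
    Submodule.smul_mem _ _ (Submodule.subset_span (mem_image_of_mem g hfG))]

theorem exists_lineIndices_pair [Finite ι] (hg : IsPointed g) (hr : (range g).finrank ℝ = 2) :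
    ∃ F₁ F₂ : Set ι, F₁ ≠ F₂ ∧ ∀ G, IsConeFace g G ∧ G ≠ univ ∧ (∃ a ∈ G, g a ≠ 0) ↔
      G = F₁ ∨ G = F₂ := by
  have := FiniteDimensional.span_of_finite ℝ (finite_range g)
  have hrange (a : ι) : g a ∈ Submodule.span ℝ (range g) := Submodule.subset_span (mem_range_self a)
  obtain ⟨e, he⟩ := hg.exists_isExtremeRay (by lia)
  obtain ⟨c, hc⟩ := exists_notMem_span_singleton hr.ge (g e)
  obtain ⟨f, -, hf, hfe⟩ := (isConeFace_univ g).exists_isExtremeRay_notMem hg he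
    fun h ↦ hc (h (mem_univ c))
  have hef : e ∉ lineIndices g f := fun h ↦
    hfe (hf.lineIndices_eq he h ▸ mem_lineIndices_self g f)
  have hcomb (a : ι) := he.exists_nonneg_combination hf hfe <|
    mem_span_pair_of_linearIndependent (he.linearIndependent_pair hfe) hr.le (hrange e)
      (hrange f) (hrange a)
  refine ⟨lineIndices g e, lineIndices g f, fun h ↦ hfe (h ▸ mem_lineIndices_self g f),
    fun G ↦ ⟨fun ⟨hG, hne, hG0⟩ ↦ ?_, ?_⟩⟩
  · by_cases heG : e ∈ G
    · refine .inl (hG.eq_lineIndices_of_combination (e := f) (fun a ↦ ?_)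
        (fun hfG ↦ hne (hG.eq_univ_of_combination hcomb heG hfG)) hG0)
      obtain ⟨x, y, hx, hy, hxy⟩ := hcomb a
      exact ⟨y, x, hy, hx, hxy.trans (add_comm _ _)⟩
    · exact .inr (hG.eq_lineIndices_of_combination hcomb heG hG0)
  · rintro (rfl | rfl)
    · exact ⟨he.2, (ne_of_mem_of_not_mem' (mem_univ f) hfe).symm, e, mem_lineIndices_self g e, he.1⟩
    · exact ⟨hf.2, (ne_of_mem_of_not_mem' (mem_univ e) hef).symm, f, mem_lineIndices_self g f, hf.1⟩

theorem IsExtremeRay.exists_isFacet_pair [Finite ι] (hb : IsExtremeRay g b)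
    (hr : (range g).finrank ℝ = 3) :
    ∃ F₁ F₂ : Set ι, F₁ ≠ F₂ ∧ ∀ G, IsFacet g G ∧ b ∈ G ↔ G = F₁ ∨ G = F₂ := by
  set π := (Submodule.span ℝ {g b}).mkQ
  have hπ : LinearMap.ker π = Submodule.span ℝ {g b} := Submodule.ker_mkQ _
  have hr' := finrank_range_comp_add_one hπ hb.1
  obtain ⟨F₁, F₂, hne, h⟩ := exists_lineIndices_pair (hb.isPointed_comp hπ) (by lia)
  refine ⟨F₁, F₂, hne, fun G ↦ ?_⟩
  rw [← h, isConeFace_comp_iff hπ]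
  simp only [Function.comp_apply, ne_eq, map_eq_zero_iff_mem_lineIndices hπ,
    ← not_subset_iff_exists_mem_notMem]
  constructor
  · exact fun ⟨hG, hbG⟩ ↦ ⟨⟨hG.1, hbG⟩, (hG.1.isFacet_iff hbG hb.1).1 hG⟩
  · exact fun ⟨⟨hG, hbG⟩, h⟩ ↦ ⟨(hG.isFacet_iff hbG hb.1).2 h, hbG⟩

theorem IsExtremeRay.exists_ne_isFacet [Finite ι] (hb : IsExtremeRay g b)
    (hr : (range g).finrank ℝ = 3) (hF : IsFacet g F) (hbF : b ∈ F) :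
    ∃ G, IsFacet g G ∧ b ∈ G ∧ G ≠ F ∧ ∀ K, IsFacet g K → b ∈ K → K = F ∨ K = G := by
  obtain ⟨F₁, F₂, hne, h⟩ := hb.exists_isFacet_pair hr
  have h₁ := (h F₁).2 (.inl rfl)
  have h₂ := (h F₂).2 (.inr rfl)
  obtain rfl | rfl := (h F).1 ⟨hF, hbF⟩
  · exact ⟨F₂, h₂.1, h₂.2, hne.symm, fun K hK hbK ↦ (h K).1 ⟨hK, hbK⟩⟩
  · exact ⟨F₁, h₁.1, h₁.2, hne, fun K hK hbK ↦ ((h K).1 ⟨hK, hbK⟩).symm⟩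

theorem IsPointed.exists_isFacet_superset [Finite ι] (hg : IsPointed g)
    (hr : (range g).finrank ℝ = 3) (hK : IsConeFace g K) (hne : K ≠ univ) (hb : ∃ b ∈ K, g b ≠ 0) :
    ∃ F, IsFacet g F ∧ K ⊆ F := by
  obtain ⟨b, hbK, hb⟩ := hK.exists_isExtremeRay hg hb
  by_cases hKb : K ⊆ lineIndices g b
  · obtain ⟨F, _, -, h⟩ := hb.exists_isFacet_pair hr
    obtain ⟨hF, hbF⟩ := (h F).2 (.inl rfl)
    exact ⟨F, hF, hKb.trans (hF.1.lineIndices_subset hbF)⟩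
  · exact ⟨K, (hK.isFacet_iff hbK hb.1).2 ⟨hne, hKb⟩, subset_rfl⟩

end Facets

section ConePolygon

/-- The exchange of the two ends of an edge, on the flags of a polygon with edges `𝓕`. -/
def flip (𝓕 : Type*) : Equiv.Perm (𝓕 × Bool) := (Equiv.refl 𝓕).prodCongr Equiv.boolNot

/-- The facets and extreme rays of a cone of rank three, arranged as the edges and vertices of a
polygon. The two flags (pairs of an edge and one of its ends) of an edge `F` are `(F, false)` and
`(F, true)`; `mate` exchanges the two flags at a vertex. Only one generator of each ray is chosen
as a vertex. -/
structure IsConePolygon {ι 𝓕 V : Type*} [AddCommGroup V] [Module ℝ V] (g : ι → V)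
    (face : 𝓕 → Set ι) (vertex : 𝓕 × Bool → ι) (mate : Equiv.Perm (𝓕 × Bool)) : Prop where
  finrank_eq : (range g).finrank ℝ = 3
  injective : Function.Injective face
  isConeFace : ∀ F, IsConeFace g (face F)
  ne_univ : ∀ F, face F ≠ univ
  mem : ∀ φ, vertex φ ∈ face φ.1
  isExtremeRay : ∀ φ, IsExtremeRay g (vertex φ)
  flip_notMem : ∀ φ, vertex (flip 𝓕 φ) ∉ lineIndices g (vertex φ)
  vertex_mate : ∀ φ, vertex (mate φ) = vertex φ
  mate_ne : ∀ φ, (mate φ).1 ≠ φ.1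
  exists_superset : ∀ K, IsConeFace g K → K ≠ univ → (∃ b ∈ K, g b ≠ 0) → ∃ F, K ⊆ face F
  eq_or_eq : ∀ φ F, vertex φ ∈ face F → F = φ.1 ∨ F = (mate φ).1

section Existence

variable {ι V : Type*} [AddCommGroup V] [Module ℝ V] {g : ι → V}

theorem exists_rayRepresentative (g : ι → V) :
    ∃ ρ : ι → ι, ∀ b, IsExtremeRay g b → IsExtremeRay g (ρ b) ∧
      lineIndices g (ρ b) = lineIndices g b ∧
      ∀ c, lineIndices g c = lineIndices g b → ρ c = ρ b := by
  rcases isEmpty_or_nonempty ι with _ | _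
  · exact ⟨id, fun b ↦ isEmptyElim b⟩
  refine ⟨fun b ↦ Function.invFunOn (lineIndices g) {c | IsExtremeRay g c} (lineIndices g b),
    fun b hb ↦ ?_⟩
  have h : ∃ c ∈ {c | IsExtremeRay g c}, lineIndices g c = lineIndices g b := ⟨b, hb, rfl⟩
  exact ⟨Function.invFunOn_mem h, Function.invFunOn_eq h, fun c hc ↦ by simp only [hc]⟩

theorem IsPointed.exists_vertices [Finite ι] (hg : IsPointed g) (hr : (range g).finrank ℝ = 3) :
    ∃ v : {F // IsFacet g F} × Bool → ι, (∀ φ, v φ ∈ φ.1.1) ∧ (∀ φ, IsExtremeRay g (v φ)) ∧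
      (∀ φ, v (flip _ φ) ∉ lineIndices g (v φ)) ∧ ∀ φ F, v φ ∈ F.1 → ∃ i, v (F, i) = v φ := by
  obtain ⟨ρ, hρ⟩ := exists_rayRepresentative g
  choose e heF f hfF he hf hfe using
    fun F : {F // IsFacet g F} ↦ F.2.exists_isExtremeRay_pair hg
  set ray : {F // IsFacet g F} × Bool → ι := fun φ ↦ bif φ.2 then e φ.1 else f φ.1
  have hray : ∀ φ, IsExtremeRay g (ray φ) := by rintro ⟨F, _ | _⟩; exacts [hf F, he F]
  have hrayF : ∀ φ, ray φ ∈ φ.1.1 := by rintro ⟨F, _ | _⟩; exacts [hfF F, heF F]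
  have hflip : ∀ φ, ray (flip _ φ) ∉ lineIndices g (ray φ) := by
    rintro ⟨F, _ | _⟩
    · exact fun h ↦ hfe F ((hf F).lineIndices_eq (he F) h ▸ mem_lineIndices_self g (f F))
    · exact hfe F
  have hline φ : lineIndices g (ρ (ray φ)) = lineIndices g (ray φ) := (hρ _ (hray φ)).2.1
  refine ⟨fun φ ↦ ρ (ray φ), fun φ ↦ ?_, fun φ ↦ (hρ _ (hray φ)).1, fun φ h ↦ hflip φ ?_,
    fun φ F hφF ↦ ?_⟩
  · exact φ.1.2.1.lineIndices_subset (hrayF φ) (hline φ ▸ mem_lineIndices_self g _)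
  · have := (hray φ).lineIndices_eq (hρ _ (hray (flip _ φ))).1 (hline φ ▸ h)
    exact this ▸ hline (flip _ φ) ▸ mem_lineIndices_self g _
  · rcases F.2.1.lineIndices_eq_or hr F.2.2.1 (hrayF (F, true)) (hrayF (F, false))
      (hray (F, true)) (hray (F, false)) (hflip (F, true)) hφF (hρ _ (hray φ)).1 with h | h
    · exact ⟨true, (hρ _ (hray φ)).2.2 _ (h.symm.trans (hline φ))⟩
    · exact ⟨false, (hρ _ (hray φ)).2.2 _ (h.symm.trans (hline φ))⟩

theorem IsPointed.exists_isConePolygon [Finite ι] (hg : IsPointed g)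
    (hr : (range g).finrank ℝ = 3) :
    ∃ vertex mate, IsConePolygon g (Subtype.val : {F // IsFacet g F} → Set ι) vertex mate := by
  obtain ⟨v, hmem, hv, hflip, hrep⟩ := hg.exists_vertices hr
  have hflag (F) {i j : Bool} (h : v (F, i) = v (F, j)) : i = j := by
    by_contra hij
    obtain rfl := (Bool.eq_not_of_ne hij)
    exact hflip (F, j) (h ▸ mem_lineIndices_self g _)
  have hmate (φ : {F // IsFacet g F} × Bool) : ∃ ψ : {F // IsFacet g F} × Bool,
      v ψ = v φ ∧ ψ.1 ≠ φ.1 ∧ ∀ F : {F // IsFacet g F}, v φ ∈ F.1 → F = φ.1 ∨ F = ψ.1 := by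
    obtain ⟨G, hG, hvG, hne, h⟩ := (hv φ).exists_ne_isFacet hr φ.1.2 (hmem φ)
    obtain ⟨i, hi⟩ := hrep φ ⟨G, hG⟩ hvG
    exact ⟨(⟨G, hG⟩, i), hi, fun h ↦ hne (congrArg Subtype.val h), fun F hF ↦
      (h F.1 F.2 hF).imp Subtype.ext Subtype.ext⟩
  choose mate hvm hne hor using hmate
  have hinv : Function.Involutive mate := fun φ ↦ by
    have hfst : (mate (mate φ)).1 = φ.1 :=
      (hor φ _ (hvm φ ▸ hvm (mate φ) ▸ hmem _)).resolve_right (hne (mate φ))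
    have heq : mate (mate φ) = (φ.1, (mate (mate φ)).2) := Prod.ext hfst rfl
    exact Prod.ext hfst (hflag φ.1 ((congrArg v heq).symm.trans ((hvm _).trans (hvm φ))))
  exact ⟨v, hinv.toPerm,
    { finrank_eq := hr
      injective := Subtype.val_injective
      isConeFace := fun F ↦ F.2.1
      ne_univ := fun F ↦ F.2.2.1
      mem := hmem
      isExtremeRay := hv
      flip_notMem := hflip
      vertex_mate := hvm
      mate_ne := hne
      exists_superset := fun K hK hKne hb ↦
        let ⟨F, hF, hKF⟩ := hg.exists_isFacet_superset hr hK hKne hb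
        ⟨⟨F, hF⟩, hKF⟩
      eq_or_eq := hor }⟩

end Existence

namespace IsConePolygon

variable {ι 𝓕 V W : Type*} [AddCommGroup V] [Module ℝ V] [AddCommGroup W] [Module ℝ W]
  {g : ι → V} {face : 𝓕 → Set ι} {vertex : 𝓕 × Bool → ι} {mate : Equiv.Perm (𝓕 × Bool)} {a : ι}
  {K : Set ι} {Z : V} {π : V →ₗ[ℝ] W}

theorem linearIndependent_pair (P : IsConePolygon g face vertex mate) (φ : 𝓕 × Bool) :
    LinearIndependent ℝ ![g (vertex φ), g (vertex (flip 𝓕 φ))] :=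
  (P.isExtremeRay φ).linearIndependent_pair (P.flip_notMem φ)

theorem subset_or_subset (P : IsConePolygon g face vertex mate) (φ : 𝓕 × Bool)
    (hK : IsConeFace g K) (hne : K ≠ univ) (hφ : vertex φ ∈ K) :
    K ⊆ face φ.1 ∨ K ⊆ face (mate φ).1 := by
  obtain ⟨F, hF⟩ := P.exists_superset K hK hne ⟨_, hφ, (P.isExtremeRay φ).1⟩
  rcases P.eq_or_eq φ F (hF hφ) with rfl | rfl
  exacts [.inl hF, .inr hF]

theorem nonempty [Finite ι] (P : IsConePolygon g face vertex mate) (hg : IsPointed g) :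
    Nonempty 𝓕 := by
  obtain ⟨b, hb⟩ := hg.exists_isExtremeRay (by rw [P.finrank_eq]; norm_num)
  obtain ⟨K, hK, hne, hbK⟩ := hb.isBoundary (by rw [P.finrank_eq]; norm_num)
  exact (P.exists_superset K hK hne ⟨b, hbK, hb.1⟩).nonempty

theorem exists_normal (P : IsConePolygon g face vertex mate) (hZ : IsInnerVector g Z) (F : 𝓕) :
    ∃ n : Module.Dual ℝ V, (∀ a ∈ face F, n (g a) = 0) ∧ (∀ a ∉ face F, 0 < n (g a)) ∧ 0 < n Z :=
  hZ.exists_normal_pos (P.isConeFace F) (P.ne_univ F)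

theorem linearIndependent_map_pair (P : IsConePolygon g face vertex mate)
    (hZ : IsInnerVector g Z) (hπ : LinearMap.ker π = Submodule.span ℝ {Z}) (φ : 𝓕 × Bool) :
    LinearIndependent ℝ ![π (g (vertex φ)), π (g (vertex (flip 𝓕 φ)))] := by
  obtain ⟨n, hn0, -, hnZ⟩ := P.exists_normal hZ φ.1
  refine LinearIndependent.pair_iff.2 fun x y hxy ↦
    LinearIndependent.pair_iff.1 (P.linearIndependent_pair φ) x y ?_
  rw [← map_smul, ← map_smul, ← map_add, ← LinearMap.mem_ker, hπ,
    Submodule.mem_span_singleton] at hxy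
  obtain ⟨t, ht⟩ := hxy
  have hzero := congrArg n ht
  simp only [map_add, map_smul, smul_eq_mul, hn0 _ (P.mem φ), hn0 _ (P.mem (flip 𝓕 φ)),
    mul_zero, add_zero, mul_eq_zero, hnZ.ne', or_false] at hzero
  rw [← ht, hzero, zero_smul]

variable [Finite ι]

theorem exists_nonneg_combination (P : IsConePolygon g face vertex mate) (φ : 𝓕 × Bool)
    (ha : a ∈ face φ.1) :
    ∃ x y : ℝ, 0 ≤ x ∧ 0 ≤ y ∧ g a = x • g (vertex φ) + y • g (vertex (flip 𝓕 φ)) :=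
  (P.isExtremeRay φ).exists_nonneg_combination (P.isExtremeRay _) (P.flip_notMem φ) <|
    (P.isConeFace φ.1).mem_span_pair P.finrank_eq (P.ne_univ φ.1) (P.mem φ) (P.mem (flip 𝓕 φ))
      (P.linearIndependent_pair φ) ha

theorem eq_of_mem (P : IsConePolygon g face vertex mate) {φ : 𝓕 × Bool} {F : 𝓕}
    (h : vertex φ ∈ face F) (h' : vertex (flip 𝓕 φ) ∈ face F) : F = φ.1 :=
  P.injective <| (P.isConeFace F).eq_of_linearIndependent P.finrank_eq (P.ne_univ F)
    (P.isConeFace φ.1) (P.ne_univ φ.1) h h' (P.mem φ) (P.mem (flip 𝓕 φ))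
    (P.linearIndependent_pair φ)

theorem flip_notMem_mate (P : IsConePolygon g face vertex mate) (φ : 𝓕 × Bool) :
    vertex (flip 𝓕 φ) ∉ face (mate φ).1 := fun h ↦
  P.mate_ne φ (P.eq_of_mem (P.vertex_mate φ ▸ P.mem (mate φ)) h)

theorem eq_of_combination_add_smul (P : IsConePolygon g face vertex mate) (hZ : IsInnerVector g Z)
    (φ ψ : 𝓕 × Bool) {x y x' y' t : ℝ} (hx' : 0 < x') (hy' : 0 < y') (ht : 0 ≤ t)
    (h : x • g (vertex φ) + y • g (vertex (flip 𝓕 φ)) =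
      x' • g (vertex ψ) + y' • g (vertex (flip 𝓕 ψ)) + t • Z) : φ.1 = ψ.1 := by
  obtain ⟨n, hn0, hn1, hnZ⟩ := P.exists_normal hZ φ.1
  have hn (a : ι) : 0 ≤ n (g a) := by
    by_cases ha : a ∈ face φ.1
    exacts [(hn0 a ha).ge, (hn1 a ha).le]
  have hmem (a : ι) (ha : n (g a) ≤ 0) : a ∈ face φ.1 := by_contra fun h ↦ ha.not_gt (hn1 a h)
  have hzero := congrArg n h
  simp only [map_add, map_smul, smul_eq_mul, hn0 _ (P.mem φ), hn0 _ (P.mem (flip 𝓕 φ))] at hzero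
  have hψ := hn (vertex ψ)
  have hψ' := hn (vertex (flip 𝓕 ψ))
  refine P.eq_of_mem (hmem _ ?_) (hmem _ ?_)
  · exact nonpos_of_mul_nonpos_right (by nlinarith) hx'
  · exact nonpos_of_mul_nonpos_right (by nlinarith) hy'

theorem coeff_nonneg (P : IsConePolygon g face vertex mate) {n : Module.Dual ℝ V} {φ : 𝓕 × Bool}
    (hn0 : ∀ a ∈ face (mate φ).1, n (g a) = 0) (hn1 : ∀ a ∉ face (mate φ).1, 0 < n (g a))
    {x y : ℝ} (h : 0 ≤ n (x • g (vertex φ) + y • g (vertex (flip 𝓕 φ)))) : 0 ≤ y := by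
  rw [map_add, map_smul, map_smul, hn0 _ (P.vertex_mate φ ▸ P.mem (mate φ)), smul_zero,
    zero_add, smul_eq_mul] at h
  exact nonneg_of_mul_nonneg_left h (hn1 _ (P.flip_notMem_mate φ))

/-- Following the line through `v` in the direction of `Z` leads into the boundary of the cone. -/
theorem exists_combination_add_smul (P : IsConePolygon g face vertex mate) (hg : IsPointed g)
    (hZ : IsInnerVector g Z) {v : V} (hv : v ∈ Submodule.span ℝ (range g)) :
    ∃ F, ∃ x y t : ℝ, 0 ≤ x ∧ 0 ≤ y ∧
      x • g (vertex (F, true)) + y • g (vertex (F, false)) = v + t • Z := by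
  have := P.nonempty hg
  have := Finite.of_injective face P.injective
  have := FiniteDimensional.span_of_finite ℝ (finite_range g)
  choose n hn0 hn1 hnZ using P.exists_normal hZ
  obtain ⟨F, hF⟩ := Finite.exists_max fun F ↦ -n F v / n F Z
  set t := -n F v / n F Z
  have hnonneg G : 0 ≤ n G (v + t • Z) := by
    have := (div_le_iff₀ (hnZ G)).1 (hF G)
    simp only [map_add, map_smul, smul_eq_mul]
    linarith
  have hzero : n F (v + t • Z) = 0 := by
    simp only [map_add, map_smul, smul_eq_mul, t, div_mul_cancel₀ _ (hnZ F).ne', add_neg_cancel]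
  have hlt : Submodule.span ℝ (range g) ⊓ LinearMap.ker (n F) < Submodule.span ℝ (range g) :=
    inf_le_left.lt_of_ne fun h ↦ (hnZ F).ne' (h.ge hZ.1).2
  have hrank := Submodule.finrank_lt_finrank_of_lt hlt
  have hr : Module.finrank ℝ (Submodule.span ℝ (range g)) = 3 := P.finrank_eq
  have hker φ (hφ : φ.1 = F) :
      g (vertex φ) ∈ Submodule.span ℝ (range g) ⊓ LinearMap.ker (n F) :=
    ⟨Submodule.subset_span (mem_range_self _), hn0 F _ (hφ ▸ P.mem φ)⟩
  obtain ⟨x, y, hxy⟩ := Submodule.mem_span_pair.1 <| mem_span_pair_of_linearIndependent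
    (P.linearIndependent_pair (F, true)) (by lia) (hker (F, true) rfl) (hker (F, false) rfl)
    ⟨add_mem hv (Submodule.smul_mem _ t hZ.1), hzero⟩
  refine ⟨F, x, y, t, ?_, ?_, hxy⟩
  · have := hnonneg (mate (F, false)).1
    rw [← hxy, add_comm] at this
    exact P.coeff_nonneg (φ := (F, false)) (hn0 _) (hn1 _) this
  · exact P.coeff_nonneg (φ := (F, true)) (hn0 _) (hn1 _) (hxy ▸ hnonneg _)

theorem isSectorTiling (P : IsConePolygon g face vertex mate) (hg : IsPointed g)
    (hZ : IsInnerVector g Z) (hπ : LinearMap.ker π = Submodule.span ℝ {Z})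
    {γ : ι → (Submodule.span ℝ (range g)).map π} (hγ : ∀ a, (γ a : W) = π (g a)) :
    IsSectorTiling (fun F ↦ γ (vertex (F, true))) (fun F ↦ γ (vertex (F, false))) where
  linearIndependent F := by
    refine LinearIndependent.pair_iff.2 fun x y hxy ↦
      LinearIndependent.pair_iff.1 (P.linearIndependent_map_pair hZ hπ (F, true)) x y ?_
    have hxy := congrArg Subtype.val hxy
    simp only [Submodule.coe_add, Submodule.coe_smul, hγ] at hxy
    exact hxy
  cover := by
    rintro ⟨_, v, hv, rfl⟩
    obtain ⟨F, x, y, t, hx, hy, h⟩ := P.exists_combination_add_smul hg hZ hv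
    refine ⟨F, x, y, hx, hy, Subtype.ext ?_⟩
    have hπZ : π Z = 0 := LinearMap.mem_ker.1 (hπ ▸ Submodule.mem_span_singleton_self Z)
    simpa [hγ, hπZ] using congrArg π h
  disjoint F G hFG := by
    refine disjoint_left.2 ?_
    rintro _ ⟨x, y, hx, hy, rfl⟩ ⟨x', y', hx', hy', h⟩
    have hker : x • g (vertex (F, true)) + y • g (vertex (F, false)) -
        (x' • g (vertex (G, true)) + y' • g (vertex (G, false))) ∈ LinearMap.ker π := by
      rw [LinearMap.mem_ker, map_sub, sub_eq_zero]
      simpa [hγ] using (congrArg Subtype.val h).symm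
    rw [hπ, Submodule.mem_span_singleton] at hker
    obtain ⟨t, ht⟩ := hker
    refine hFG ?_
    rcases le_total 0 t with h0 | h0
    · exact P.eq_of_combination_add_smul hZ (F, true) (G, true) hx' hy' h0
        (by rw [ht]; exact (add_sub_cancel _ _).symm)
    · refine (P.eq_of_combination_add_smul hZ (G, true) (F, true) (x := x')
        (y := y') (t := -t) hx hy (neg_nonneg.2 h0) ?_).symm
      rw [neg_smul, ht, neg_sub, flip]
      exact (add_sub_cancel _ _).symm

end IsConePolygon

end ConePolygon

section Planar

open InnerProductGeometry

theorem sq_real_inner_lt_of_linearIndependent {E : Type*} [NormedAddCommGroup E]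
    [InnerProductSpace ℝ E] {u v : E} (h : LinearIndependent ℝ ![u, v]) :
    inner ℝ u v ^ 2 < ‖u‖ ^ 2 * ‖v‖ ^ 2 := by
  have hu : 0 < ‖u‖ := norm_pos_iff.2 (h.ne_zero 0)
  have hv : 0 < ‖v‖ := norm_pos_iff.2 (h.ne_zero 1)
  have hsin := Real.sin_pos_of_mem_Ioo (angle_mem_Ioo_of_linearIndependent h)
  have := Real.sin_sq_add_cos_sq (angle u v)
  rw [← cos_angle_mul_norm_mul_norm, mul_pow, mul_pow]
  exact mul_lt_of_lt_one_left (by positivity) (by nlinarith)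

theorem norm_add_inner_div_norm_pos {E : Type*} [NormedAddCommGroup E]
    [InnerProductSpace ℝ E] {u v : E} (h : LinearIndependent ℝ ![u, v]) :
    0 < ‖u‖ + inner ℝ u v / ‖v‖ := by
  have hv : 0 < ‖v‖ := norm_pos_iff.2 (h.ne_zero 1)
  have := (abs_lt_of_sq_lt_sq' ((sq_real_inner_lt_of_linearIndependent h).trans_eq
    (mul_pow _ _ 2).symm) (by positivity)).1
  rw [← neg_lt_iff_pos_add', lt_div_iff₀ hv]
  linarith

namespace IsConePolygon

variable {ι 𝓕 E : Type*} [NormedAddCommGroup E] [InnerProductSpace ℝ E] {g g' : ι → E}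
  {face : 𝓕 → Set ι} {vertex : 𝓕 × Bool → ι} {mate : Equiv.Perm (𝓕 × Bool)} {Z : E}
  {π : E →ₗ[ℝ] E}

theorem isBoundary (P : IsConePolygon g face vertex mate) (φ : 𝓕 × Bool) :
    IsBoundary g (vertex φ) :=
  ⟨_, P.isConeFace φ.1, P.ne_univ φ.1, P.mem φ⟩

theorem linearIndependent_map_flip [Finite ι] (P : IsConePolygon g face vertex mate)
    {φ : 𝓕 × Bool} (hπ : LinearMap.ker π = Submodule.span ℝ {g (vertex φ)}) :
    LinearIndependent ℝ ![π (g (vertex (flip 𝓕 φ))), π (g (vertex (flip 𝓕 (mate φ))))] := by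
  have hmate : vertex (flip 𝓕 (mate φ)) ∉ face φ.1 := fun h ↦
    P.mate_ne φ (P.eq_of_mem (P.vertex_mate φ ▸ P.mem φ) h).symm
  obtain ⟨n, hn0, hn1⟩ := P.isConeFace φ.1
  obtain ⟨n', hn0', hn1'⟩ := P.isConeFace (mate φ).1
  refine LinearIndependent.pair_iff.2 fun x y hxy ↦ ?_
  rw [← map_smul, ← map_smul, ← map_add, ← LinearMap.mem_ker, hπ,
    Submodule.mem_span_singleton] at hxy
  obtain ⟨t, ht⟩ := hxy
  have hn := congrArg n ht
  have hn' := congrArg n' ht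
  simp only [map_add, map_smul, smul_eq_mul, hn0 _ (P.mem φ), hn0 _ (P.mem (flip 𝓕 φ)), mul_zero,
    zero_add, zero_eq_mul, (hn1 _ hmate).ne', or_false] at hn
  simp only [map_add, map_smul, smul_eq_mul, hn0' _ (P.vertex_mate φ ▸ P.mem (mate φ)),
    hn0' _ (P.mem (flip 𝓕 (mate φ))), mul_zero, add_zero, zero_eq_mul,
    (hn1' _ (P.flip_notMem_mate φ)).ne', or_false] at hn'
  exact ⟨hn', hn⟩

/-- The functional `⟪û + ŵ, π ·⟫`, where `û`, `ŵ` are the unit vectors along the two edges at the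
vertex, is nonnegative on these edges, hence on the whole cone. -/
theorem balance [Finite ι] (P : IsConePolygon g face vertex mate) (hZ : IsInnerVector g Z)
    (φ : 𝓕 × Bool) (hπ : LinearMap.ker π = Submodule.span ℝ {g (vertex φ)}) :
    0 < inner ℝ (π Z) (π (g (vertex (flip 𝓕 φ)))) / ‖π (g (vertex (flip 𝓕 φ)))‖ +
      inner ℝ (π Z) (π (g (vertex (flip 𝓕 (mate φ))))) /
        ‖π (g (vertex (flip 𝓕 (mate φ))))‖ := by
  have hli := P.linearIndependent_map_flip hπ
  set u := π (g (vertex (flip 𝓕 φ)))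
  set w := π (g (vertex (flip 𝓕 (mate φ))))
  let m : Module.Dual ℝ E := innerₛₗ ℝ (‖u‖⁻¹ • u + ‖w‖⁻¹ • w) ∘ₗ π
  have hm z : m z = inner ℝ (π z) u / ‖u‖ + inner ℝ (π z) w / ‖w‖ := by
    simp only [m, LinearMap.comp_apply, innerₛₗ_apply_apply, inner_add_left, real_inner_smul_left,
      real_inner_comm _ (π z)]
    ring
  have hmu : 0 < m (g (vertex (flip 𝓕 φ))) := by
    rw [hm, real_inner_self_eq_norm_mul_norm, mul_self_div_self]
    exact norm_add_inner_div_norm_pos hli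
  have hmw : 0 < m (g (vertex (flip 𝓕 (mate φ)))) := by
    rw [hm, real_inner_self_eq_norm_mul_norm, mul_self_div_self, add_comm]
    exact norm_add_inner_div_norm_pos (LinearIndependent.pair_symm_iff.1 hli)
  have hmv : m (g (vertex φ)) = 0 := by
    have : g (vertex φ) ∈ LinearMap.ker π := hπ ▸ Submodule.mem_span_singleton_self _
    rw [LinearMap.comp_apply, LinearMap.mem_ker.1 this, map_zero]
  rw [← hm]
  refine hZ.2 m ((P.isExtremeRay φ).nonneg_of_nonneg_on_faces P.finrank_eq.ge hmv
    fun K hK hne hφ a ha ↦ ?_) ⟨_, hmu⟩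
  rcases P.subset_or_subset φ hK hne hφ with h | h
  · obtain ⟨x, y, -, hy, hxy⟩ := P.exists_nonneg_combination φ (h ha)
    simp only [hxy, map_add, map_smul, hmv, smul_zero, zero_add]
    exact mul_nonneg hy hmu.le
  · obtain ⟨x, y, -, hy, hxy⟩ := P.exists_nonneg_combination (mate φ) (h ha)
    simp only [hxy, map_add, map_smul, P.vertex_mate, hmv, smul_zero, zero_add]
    exact mul_nonneg hy hmw.le

theorem sum_angle [Finite ι] [Fintype 𝓕] (P : IsConePolygon g face vertex mate)
    (hg : IsPointed g) (hZ : IsInnerVector g Z) (hπ : LinearMap.ker π = Submodule.span ℝ {Z}) :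
    ∑ φ, angle (π (g (vertex φ))) (π (g (vertex (flip 𝓕 φ)))) = 4 * Real.pi := by
  have := FiniteDimensional.span_of_finite ℝ (finite_range g)
  have hrank := finrank_map_add_one hπ (hZ.ne_zero hg (by rw [P.finrank_eq]; norm_num)) _ hZ.1
  have hr : Module.finrank ℝ (Submodule.span ℝ (range g)) = 3 := P.finrank_eq
  let γ a : (Submodule.span ℝ (range g)).map π :=
    ⟨π (g a), Submodule.mem_map_of_mem (Submodule.subset_span (mem_range_self a))⟩
  have hsum := (P.isSectorTiling hg hZ hπ (γ := γ) fun _ ↦ rfl).sum_angle_eq_two_pi (by lia)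
  have hangle a b : angle (π (g a)) (π (g b)) = angle (γ a) (γ b) :=
    ((Submodule.map π _).subtypeₗᵢ.angle_map (γ a) (γ b))
  simp only [hangle, Fintype.sum_prod_type, Fintype.sum_bool, Finset.sum_add_distrib]
  have hcomm F : angle (γ (vertex (F, false))) (γ (vertex (flip 𝓕 (F, false)))) =
    angle (γ (vertex (F, true))) (γ (vertex (F, false))) := angle_comm _ _
  simp only [hcomm]
  exact (congrArg₂ _ hsum hsum).trans (by ring)

end IsConePolygon

section View

variable {ι 𝓕 E : Type*} [NormedAddCommGroup E] [InnerProductSpace ℝ E] {g g' : ι → E}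
  {face : 𝓕 → Set ι} {vertex : 𝓕 × Bool → ι} {mate : Equiv.Perm (𝓕 × Bool)} {Z Z' : E}
  {S : FlagSystem (𝓕 × Bool)} {s s' : ι → ℝ}

/-- The flag system `S` with the parameters `s` describes the polygon of a cone of rank three as
seen from its inner vector `Z`: projecting along `Z` gives its lengths and angles, and projecting
along a vertex gives, up to a positive factor, the slopes at that vertex. -/
structure FlagSystem.IsViewFrom (S : FlagSystem (𝓕 × Bool)) (g : ι → E) (vertex : 𝓕 × Bool → ι)
    (mate : Equiv.Perm (𝓕 × Bool)) (Z : E) (s : ι → ℝ) : Prop where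
  opp_eq : S.opp = flip 𝓕
  mate_eq : S.mate = mate
  exists_projection : ∃ π : E →ₗ[ℝ] E, LinearMap.ker π = Submodule.span ℝ {Z} ∧ ∀ φ,
    S.normSq (s ∘ vertex) φ = ‖π (g (vertex φ))‖ ^ 2 ∧
      S.edgeInner (s ∘ vertex) φ = inner ℝ (π (g (vertex φ))) (π (g (vertex (flip 𝓕 φ))))
  exists_slope : ∀ φ, ∃ ψ : E →ₗ[ℝ] E, LinearMap.ker ψ = Submodule.span ℝ {g (vertex φ)} ∧
    ∃ c > 0, ∀ χ, vertex χ = vertex φ → S.slope (s ∘ vertex) χ =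
      c * (inner ℝ (ψ Z) (ψ (g (vertex (flip 𝓕 χ)))) / ‖ψ (g (vertex (flip 𝓕 χ)))‖)

namespace FlagSystem.IsViewFrom

variable [Finite ι]

theorem isAdmissible (h : S.IsViewFrom g vertex mate Z s) (P : IsConePolygon g face vertex mate)
    (hZ : IsInnerVector g Z) : S.IsAdmissible (s ∘ vertex) where
  mate_eq φ := by rw [h.mate_eq, Function.comp_apply, P.vertex_mate, Function.comp_apply]
  slope_sq_lt φ := by
    obtain ⟨π, hπ, h'⟩ := h.exists_projection
    rw [slope_sq_lt_iff, (h' φ).1, (h' φ).2, (h' _).1, h.opp_eq, _root_.sub_pos]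
    exact sq_real_inner_lt_of_linearIndependent (P.linearIndependent_map_pair hZ hπ φ)
  slope_add_pos φ := by
    obtain ⟨ψ, hψ, c, hc, hslope⟩ := h.exists_slope φ
    rw [h.mate_eq, hslope φ rfl, hslope _ (P.vertex_mate φ), ← mul_add]
    exact mul_pos hc (P.balance hZ φ hψ)

theorem sum_viewAngle [Fintype 𝓕] (h : S.IsViewFrom g vertex mate Z s)
    (P : IsConePolygon g face vertex mate) (hg : IsPointed g) (hZ : IsInnerVector g Z) :
    ∑ φ, S.viewAngle (s ∘ vertex) φ = 4 * Real.pi := by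
  obtain ⟨π, hπ, h'⟩ := h.exists_projection
  rw [← P.sum_angle hg hZ hπ]
  refine Finset.sum_congr rfl fun φ _ ↦ ?_
  rw [viewAngle, (h' φ).1, (h' φ).2, (h' _).1, h.opp_eq, ← mul_pow, Real.sqrt_sq (by positivity),
    angle]

theorem eq_of_le [Finite 𝓕] (h : S.IsViewFrom g vertex mate Z s)
    (h' : S.IsViewFrom g' vertex mate Z' s') (P : IsConePolygon g face vertex mate)
    (P' : IsConePolygon g' face vertex mate) (hg : IsPointed g) (hg' : IsPointed g')
    (hZ : IsInnerVector g Z) (hZ' : IsInnerVector g' Z') (hle : s ∘ vertex ≤ s' ∘ vertex) :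
    s ∘ vertex = s' ∘ vertex := by
  have := Fintype.ofFinite 𝓕
  refine hle.eq_of_not_lt fun hlt ↦
    ((h.isAdmissible P hZ).sum_viewAngle_lt (h'.isAdmissible P' hZ') hlt).ne ?_
  rw [h.sum_viewAngle P hg hZ, h'.sum_viewAngle P' hg' hZ']

end FlagSystem.IsViewFrom

end View

section FaceIsometric

variable {ι 𝓕 E : Type*} [NormedAddCommGroup E] [InnerProductSpace ℝ E] {g g' : ι → E}
  {face : 𝓕 → Set ι} {vertex : 𝓕 × Bool → ι} {mate : Equiv.Perm (𝓕 × Bool)}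

theorem FaceIsometric.isConePolygon [Finite ι] (H : FaceIsometric g g')
    (P : IsConePolygon g face vertex mate) : IsConePolygon g' face vertex mate where
  finrank_eq := H.finrank_eq ▸ P.finrank_eq
  injective := P.injective
  isConeFace F := (H.isConeFace_iff _).1 (P.isConeFace F)
  ne_univ := P.ne_univ
  mem := P.mem
  isExtremeRay φ := H.isExtremeRay (P.isExtremeRay φ)
  flip_notMem φ := H.lineIndices_eq (P.isExtremeRay φ) ▸ P.flip_notMem φ
  vertex_mate := P.vertex_mate
  mate_ne := P.mate_ne
  exists_superset K hK hne := fun ⟨b, hb, hb0⟩ ↦ P.exists_superset K ((H.isConeFace_iff K).2 hK)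
    hne ⟨b, hb, fun h ↦ hb0 (H.eq_zero_iff.1 h)⟩
  eq_or_eq := P.eq_or_eq

theorem FaceIsometric.inner_vertex_flip_eq (H : FaceIsometric g g')
    (P : IsConePolygon g face vertex mate) (φ : 𝓕 × Bool) :
    inner ℝ (g (vertex φ)) (g (vertex (flip 𝓕 φ))) =
      inner ℝ (g' (vertex φ)) (g' (vertex (flip 𝓕 φ))) :=
  H.inner_eq _ (P.isConeFace φ.1) (P.ne_univ φ.1) _ (P.mem φ) _ (P.mem (flip 𝓕 φ))

theorem FaceIsometric.eq_of_eq_on_vertices [Finite ι] [FiniteDimensional ℝ E]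
    (H : FaceIsometric g g') (P : IsConePolygon g face vertex mate) {Λ Λ' : Module.Dual ℝ E}
    (h : ∀ φ, Λ (g (vertex φ)) = Λ' (g' (vertex φ))) {a : ι} (ha : IsBoundary g a) :
    Λ (g a) = Λ' (g' a) := by
  by_cases h0 : g a = 0
  · rw [h0, H.eq_zero_iff.1 h0, map_zero, map_zero]
  obtain ⟨K, hK, hne, haK⟩ := ha
  obtain ⟨F, hF⟩ := P.exists_superset K hK hne ⟨a, haK, h0⟩
  obtain ⟨L, hL⟩ := H.exists_linearIsometry (P.isConeFace F) (P.ne_univ F)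
  obtain ⟨x, y, -, -, hxy⟩ := P.exists_nonneg_combination (F, true) (hF haK)
  rw [← hL a (hF haK), hxy]
  simp only [map_add, map_smul, hL _ (P.mem (F, true)), hL _ (P.mem (flip 𝓕 (F, true))), h]

end FaceIsometric

end Planar

/-! ### Comparison of cones -/

section RankThree

variable {ι 𝓕 E : Type*} [NormedAddCommGroup E] [InnerProductSpace ℝ E] {g g' : ι → E}
  {face : 𝓕 → Set ι} {vertex : 𝓕 × Bool → ι} {mate : Equiv.Perm (𝓕 × Bool)} {Z Z' : E}
  {h h' : Module.Dual ℝ E} {a : ι}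

/-- The flag system of the spherical polygon cut out by a cone of rank three, to be seen from an
inner vector of length `w⁻¹ᐟ²`. -/
noncomputable def IsConePolygon.sphericalFlags (P : IsConePolygon g face vertex mate) {w : ℝ}
    (hw : 0 < w) : FlagSystem (𝓕 × Bool) where
  opp := flip 𝓕
  mate := mate
  a := 0
  b := -w
  x φ := ‖g (vertex φ)‖ ^ 2
  y φ := inner ℝ (g (vertex φ)) (g (vertex (flip 𝓕 φ)))
  opp_opp := by rintro ⟨F, _ | _⟩ <;> rfl
  x_mate φ := by rw [P.vertex_mate]
  y_opp := by rintro ⟨F, _ | _⟩ <;> exact real_inner_comm _ _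
  edge_pos φ := by
    have := sub_pos.2 (sq_real_inner_lt_of_linearIndependent (P.linearIndependent_pair φ))
    rw [neg_neg, zero_pow two_ne_zero, zero_mul, add_zero]
    positivity
  sub_pos φ := by
    have := norm_pos_iff.2 (P.isExtremeRay φ).1
    rw [neg_mul, sub_neg_eq_add]
    positivity
  b_nonpos := neg_nonpos.2 hw.le

theorem IsConePolygon.isViewFrom_sphericalFlags (P : IsConePolygon g face vertex mate)
    (hZ : Z ≠ 0) {w : ℝ} (hw : 0 < w) (hwZ : w = (‖Z‖ ^ 2)⁻¹) :
    (P.sphericalFlags hw).IsViewFrom g vertex mate Z fun a ↦ -inner ℝ Z (g a) where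
  opp_eq := rfl
  mate_eq := rfl
  exists_projection := by
    refine ⟨_, ker_projAlong_dualOf hZ, fun φ ↦ ⟨?_, ?_⟩⟩
    · rw [← real_inner_self_eq_norm_sq, inner_projAlong_dualOf hZ, real_inner_self_eq_norm_sq,
        ← hwZ]
      simp only [FlagSystem.normSq, sphericalFlags, viewInner, Function.comp_apply]
      ring
    · rw [inner_projAlong_dualOf hZ, ← hwZ]
      simp only [FlagSystem.edgeInner, sphericalFlags, viewInner, Function.comp_apply]
      ring
  exists_slope φ := by
    have hv := norm_pos_iff.2 (P.isExtremeRay φ).1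
    refine ⟨_, ker_projAlong_dualOf (P.isExtremeRay φ).1, √w * ‖g (vertex φ)‖, by positivity,
      fun χ hχ ↦ ?_⟩
    have hpos := sub_pos.2 (sq_real_inner_lt_of_linearIndependent (P.linearIndependent_pair χ))
    simp only [FlagSystem.slope, FlagSystem.κ, sphericalFlags, Function.comp_apply, viewSlope, hχ]
    rw [hχ] at hpos
    set v := g (vertex φ)
    set u := g (vertex (flip 𝓕 χ))
    set ψ := projAlong (dualOf v) v
    have hv0 : v ≠ 0 := norm_pos_iff.1 hv
    have hnorm : ‖v‖ ^ 2 * ‖u‖ ^ 2 - inner ℝ v u ^ 2 = (‖v‖ * ‖ψ u‖) ^ 2 := by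
      rw [mul_pow, ← real_inner_self_eq_norm_sq (ψ u), inner_projAlong_dualOf hv0,
        real_inner_self_eq_norm_sq]
      field_simp
    have hu : ‖ψ u‖ ≠ 0 := fun h ↦ hpos.ne' (by rw [hnorm, h]; ring)
    simp only [ne_eq, OfNat.ofNat_ne_zero, not_false_eq_true, zero_pow, zero_mul, zero_add,
      add_zero, neg_neg]
    rw [hnorm, Real.sqrt_mul hw.le, Real.sqrt_sq (by positivity), inner_projAlong_dualOf hv0,
      real_inner_comm Z v]
    have hw' := Real.sq_sqrt hw.le
    field_simp
    rw [hw']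
    ring

theorem FaceIsometric.sphericalFlags_eq [Finite ι] (H : FaceIsometric g g')
    (P : IsConePolygon g face vertex mate) {w : ℝ} (hw : 0 < w) :
    P.sphericalFlags hw = (H.isConePolygon P).sphericalFlags hw := by
  simp only [IsConePolygon.sphericalFlags, H.norm_eq (P.isBoundary _), H.inner_vertex_flip_eq P]

theorem FaceIsometric.inner_eq_of_rank_eq_three [Finite ι] [FiniteDimensional ℝ E]
    (H : FaceIsometric g g') (hr : (range g).finrank ℝ = 3) (hZ : IsInnerVector g Z)
    (hZ' : IsInnerVector g' Z') (hnorm : ‖Z‖ = ‖Z'‖)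
    (hle : ∀ a, IsBoundary g a → inner ℝ Z (g a) ≤ inner ℝ Z' (g' a)) (ha : IsBoundary g a) :
    inner ℝ Z (g a) = inner ℝ Z' (g' a) := by
  obtain ⟨vertex, mate, P⟩ := H.pointed_left.exists_isConePolygon hr
  have hZ0 := hZ.ne_zero H.pointed_left (by lia)
  have hZ0' := hZ'.ne_zero H.pointed_right (by rw [← H.finrank_eq]; lia)
  have hw : 0 < (‖Z‖ ^ 2)⁻¹ := by positivity
  have hview' := (H.isConePolygon P).isViewFrom_sphericalFlags hZ0' hw (by rw [hnorm])
  rw [← H.sphericalFlags_eq P hw] at hview'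
  have hvertex := hview'.eq_of_le (P.isViewFrom_sphericalFlags hZ0 hw rfl) (H.isConePolygon P) P
    H.pointed_right H.pointed_left hZ' hZ fun φ ↦ neg_le_neg (hle _ (P.isBoundary φ))
  exact H.eq_of_eq_on_vertices P (Λ := innerₛₗ ℝ Z) (Λ' := innerₛₗ ℝ Z')
    (fun φ ↦ (neg_injective (congrFun hvertex φ)).symm) ha

/-- The linear functional agreeing with `‖x - O‖ ^ 2 - ‖x‖ ^ 2` on the hyperplane `h x = 1`. -/
noncomputable def powerForm (h : Module.Dual ℝ E) (O : E) : Module.Dual ℝ E :=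
  (-2 : ℝ) • innerₛₗ ℝ O + ‖O‖ ^ 2 • h

theorem powerForm_apply (h : Module.Dual ℝ E) (O x : E) :
    powerForm h O x = -2 * inner ℝ O x + ‖O‖ ^ 2 * h x := rfl

theorem powerForm_of_eq_one {x : E} (hx : h x = 1) (O : E) :
    powerForm h O x = ‖x - O‖ ^ 2 - ‖x‖ ^ 2 := by
  rw [powerForm_apply, hx, norm_sub_sq_real, real_inner_comm O x]
  ring

/-- The flag system of the polygon cut out of a cone of rank three by an affine plane. -/
noncomputable def IsConePolygon.euclideanFlags (P : IsConePolygon g face vertex mate) :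
    FlagSystem (𝓕 × Bool) where
  opp := flip 𝓕
  mate := mate
  a := 1 / 2
  b := 0
  x _ := 0
  y φ := -‖g (vertex φ) - g (vertex (flip 𝓕 φ))‖ ^ 2 / 2
  opp_opp := by rintro ⟨F, _ | _⟩ <;> rfl
  x_mate _ := rfl
  y_opp := by rintro ⟨F, _ | _⟩ <;> exact congrArg (fun x ↦ -x ^ 2 / 2) (norm_sub_rev _ _)
  edge_pos φ := by
    have := norm_pos_iff.2 (sub_ne_zero.2 ((P.linearIndependent_pair φ).injective.ne zero_ne_one))
    simp only [Matrix.cons_val_zero, Matrix.cons_val_one] at this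
    ring_nf
    positivity
  sub_pos _ := by norm_num
  b_nonpos := le_rfl

theorem IsConePolygon.isViewFrom_euclideanFlags (P : IsConePolygon g face vertex mate)
    (hh : ∀ a, g a ≠ 0 → h (g a) = 1) {O : E} (hO : h O = 1) :
    P.euclideanFlags.IsViewFrom g vertex mate O fun a ↦ ‖g a - O‖ ^ 2 where
  opp_eq := rfl
  mate_eq := rfl
  exists_projection := by
    have hproj φ : projAlong h O (g (vertex φ)) = g (vertex φ) - O := by
      rw [projAlong_apply, hh _ (P.isExtremeRay φ).1, one_smul]
    refine ⟨projAlong h O, ker_projAlong hO, fun φ ↦ ⟨?_, ?_⟩⟩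
    · rw [hproj]
      simp only [FlagSystem.normSq, euclideanFlags, viewInner, Function.comp_apply]
      ring
    · rw [hproj, hproj, real_inner_eq_norm_mul_self_add_norm_mul_self_sub_norm_sub_mul_self_div_two,
        sub_sub_sub_cancel_right]
      simp only [FlagSystem.edgeInner, euclideanFlags, viewInner, Function.comp_apply]
      ring
  exists_slope φ := by
    refine ⟨projAlong h (g (vertex φ)), ker_projAlong (hh _ (P.isExtremeRay φ).1), 1, one_pos,
      fun χ hχ ↦ ?_⟩
    have hpos := P.euclideanFlags.κ_pos χ
    have hκ : P.euclideanFlags.κ χ = ‖g (vertex (flip 𝓕 χ)) - g (vertex φ)‖ / 2 := by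
      rw [FlagSystem.κ, ← Real.sqrt_sq (by positivity : 0 ≤ ‖_ - g (vertex φ)‖ / 2), ← hχ,
        norm_sub_rev]
      simp only [euclideanFlags]
      ring_nf
    rw [hκ] at hpos
    have hne : ‖g (vertex (flip 𝓕 χ)) - g (vertex φ)‖ ≠ 0 := by linarith
    rw [FlagSystem.slope, hκ, projAlong_apply, projAlong_apply, hO, hh _ (P.isExtremeRay _).1,
      one_smul, real_inner_eq_norm_mul_self_add_norm_mul_self_sub_norm_sub_mul_self_div_two,
      sub_sub_sub_cancel_right, norm_sub_rev O, norm_sub_rev O]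
    simp only [euclideanFlags, viewSlope, Function.comp_apply, hχ,
      norm_sub_rev (g (vertex φ)) (g (vertex (flip 𝓕 χ)))]
    field_simp
    ring

theorem FaceIsometric.euclideanFlags_eq [Finite ι] (H : FaceIsometric g g')
    (P : IsConePolygon g face vertex mate) :
    P.euclideanFlags = (H.isConePolygon P).euclideanFlags := by
  simp only [IsConePolygon.euclideanFlags, norm_sub_sq_real, H.norm_eq (P.isBoundary _),
    H.inner_vertex_flip_eq P]

theorem FaceIsometric.powerForm_eq_of_rank_eq_three [Finite ι] [FiniteDimensional ℝ E]
    (H : FaceIsometric g g') (hr : (range g).finrank ℝ = 3) (hh : ∀ a, g a ≠ 0 → h (g a) = 1)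
    (hh' : ∀ a, g' a ≠ 0 → h' (g' a) = 1) {O O' : E} (hO : IsInnerVector g O)
    (hO' : IsInnerVector g' O') (hO1 : h O = 1) (hO1' : h' O' = 1)
    (hle : ∀ a, IsBoundary g a → powerForm h O (g a) ≤ powerForm h' O' (g' a))
    (ha : IsBoundary g a) : powerForm h O (g a) = powerForm h' O' (g' a) := by
  obtain ⟨vertex, mate, P⟩ := H.pointed_left.exists_isConePolygon hr
  have P' := H.isConePolygon P
  have hview' := P'.isViewFrom_euclideanFlags hh' hO1'
  rw [← H.euclideanFlags_eq P] at hview'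
  have hpow φ : powerForm h O (g (vertex φ)) = ‖g (vertex φ) - O‖ ^ 2 - ‖g (vertex φ)‖ ^ 2 :=
    powerForm_of_eq_one (hh _ (P.isExtremeRay φ).1) O
  have hpow' φ : powerForm h' O' (g' (vertex φ)) =
      ‖g' (vertex φ) - O'‖ ^ 2 - ‖g (vertex φ)‖ ^ 2 := by
    rw [H.norm_eq (P.isBoundary φ), powerForm_of_eq_one (hh' _ (P'.isExtremeRay φ).1)]
  have hvertex := (P.isViewFrom_euclideanFlags hh hO1).eq_of_le hview' P P' H.pointed_left
    H.pointed_right hO hO' fun φ ↦ by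
      have := hle _ (P.isBoundary φ)
      rw [hpow, hpow'] at this
      exact (sub_le_sub_iff_right _).1 this
  refine H.eq_of_eq_on_vertices P (fun φ ↦ ?_) ha
  rw [hpow, hpow']
  exact congrArg (· - _) (congrFun hvertex φ)

end RankThree

section Contact

variable {ι E : Type*} [NormedAddCommGroup E] [InnerProductSpace ℝ E]
  {g : ι → E} {Z : E} {b : ι}

theorem IsInnerVector.ne_smul_of_isBoundary (hZ : IsInnerVector g Z) (hb : IsBoundary g b)
    (c : ℝ) : Z ≠ c • g b := by
  rintro rfl
  obtain ⟨F, hF, hne, hbF⟩ := hb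
  obtain ⟨n, hn, -, hpos⟩ := hZ.exists_normal_pos hF hne
  simp [hn b hbF] at hpos

variable [Finite ι]

theorem exists_first_contact {N : Set ι} {δ : ι → ℝ → ℝ} (hδ : ∀ a, Continuous (δ a))
    (h0 : ∀ a ∈ N, 0 < δ a 0) (hb : b ∈ N) (h1 : δ b 1 < 0) :
    ∃ t : ℝ, 0 ≤ t ∧ t < 1 ∧ (∀ a ∈ N, 0 ≤ δ a t) ∧ ∃ a ∈ N, δ a t = 0 := by
  have hmem (a : ι) : a ∈ N.toFinite.toFinset ↔ a ∈ N := N.toFinite.mem_toFinset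
  have hne : N.toFinite.toFinset.Nonempty := ⟨b, (hmem b).2 hb⟩
  set f : ℝ → ℝ := fun t ↦ N.toFinite.toFinset.inf' hne (fun a ↦ δ a t)
  have hf : Continuous f := Continuous.finset_inf'_apply hne fun a _ ↦ hδ a
  have hf0 : 0 ≤ f 0 := Finset.le_inf' _ _ fun a ha ↦ (h0 a ((hmem a).1 ha)).le
  have hf1 : f 1 < 0 := (Finset.inf'_le _ ((hmem b).2 hb)).trans_lt h1
  obtain ⟨t, ht, hft⟩ := intermediate_value_Icc' zero_le_one hf.continuousOn ⟨hf1.le, hf0⟩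
  refine ⟨t, ht.1, ht.2.lt_of_ne fun h ↦ (h ▸ hf1).ne hft, fun a ha ↦ ?_, ?_⟩
  · exact hft.ge.trans (Finset.inf'_le _ ((hmem a).2 ha))
  · obtain ⟨a, ha, h⟩ := Finset.exists_mem_eq_inf' hne (fun a ↦ δ a t)
    exact ⟨a, (hmem a).1 ha, h.symm.trans hft⟩

theorem IsInnerVector.pos_of_pos_on_boundary (hZ : IsInnerVector g Z) (hg : IsPointed g)
    (hr : 2 ≤ (range g).finrank ℝ) {m : Module.Dual ℝ E}
    (hm : ∀ a, IsBoundary g a → g a ≠ 0 → 0 < m (g a)) : 0 < m Z := by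
  obtain ⟨b, hb⟩ := hg.exists_isExtremeRay (by lia)
  refine hZ.2 m (hg.nonneg_of_nonneg_isBoundary hr fun a ha ↦ ?_)
    ⟨b, hm b (hb.isBoundary hr) hb.1⟩
  by_cases h0 : g a = 0
  · rw [h0, map_zero]
  · exact (hm a ha h0).le

end Contact

section Spherical

variable {ι E : Type*} [NormedAddCommGroup E] [InnerProductSpace ℝ E]
  {g g' : ι → E} {Z Z' : E} {a : ι}

/-- Two inner vectors of equal length for which one sees every boundary generator at an angle no
larger than the other does, see them all at equal angles. -/
def IsInnerRigid (g g' : ι → E) : Prop :=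
  ∀ ⦃Z Z' : E⦄, IsInnerVector g Z → IsInnerVector g' Z' → ‖Z‖ = ‖Z'‖ →
    (∀ a, IsBoundary g a → inner ℝ Z (g a) ≤ inner ℝ Z' (g' a)) →
    ∀ a, IsBoundary g a → inner ℝ Z (g a) = inner ℝ Z' (g' a)

variable [Finite ι]

/-- Moving `Z` towards a boundary generator while keeping its length makes the comparison fail at
the end, so there is a last moment at which it holds. -/
theorem FaceIsometric.exists_isInnerVector_contact (H : FaceIsometric g g')
    (hr : 2 ≤ (range g).finrank ℝ) (hZ : IsInnerVector g Z) (hZ' : IsInnerVector g' Z')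
    (hnorm : ‖Z‖ = ‖Z'‖)
    (hlt : ∀ a, IsBoundary g a → g a ≠ 0 → inner ℝ Z (g a) < inner ℝ Z' (g' a)) :
    ∃ Y, IsInnerVector g Y ∧ ‖Y‖ = ‖Z'‖ ∧
      (∀ a, IsBoundary g a → inner ℝ Y (g a) ≤ inner ℝ Z' (g' a)) ∧
      ∃ b, IsBoundary g b ∧ g b ≠ 0 ∧ inner ℝ Y (g b) = inner ℝ Z' (g' b) := by
  obtain ⟨b, hb⟩ := H.pointed_left.exists_isExtremeRay (by lia)
  have hbB := hb.isBoundary hr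
  have hbnorm := H.norm_eq hbB
  have hZ'pos : 0 < ‖Z'‖ :=
    norm_pos_iff.2 (hZ'.ne_zero H.pointed_right (by rw [← H.finrank_eq]; lia))
  have hbpos : 0 < ‖g b‖ := norm_pos_iff.2 hb.1
  have hb_lt : inner ℝ Z' (g' b) < ‖Z'‖ * ‖g' b‖ := by
    rw [inner_lt_norm_mul_iff_real]
    intro h
    refine hZ'.ne_smul_of_isBoundary (H.isBoundary_iff.1 hbB) (‖g' b‖⁻¹ * ‖Z'‖) ?_
    rw [mul_smul, ← h, smul_smul, inv_mul_cancel₀ (hbnorm ▸ hbpos.ne'), one_smul]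
  obtain ⟨t, ht0, ht1, hge, c, ⟨hcB, hc⟩, hct⟩ := exists_first_contact
    (N := {a | IsBoundary g a ∧ g a ≠ 0})
    (δ := fun a t ↦ inner ℝ Z' (g' a) * ‖(1 - t) • Z + t • g b‖ -
      inner ℝ ((1 - t) • Z + t • g b) (g a) * ‖Z'‖)
    (fun a ↦ by fun_prop)
    (fun a ⟨ha, ha0⟩ ↦ by
      simpa [hnorm] using mul_lt_mul_of_pos_right (hlt a ha ha0) hZ'pos)
    (b := b) ⟨hbB, hb.1⟩ (by
      simp only [sub_self, zero_smul, one_smul, zero_add, real_inner_self_eq_norm_sq]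
      rw [← hbnorm] at hb_lt
      linarith [mul_lt_mul_of_pos_right hb_lt hbpos])
  set Y := (1 - t) • Z + t • g b
  have hY : IsInnerVector g Y := hZ.smul_add_smul b (sub_pos.2 ht1) ht0
  have hYpos : 0 < ‖Y‖ := norm_pos_iff.2 (hY.ne_zero H.pointed_left (by lia))
  have hscale (a : ι) : inner ℝ ((‖Z'‖ / ‖Y‖) • Y) (g a) = inner ℝ Y (g a) * ‖Z'‖ / ‖Y‖ := by
    rw [real_inner_smul_left]; ring
  refine ⟨(‖Z'‖ / ‖Y‖) • Y, ?_, ?_, fun a ha ↦ ?_, c, hcB, hc, ?_⟩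
  · simpa using hY.smul_add_smul b (div_pos hZ'pos hYpos) le_rfl
  · rw [norm_smul, Real.norm_of_nonneg (by positivity), div_mul_cancel₀ _ hYpos.ne']
  · by_cases h0 : g a = 0
    · simp [h0, H.eq_zero_iff.1 h0]
    · rw [hscale, div_le_iff₀ hYpos]
      exact sub_nonneg.1 (hge a ⟨ha, h0⟩)
  · rw [hscale, div_eq_iff hYpos.ne']
    exact (sub_eq_zero.1 hct).symm

variable [FiniteDimensional ℝ E]

theorem FaceIsometric.inner_eq_of_contact (H : FaceIsometric g g')
    (hr : 3 ≤ (range g).finrank ℝ)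
    (hlink : ∀ b, IsExtremeRay g b → IsInnerRigid (projAlong (dualOf (g b)) (g b) ∘ g)
      (projAlong (dualOf (g' b)) (g' b) ∘ g'))
    (hZ : IsInnerVector g Z) (hZ' : IsInnerVector g' Z') (hnorm : ‖Z‖ = ‖Z'‖)
    (hle : ∀ a, IsBoundary g a → inner ℝ Z (g a) ≤ inner ℝ Z' (g' a))
    (hcontact : ∃ b, IsBoundary g b ∧ g b ≠ 0 ∧ inner ℝ Z (g b) = inner ℝ Z' (g' b))
    (ha : IsBoundary g a) : inner ℝ Z (g a) = inner ℝ Z' (g' a) := by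
  refine H.eq_of_contact (Λ := innerₛₗ ℝ Z) (Λ' := innerₛₗ ℝ Z') hr hle hcontact ?_ ha
  intro b hb hbZ F hF hne hbF c hcF
  replace hbZ : inner ℝ Z (g b) = inner ℝ Z' (g' b) := hbZ
  have hb' := H.isExtremeRay hb
  have hker := ker_projAlong_dualOf hb.1
  have hbnorm := H.norm_eq ⟨F, hF, hne, hbF⟩
  set π := projAlong (dualOf (g b)) (g b)
  set π' := projAlong (dualOf (g' b)) (g' b)
  have hinner : ∀ a, IsBoundary (π ∘ g) a →
      inner ℝ (π' Z') (π' (g' a)) - inner ℝ (π Z) (π (g a)) =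
        inner ℝ Z' (g' a) - inner ℝ Z (g a) := by
    intro a ha
    obtain ⟨G, hG, hGne, hbG, haG⟩ := (isBoundary_comp_iff hker).1 ha
    rw [inner_projAlong_dualOf hb.1, inner_projAlong_dualOf hb'.1, hbnorm,
      H.inner_eq G hG hGne b hbG a haG, real_inner_comm Z, real_inner_comm Z', hbZ]
    ring
  have hnorm' : ‖π Z‖ = ‖π' Z'‖ := by
    rw [← sq_eq_sq₀ (norm_nonneg _) (norm_nonneg _), ← real_inner_self_eq_norm_sq,
      ← real_inner_self_eq_norm_sq, inner_projAlong_dualOf hb.1, inner_projAlong_dualOf hb'.1,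
      real_inner_self_eq_norm_sq, real_inner_self_eq_norm_sq, hnorm, hbnorm,
      real_inner_comm Z, real_inner_comm Z', hbZ]
  have hc : IsBoundary (π ∘ g) c := (isBoundary_comp_iff hker).2 ⟨F, hF, hne, hbF, hcF⟩
  have heq : inner ℝ (π Z) (π (g c)) = inner ℝ (π' Z') (π' (g' c)) := by
    refine hlink b hb (hZ.map π) (hZ'.map π') hnorm' (fun a ha ↦ ?_) c hc
    obtain ⟨G, hG, hGne, -, haG⟩ := (isBoundary_comp_iff hker).1 ha
    rw [← sub_nonneg]
    exact (hinner a ha).symm ▸ sub_nonneg.2 (hle a ⟨G, hG, hGne, haG⟩)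
  have := hinner c hc
  rw [heq, sub_self] at this
  exact (sub_eq_zero.1 this.symm).symm

theorem FaceIsometric.isInnerRigid_of_link (H : FaceIsometric g g')
    (hr : 3 ≤ (range g).finrank ℝ)
    (hlink : ∀ b, IsExtremeRay g b → IsInnerRigid (projAlong (dualOf (g b)) (g b) ∘ g)
      (projAlong (dualOf (g' b)) (g' b) ∘ g')) : IsInnerRigid g g' := by
  intro Z Z' hZ hZ' hnorm hle a ha
  by_cases hcontact : ∃ b, IsBoundary g b ∧ g b ≠ 0 ∧ inner ℝ Z (g b) = inner ℝ Z' (g' b)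
  · exact H.inner_eq_of_contact hr hlink hZ hZ' hnorm hle hcontact ha
  push Not at hcontact
  have hlt : ∀ a, IsBoundary g a → g a ≠ 0 → inner ℝ Z (g a) < inner ℝ Z' (g' a) :=
    fun a ha h0 ↦ (hle a ha).lt_of_ne (hcontact a ha h0)
  obtain ⟨Y, hY, hYnorm, hYle, hYcontact⟩ :=
    H.exists_isInnerVector_contact (by lia) hZ hZ' hnorm hlt
  have hpos : ∀ a, IsBoundary g a → g a ≠ 0 → 0 < innerₛₗ ℝ (Y - Z) (g a) := by
    intro a ha h0
    rw [innerₛₗ_apply_apply, inner_sub_left,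
      H.inner_eq_of_contact hr hlink hY hZ' hYnorm hYle hYcontact ha, sub_pos]
    exact hlt a ha h0
  have hsum : innerₛₗ ℝ (Y - Z) Z + innerₛₗ ℝ (Y - Z) Y = 0 := by
    simp only [innerₛₗ_apply_apply, inner_sub_left, real_inner_self_eq_norm_sq, hYnorm, hnorm,
      real_inner_comm Z Y]
    ring
  exact absurd hsum (add_pos (hZ.pos_of_pos_on_boundary H.pointed_left (by lia) hpos)
    (hY.pos_of_pos_on_boundary H.pointed_left (by lia) hpos)).ne'

theorem FaceIsometric.isInnerRigid (H : FaceIsometric g g') (hr : 3 ≤ (range g).finrank ℝ) :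
    IsInnerRigid g g' := by
  obtain ⟨k, hk⟩ := Nat.exists_eq_add_of_le' hr
  induction k generalizing g g' with
  | zero =>
    intro Z Z' hZ hZ' hnorm hle a ha
    exact H.inner_eq_of_rank_eq_three hk hZ hZ' hnorm hle ha
  | succ k ih =>
    refine H.isInnerRigid_of_link hr fun b hb ↦ ?_
    have := finrank_range_comp_add_one (ker_projAlong_dualOf hb.1) hb.1
    exact ih (H.link hb) (by lia) (by lia)

end Spherical

section Euclidean

variable {ι E : Type*} [NormedAddCommGroup E] [InnerProductSpace ℝ E]
  {g g' : ι → E} {h h' : Module.Dual ℝ E} {O O' : E} {a b : ι}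

theorem inner_projAlong_eq_powerForm {v : E} (hO : h O = 1) (hv : h v = 1) (x : E) :
    inner ℝ (projAlong h v O) (projAlong h v x) =
      -(1 / 2) * powerForm h O x + h x * (1 / 2 * powerForm h O v) - inner ℝ v x +
        h x * ‖v‖ ^ 2 := by
  rw [projAlong_apply, projAlong_apply, hO, one_smul, powerForm_apply, powerForm_apply, hv,
    inner_sub_left, inner_sub_right, inner_sub_right, real_inner_smul_right,
    real_inner_smul_right, real_inner_self_eq_norm_sq]
  ring

theorem FaceIsometric.height_eq (H : FaceIsometric g g') (hh : ∀ a, g a ≠ 0 → h (g a) = 1)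
    (hh' : ∀ a, g' a ≠ 0 → h' (g' a) = 1) (a : ι) : h (g a) = h' (g' a) := by
  by_cases h0 : g a = 0
  · rw [h0, H.eq_zero_iff.1 h0, map_zero, map_zero]
  · rw [hh a h0, hh' a fun h ↦ h0 (H.eq_zero_iff.2 h)]

variable [Finite ι]

theorem FaceIsometric.exists_isInnerVector_powerForm_contact (H : FaceIsometric g g')
    (hr : 2 ≤ (range g).finrank ℝ) (hh : ∀ a, g a ≠ 0 → h (g a) = 1)
    (hh' : ∀ a, g' a ≠ 0 → h' (g' a) = 1) (hO : IsInnerVector g O) (hO' : IsInnerVector g' O')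
    (hO1' : h' O' = 1)
    (hlt : ∀ a, IsBoundary g a → g a ≠ 0 → powerForm h O (g a) < powerForm h' O' (g' a)) :
    ∃ Y, IsInnerVector g' Y ∧ h' Y = 1 ∧
      (∀ a, IsBoundary g a → powerForm h O (g a) ≤ powerForm h' Y (g' a)) ∧
      ∃ b, IsBoundary g b ∧ g b ≠ 0 ∧ powerForm h O (g b) = powerForm h' Y (g' b) := by
  obtain ⟨b, hb⟩ := H.pointed_left.exists_isExtremeRay (by lia)
  have hb1' := hh' b (H.isExtremeRay hb).1
  have hbB := hb.isBoundary hr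
  obtain ⟨t, ht0, ht1, hge, c, ⟨hcB, hc⟩, hct⟩ := exists_first_contact
    (N := {a | IsBoundary g a ∧ g a ≠ 0})
    (δ := fun a t ↦ powerForm h' ((1 - t) • O' + t • g' b) (g' a) - powerForm h O (g a))
    (fun a ↦ by simp only [powerForm_apply]; fun_prop)
    (fun a ⟨ha, ha0⟩ ↦ by simpa using hlt a ha ha0)
    (b := b) ⟨hbB, hb.1⟩ (by
      have hne : g b - O ≠ 0 :=
        sub_ne_zero.2 (by simpa using (hO.ne_smul_of_isBoundary hbB 1).symm)
      have := pow_pos (norm_pos_iff.2 hne) 2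
      simp only [sub_self, zero_smul, one_smul, zero_add, powerForm_of_eq_one (hh b hb.1),
        powerForm_of_eq_one hb1', norm_zero, H.norm_eq hbB]
      linarith)
  refine ⟨_, hO'.smul_add_smul b (sub_pos.2 ht1) ht0, ?_, fun a ha ↦ ?_, c, hcB, hc,
    (sub_eq_zero.1 hct).symm⟩
  · simp [hO1', hb1']
  · by_cases h0 : g a = 0
    · simp [h0, H.eq_zero_iff.1 h0]
    · exact sub_nonneg.1 (hge a ⟨ha, h0⟩)

variable [FiniteDimensional ℝ E]

theorem FaceIsometric.powerForm_eq_of_contact (H : FaceIsometric g g')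
    (hr : 4 ≤ (range g).finrank ℝ) (hh : ∀ a, g a ≠ 0 → h (g a) = 1)
    (hh' : ∀ a, g' a ≠ 0 → h' (g' a) = 1) (hO : IsInnerVector g O) (hO' : IsInnerVector g' O')
    (hO1 : h O = 1) (hO1' : h' O' = 1)
    (hle : ∀ a, IsBoundary g a → powerForm h O (g a) ≤ powerForm h' O' (g' a))
    (hcontact : ∃ b, IsBoundary g b ∧ g b ≠ 0 ∧ powerForm h O (g b) = powerForm h' O' (g' b))
    (ha : IsBoundary g a) : powerForm h O (g a) = powerForm h' O' (g' a) := by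
  refine H.eq_of_contact (by lia) hle hcontact ?_ ha
  intro b hb hbO F hF hne hbF c hcF
  have hb' := H.isExtremeRay hb
  have hker := ker_projAlong (hh b hb.1)
  have hbnorm := H.norm_eq ⟨F, hF, hne, hbF⟩
  have hlink := H.vertexFigure hb hh hh'
  have hrank := finrank_range_comp_add_one hker hb.1
  have hinner : ∀ a, IsBoundary (projAlong h (g b) ∘ g) a →
      inner ℝ (projAlong h (g b) O) (projAlong h (g b) (g a)) -
        inner ℝ (projAlong h' (g' b) O') (projAlong h' (g' b) (g' a)) =
          1 / 2 * (powerForm h' O' (g' a) - powerForm h O (g a)) := by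
    intro a ha
    obtain ⟨G, hG, hGne, hbG, haG⟩ := (isBoundary_comp_iff hker).1 ha
    rw [inner_projAlong_eq_powerForm hO1 (hh b hb.1),
      inner_projAlong_eq_powerForm hO1' (hh' b hb'.1), hbnorm, H.inner_eq G hG hGne b hbG a haG,
      hbO, H.height_eq hh hh']
    ring
  have hnorm : ‖projAlong h' (g' b) O'‖ = ‖projAlong h (g b) O‖ := by
    rw [powerForm_of_eq_one (hh b hb.1), powerForm_of_eq_one (hh' b hb'.1), hbnorm] at hbO
    rw [projAlong_apply, projAlong_apply, hO1, hO1', one_smul, one_smul, norm_sub_rev O',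
      norm_sub_rev O, ← sq_eq_sq₀ (norm_nonneg _) (norm_nonneg _)]
    exact (sub_left_injective hbO).symm
  have hc : IsBoundary (projAlong h (g b) ∘ g) c :=
    (isBoundary_comp_iff hker).2 ⟨F, hF, hne, hbF, hcF⟩
  have heq := hlink.symm.isInnerRigid (by rw [← hlink.finrank_eq]; lia) (hO'.map _) (hO.map _)
    hnorm (fun a ha ↦ ?_) c (hlink.isBoundary_iff.1 hc)
  · have := hinner c hc
    simp only [Function.comp_apply] at heq
    linarith
  · have ha := hlink.isBoundary_iff.2 ha
    obtain ⟨G, hG, hGne, -, haG⟩ := (isBoundary_comp_iff hker).1 ha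
    have := hinner a ha
    have := hle a ⟨G, hG, hGne, haG⟩
    simp only [Function.comp_apply]
    linarith

theorem FaceIsometric.powerForm_eq_of_powerForm_le (H : FaceIsometric g g')
    (hr : 3 ≤ (range g).finrank ℝ) (hh : ∀ a, g a ≠ 0 → h (g a) = 1)
    (hh' : ∀ a, g' a ≠ 0 → h' (g' a) = 1) (hO : IsInnerVector g O) (hO' : IsInnerVector g' O')
    (hO1 : h O = 1) (hO1' : h' O' = 1)
    (hle : ∀ a, IsBoundary g a → powerForm h O (g a) ≤ powerForm h' O' (g' a))
    (ha : IsBoundary g a) : powerForm h O (g a) = powerForm h' O' (g' a) := by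
  obtain hr | hr := hr.eq_or_lt
  · exact H.powerForm_eq_of_rank_eq_three hr.symm hh hh' hO hO' hO1 hO1' hle ha
  by_cases hcontact :
      ∃ b, IsBoundary g b ∧ g b ≠ 0 ∧ powerForm h O (g b) = powerForm h' O' (g' b)
  · exact H.powerForm_eq_of_contact hr hh hh' hO hO' hO1 hO1' hle hcontact ha
  push Not at hcontact
  have hlt : ∀ a, IsBoundary g a → g a ≠ 0 → powerForm h O (g a) < powerForm h' O' (g' a) :=
    fun a ha h0 ↦ (hle a ha).lt_of_ne (hcontact a ha h0)
  obtain ⟨Y, hY, hY1, hYle, hYcontact⟩ :=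
    H.exists_isInnerVector_powerForm_contact (by lia) hh hh' hO hO' hO1' hlt
  have hpos : ∀ a, IsBoundary g' a → g' a ≠ 0 →
      0 < (powerForm h' O' - powerForm h' Y) (g' a) := by
    intro a ha h0
    rw [← H.isBoundary_iff] at ha
    rw [LinearMap.sub_apply, sub_pos,
      ← H.powerForm_eq_of_contact hr hh hh' hO hY hO1 hY1 hYle hYcontact ha]
    exact hlt a ha fun h ↦ h0 (H.eq_zero_iff.1 h)
  have := hO'.pos_of_pos_on_boundary H.pointed_right (by rw [← H.finrank_eq]; lia) hpos
  rw [LinearMap.sub_apply, powerForm_of_eq_one hO1', powerForm_of_eq_one hO1', sub_self,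
    norm_zero] at this
  linarith [sq_nonneg ‖O' - Y‖]

end Euclidean

/-! ### Inversion at a vertex -/

section Faces

variable {ι E : Type*} [AddCommGroup E] [Module ℝ E] {p : ι → E} {F : Set ι} {a b : ι}

/-- `F` is the set of indices of the points of the configuration `p` on a face of its convex hull:
some functional is minimal on `p` exactly at the points indexed by `F`. -/
def IsFace (p : ι → E) (F : Set ι) : Prop :=
  ∃ (n : Module.Dual ℝ E) (c : ℝ), (∀ a ∈ F, n (p a) = c) ∧ ∀ a ∉ F, c < n (p a)

/-- The points indexed by `a` and `b` lie on a common proper face. -/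
def Cofacial (p : ι → E) (a b : ι) : Prop :=
  ∃ F, IsFace p F ∧ F ≠ univ ∧ a ∈ F ∧ b ∈ F

theorem injective_of_isFace_singleton (hp : ∀ a, IsFace p {a}) : Function.Injective p := by
  intro a b hab
  obtain ⟨n, c, hc, hlt⟩ := hp a
  by_contra hne
  exact (hlt b (Ne.symm hne)).ne' (by rw [← hab, hc a rfl])

theorem Cofacial.symm (h : Cofacial p a b) : Cofacial p b a :=
  let ⟨F, hF, hne, ha, hb⟩ := h
  ⟨F, hF, hne, hb, ha⟩

theorem isFace_univ (p : ι → E) : IsFace p univ :=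
  ⟨0, 0, by simp, by simp⟩

theorem IsFace.isFace_restrict_iff [Finite ι] (hF : IsFace p F) (T : Set F) :
    IsFace (fun x : F ↦ p x) T ↔ IsFace p (Subtype.val '' T) := by
  refine ⟨?_, fun ⟨n, c, hc, hlt⟩ ↦ ⟨n, c, fun a ha ↦ hc a ⟨a, ha, rfl⟩, fun a ha ↦
    hlt a fun ⟨b, hb, hba⟩ ↦ ha (Subtype.val_injective hba ▸ hb)⟩⟩
  rintro ⟨n, c, hc, hlt⟩
  obtain ⟨m, e, he, hlt'⟩ := hF
  obtain ⟨M, hM⟩ := (finite_range fun a ↦ (c - n (p a)) / (m (p a) - e)).bddAbove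
  refine ⟨n + (M + 1) • m, c + (M + 1) * e, ?_, fun a ha ↦ ?_⟩
  · rintro _ ⟨a, ha, rfl⟩
    rw [LinearMap.add_apply, LinearMap.smul_apply, smul_eq_mul, hc a ha, he a a.2]
  · rw [LinearMap.add_apply, LinearMap.smul_apply, smul_eq_mul]
    by_cases haF : a ∈ F
    · rw [he a haF]
      exact add_lt_add_left (hlt ⟨a, haF⟩ fun h ↦ ha ⟨_, h, rfl⟩) _
    · have hpos := sub_pos.2 (hlt' a haF)
      have := (div_le_iff₀ hpos).1 (hM (mem_range_self a))
      linarith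

end Faces

section Configurations

variable {ι E : Type*} [NormedAddCommGroup E] [InnerProductSpace ℝ E] {p : ι → E} {F : Set ι}
  {c : E} {ρ : ℝ} {a b i j : ι}

/-- `p` lists the vertices of a polytope inscribed in the sphere of radius `ρ` about a point `c`
of the affine span of `p`. -/
structure IsInscribed (p : ι → E) (c : E) (ρ : ℝ) : Prop where
  isFace_singleton : ∀ a, IsFace p {a}
  norm_sub_center : ∀ a, ‖p a - c‖ = ρ
  center_sub_mem : ∀ a, c - p a ∈ vectorSpan ℝ (range p)

theorem IsInscribed.injective (hp : IsInscribed p c ρ) : Function.Injective p :=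
  injective_of_isFace_singleton hp.isFace_singleton

theorem IsInscribed.norm_sub_pos (hp : IsInscribed p c ρ) (h : a ≠ b) : 0 < ‖p a - p b‖ :=
  norm_pos_iff.2 (sub_ne_zero.2 (hp.injective.ne h))

theorem IsInscribed.two_mul_inner_center_sub (hp : IsInscribed p c ρ) (j a : ι) :
    2 * inner ℝ (c - p j) (p a - p j) = ‖p a - p j‖ ^ 2 := by
  have h : ‖(p a - p j) - (c - p j)‖ ^ 2 = ‖c - p j‖ ^ 2 := by
    rw [sub_sub_sub_cancel_right, norm_sub_rev c, hp.norm_sub_center, hp.norm_sub_center]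
  rw [norm_sub_sq_real, real_inner_comm] at h
  linarith

/-- The generators of the cone at the vertex `p j`, scaled so that they end on the image of the
circumscribed sphere under the inversion at `p j`, which is a hyperplane. -/
noncomputable def inversionCone (p : ι → E) (j a : ι) : E :=
  EuclideanGeometry.inversion (p j) 1 (p a) - p j

theorem inversionCone_apply (p : ι → E) (j a : ι) :
    inversionCone p j a = (‖p a - p j‖ ^ 2)⁻¹ • (p a - p j) := by
  rw [inversionCone, ← vsub_eq_sub, EuclideanGeometry.inversion_vsub_center, dist_eq_norm,
    one_div, inv_pow, vsub_eq_sub]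

theorem inversionCone_self (p : ι → E) (j : ι) : inversionCone p j j = 0 := by
  simp [inversionCone]

theorem norm_sq_smul_inversionCone (p : ι → E) (j a : ι) :
    ‖p a - p j‖ ^ 2 • inversionCone p j a = p a - p j := by
  rw [inversionCone_apply]
  by_cases h : p a - p j = 0
  · simp [h]
  · rw [smul_inv_smul₀ (pow_ne_zero 2 (norm_ne_zero_iff.2 h))]

theorem norm_inversionCone (p : ι → E) (j a : ι) : ‖inversionCone p j a‖ = ‖p a - p j‖⁻¹ := by
  rw [inversionCone, ← dist_eq_norm, EuclideanGeometry.dist_inversion_center, dist_eq_norm,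
    one_pow, one_div]

theorem norm_inversionCone_sub (ha : p a ≠ p j) (hb : p b ≠ p j) :
    ‖inversionCone p j a - inversionCone p j b‖ =
      ‖p a - p b‖ / (‖p a - p j‖ * ‖p b - p j‖) := by
  rw [inversionCone, inversionCone, sub_sub_sub_cancel_right, ← dist_eq_norm,
    EuclideanGeometry.dist_inversion_inversion ha hb]
  simp only [dist_eq_norm]
  ring

theorem inner_inversionCone (p : ι → E) (j a b : ι) :
    inner ℝ (inversionCone p j a) (inversionCone p j b) =
      (‖p a - p j‖ ^ 2)⁻¹ * (‖p b - p j‖ ^ 2)⁻¹ *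
        ((‖p a - p j‖ ^ 2 + ‖p b - p j‖ ^ 2 - ‖p a - p b‖ ^ 2) / 2) := by
  rw [inversionCone_apply, inversionCone_apply, real_inner_smul_left, real_inner_smul_right,
    ← sub_sub_sub_cancel_right (p a) (p b) (p j), norm_sub_sq_real (p a - p j)]
  ring

theorem inversionCone_eq_zero_iff (hp : Function.Injective p) :
    inversionCone p j a = 0 ↔ a = j := by
  rw [inversionCone, sub_eq_zero, ← dist_eq_zero, EuclideanGeometry.dist_inversion_center,
    div_eq_zero_iff, dist_eq_zero, hp.eq_iff]
  simp

theorem isConeFace_inversionCone_iff (hp : Function.Injective p) :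
    IsConeFace (inversionCone p j) F ↔ IsFace p F ∧ j ∈ F := by
  have hscale (n : Module.Dual ℝ E) (a : ι) :
      n (p a) - n (p j) = ‖p a - p j‖ ^ 2 * n (inversionCone p j a) := by
    rw [← map_sub, ← smul_eq_mul, ← map_smul, norm_sq_smul_inversionCone]
  have hpos {a : ι} (hj : j ∈ F) (ha : a ∉ F) : 0 < ‖p a - p j‖ ^ 2 :=
    pow_pos (norm_pos_iff.2 (sub_ne_zero.2 (hp.ne (ne_of_mem_of_not_mem hj ha).symm))) 2
  constructor
  · rintro ⟨n, hzero, hlt⟩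
    have hj : j ∈ F := by
      by_contra h
      exact (hlt j h).ne' (by rw [inversionCone_self, map_zero])
    refine ⟨⟨n, n (p j), fun a ha ↦ ?_, fun a ha ↦ ?_⟩, hj⟩
    · rw [← sub_eq_zero, hscale, hzero a ha, mul_zero]
    · rw [← sub_pos, hscale]
      exact mul_pos (hpos hj ha) (hlt a ha)
  · rintro ⟨⟨n, c, hc, hlt⟩, hj⟩
    refine ⟨n, fun a ha ↦ ?_, fun a ha ↦ ?_⟩
    · rw [inversionCone_apply, map_smul, map_sub, hc a ha, hc j hj, sub_self, smul_zero]
    · refine pos_of_mul_pos_right ?_ (hpos hj ha).le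
      rw [← hscale, hc j hj]
      exact sub_pos.2 (hlt a ha)

theorem isPointed_inversionCone (hp : ∀ a, IsFace p {a}) (j : ι) :
    IsPointed (inversionCone p j) := by
  have hinj := injective_of_isFace_singleton hp
  simp only [IsPointed, inversionCone_eq_zero_iff hinj]
  exact (isConeFace_inversionCone_iff hinj).2 ⟨hp j, rfl⟩

theorem isBoundary_inversionCone_iff (hp : Function.Injective p) :
    IsBoundary (inversionCone p j) a ↔ Cofacial p j a := by
  simp only [IsBoundary, Cofacial, isConeFace_inversionCone_iff hp]
  grind

theorem span_range_inversionCone (p : ι → E) (j : ι) :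
    Submodule.span ℝ (range (inversionCone p j)) = vectorSpan ℝ (range p) := by
  rw [vectorSpan_range_eq_span_range_vsub_right ℝ p j]
  apply le_antisymm <;> rw [Submodule.span_le, range_subset_iff] <;> intro a
  · rw [inversionCone_apply]
    exact Submodule.smul_mem _ _ (Submodule.subset_span (mem_range_self a))
  · rw [vsub_eq_sub, ← norm_sq_smul_inversionCone]
    exact Submodule.smul_mem _ _ (Submodule.subset_span (mem_range_self a))

theorem finrank_range_inversionCone (p : ι → E) (j : ι) :
    (range (inversionCone p j)).finrank ℝ = Module.finrank ℝ (vectorSpan ℝ (range p)) := by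
  rw [Set.finrank, span_range_inversionCone]

/-- The functional whose level set at height `1`, translated by `v`, is the image of the sphere
through `v` about `c` under the inversion at `v`. -/
noncomputable def sphereHeight (c v : E) : Module.Dual ℝ E := (2 : ℝ) • innerₛₗ ℝ (c - v)

theorem IsInscribed.sphereHeight_inversionCone (hp : IsInscribed p c ρ) (i j b : ι) :
    sphereHeight c (p i) (inversionCone p j b) =
      (‖p b - p j‖ ^ 2)⁻¹ * (‖p b - p i‖ ^ 2 - ‖p j - p i‖ ^ 2) := by
  rw [← hp.two_mul_inner_center_sub i b, ← hp.two_mul_inner_center_sub i j, inversionCone_apply,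
    ← sub_sub_sub_cancel_right (p b) (p j) (p i), map_smul]
  simp only [sphereHeight, LinearMap.smul_apply, innerₛₗ_apply_apply, inner_sub_right (c - p i),
    smul_eq_mul]
  ring

theorem IsInscribed.sphereHeight_eq_one (hp : IsInscribed p c ρ) (h : a ≠ j) :
    sphereHeight c (p j) (inversionCone p j a) = 1 := by
  rw [hp.sphereHeight_inversionCone, sub_self, norm_zero, zero_pow two_ne_zero, sub_zero,
    inv_mul_cancel₀ (pow_ne_zero 2 (hp.norm_sub_pos h).ne')]

theorem IsInscribed.sphereHeight_neg (hp : IsInscribed p c ρ) (h : i ≠ j) :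
    sphereHeight c (p i) (inversionCone p j i) < 0 := by
  rw [hp.sphereHeight_inversionCone, sub_self, norm_zero, zero_pow two_ne_zero, zero_sub]
  exact mul_neg_of_pos_of_neg (inv_pos.2 (pow_pos (hp.norm_sub_pos h) 2))
    (neg_neg_of_pos (pow_pos (hp.norm_sub_pos h.symm) 2))

end Configurations

section MaximalPair

variable {ι E : Type*} [NormedAddCommGroup E] {p q : ι → E} {k : ℝ} {a b i j : ι}

/-- `(i, j)` maximizes the ratio of the distances in `p` and `q`, this maximal ratio is `k`, and
`p i` and `p j` are at minimal distance among the pairs with that ratio. -/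
structure IsMaximalPair (p q : ι → E) (k : ℝ) (i j : ι) : Prop where
  ne : i ≠ j
  norm_sub_eq : ‖p i - p j‖ = k * ‖q i - q j‖
  norm_sub_le : ∀ a b, ‖p a - p b‖ ≤ k * ‖q a - q b‖
  minimal : ∀ a b, a ≠ b → ‖p a - p b‖ = k * ‖q a - q b‖ → ‖p i - p j‖ ≤ ‖p a - p b‖

theorem exists_isMaximalPair [Finite ι] (hq : Function.Injective q)
    (h : ‖q a - q b‖ < ‖p a - p b‖) : ∃ k > 1, ∃ i j, IsMaximalPair p q k i j := by
  have hpos {x : ι × ι} (hx : x.1 ≠ x.2) : 0 < ‖q x.1 - q x.2‖ :=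
    norm_pos_iff.2 (sub_ne_zero.2 (hq.ne hx))
  have hab : a ≠ b := by rintro rfl; simp at h
  let ratio (x : ι × ι) : ℝ := ‖p x.1 - p x.2‖ / ‖q x.1 - q x.2‖
  obtain ⟨y, hy, hmax⟩ := exists_max_image {x : ι × ι | x.1 ≠ x.2} ratio (toFinite _) ⟨(a, b), hab⟩
  obtain ⟨z, ⟨hz, hzy⟩, hmin⟩ := exists_min_image {x : ι × ι | x.1 ≠ x.2 ∧ ratio x = ratio y}
    (fun x ↦ ‖p x.1 - p x.2‖) (toFinite _) ⟨y, hy, rfl⟩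
  refine ⟨ratio y, ((one_lt_div (hpos hab)).2 h).trans_le (hmax (a, b) hab), z.1, z.2, hz,
    (div_eq_iff (hpos hz).ne').1 hzy, fun s t ↦ ?_, fun s t hst hk ↦ ?_⟩
  · by_cases hst : s = t
    · simp [hst]
    · exact (div_le_iff₀ (hpos (x := (s, t)) hst)).1 (hmax (s, t) hst)
  · exact hmin (s, t) ⟨hst, (div_eq_iff (hpos (x := (s, t)) hst).ne').2 hk⟩

theorem IsMaximalPair.symm (h : IsMaximalPair p q k i j) : IsMaximalPair p q k j i where
  ne := h.ne.symm
  norm_sub_eq := by rw [norm_sub_rev, h.norm_sub_eq, norm_sub_rev]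
  norm_sub_le := h.norm_sub_le
  minimal := by rw [norm_sub_rev]; exact h.minimal

end MaximalPair

section Comparison

variable {ι E : Type*} [NormedAddCommGroup E] [InnerProductSpace ℝ E] {p q : ι → E}
  {c c' : E} {ρ ρ' k : ℝ} {a b i j : ι}

/-- Two labelled configurations with the same faces, any two points of a common proper face being
at the same distance in both. -/
structure BoundaryIsometric (p q : ι → E) : Prop where
  isFace_iff : ∀ F, IsFace p F ↔ IsFace q F
  norm_sub_eq : ∀ a b, Cofacial p a b → ‖p a - p b‖ = ‖q a - q b‖

namespace BoundaryIsometric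

theorem cofacial_iff (H : BoundaryIsometric p q) : Cofacial p a b ↔ Cofacial q a b := by
  simp only [Cofacial, H.isFace_iff]

theorem symm (H : BoundaryIsometric p q) : BoundaryIsometric q p where
  isFace_iff F := (H.isFace_iff F).symm
  norm_sub_eq a b h := (H.norm_sub_eq a b (H.cofacial_iff.2 h)).symm

theorem faceIsometric_inversionCone (H : BoundaryIsometric p q) (hp : ∀ a, IsFace p {a})
    (hq : ∀ a, IsFace q {a}) (j : ι) :
    FaceIsometric (inversionCone p j) (inversionCone q j) where
  isConeFace_iff F := by
    rw [isConeFace_inversionCone_iff (injective_of_isFace_singleton hp),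
      isConeFace_inversionCone_iff (injective_of_isFace_singleton hq), H.isFace_iff]
  inner_eq F hF hne a ha b hb := by
    obtain ⟨hF, hj⟩ := (isConeFace_inversionCone_iff (injective_of_isFace_singleton hp)).1 hF
    rw [inner_inversionCone, inner_inversionCone, H.norm_sub_eq a j ⟨F, hF, hne, ha, hj⟩,
      H.norm_sub_eq b j ⟨F, hF, hne, hb, hj⟩, H.norm_sub_eq a b ⟨F, hF, hne, ha, hb⟩]
  pointed_left := isPointed_inversionCone hp j
  pointed_right := isPointed_inversionCone hq j

end BoundaryIsometric

theorem IsMaximalPair.norm_inversionCone_sub_eq (h : IsMaximalPair p q k i j) (hk : 1 < k)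
    (H : BoundaryIsometric p q) (hq : Function.Injective q) (hbj : b ≠ j) (hb : Cofacial p j b) :
    ‖inversionCone q j b - inversionCone q j i‖ =
      k * ‖q b - q i‖ / (‖p b - p j‖ * ‖p i - p j‖) := by
  rw [norm_inversionCone_sub (hq.ne hbj) (hq.ne h.ne), H.norm_sub_eq b j hb.symm, h.norm_sub_eq,
    mul_left_comm, mul_div_mul_left _ _ (zero_lt_one.trans hk).ne']

theorem IsMaximalPair.norm_inversionCone_sub_le (h : IsMaximalPair p q k i j) (hk : 1 < k)
    (H : BoundaryIsometric p q) (hp : Function.Injective p) (hq : Function.Injective q)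
    (hbj : b ≠ j) (hb : Cofacial p j b) :
    ‖inversionCone p j b - inversionCone p j i‖ ≤ ‖inversionCone q j b - inversionCone q j i‖ := by
  rw [norm_inversionCone_sub (hp.ne hbj) (hp.ne h.ne), h.norm_inversionCone_sub_eq hk H hq hbj hb]
  gcongr
  exact h.norm_sub_le b i

theorem IsMaximalPair.not_cofacial (h : IsMaximalPair p q k i j) (hk : 1 < k)
    (H : BoundaryIsometric p q) (hq : Function.Injective q) : ¬ Cofacial p j i := fun hc ↦ by
  have hpos : 0 < ‖q i - q j‖ := norm_pos_iff.2 (sub_ne_zero.2 (hq.ne h.ne))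
  have := h.norm_sub_eq
  rw [H.norm_sub_eq i j hc.symm] at this
  nlinarith

/-- If the inversion at `p j` does not change the distance from the image of `p i` to that of
`p b`, then `(b, i)` has the same ratio as `(i, j)`; minimality then says that `p b` is at least
as far from `p i` as `p j` is. -/
theorem IsMaximalPair.sphereHeight_nonneg (h : IsMaximalPair p q k i j) (hk : 1 < k)
    (H : BoundaryIsometric p q) (hp : IsInscribed p c ρ) (hq : Function.Injective q)
    (hbj : b ≠ j) (hb : Cofacial p j b)
    (heq : ‖inversionCone p j b - inversionCone p j i‖ =
      ‖inversionCone q j b - inversionCone q j i‖) :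
    0 ≤ sphereHeight c (p i) (inversionCone p j b) := by
  have hbi : b ≠ i := by rintro rfl; exact h.not_cofacial hk H hq hb
  rw [norm_inversionCone_sub (hp.injective.ne hbj) (hp.injective.ne h.ne),
    h.norm_inversionCone_sub_eq hk H hq hbj hb,
    div_left_inj' (mul_pos (hp.norm_sub_pos hbj) (hp.norm_sub_pos h.ne)).ne'] at heq
  have := h.minimal b i hbi heq
  rw [hp.sphereHeight_inversionCone, norm_sub_rev (p j)]
  exact mul_nonneg (by positivity) (sub_nonneg.2 (by gcongr))

theorem IsInscribed.powerForm_inversionCone (hp : IsInscribed p c ρ) (hbj : b ≠ j) (O : E) :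
    powerForm (sphereHeight c (p j)) O (inversionCone p j b) =
      ‖inversionCone p j b - O‖ ^ 2 - ‖inversionCone p j b‖ ^ 2 :=
  powerForm_of_eq_one (hp.sphereHeight_eq_one hbj) O

variable [Finite ι] [FiniteDimensional ℝ E]

theorem IsMaximalPair.norm_inversionCone_sub_eq_of_three_le_finrank (h : IsMaximalPair p q k i j)
    (hk : 1 < k) (H : BoundaryIsometric p q) (hp : IsInscribed p c ρ) (hq : IsInscribed q c' ρ')
    (hr : 3 ≤ Module.finrank ℝ (vectorSpan ℝ (range p))) (hbj : b ≠ j) (hb : Cofacial p j b) :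
    ‖inversionCone p j b - inversionCone p j i‖ = ‖inversionCone q j b - inversionCone q j i‖ := by
  have hcone := H.faceIsometric_inversionCone hp.isFace_singleton hq.isFace_singleton j
  have hboundary {b : ι} : IsBoundary (inversionCone p j) b ↔ Cofacial p j b :=
    isBoundary_inversionCone_iff hp.injective
  have hi := mt hboundary.1 (h.not_cofacial hk H hq.injective)
  have heq := hcone.powerForm_eq_of_powerForm_le (by rwa [finrank_range_inversionCone])
    (fun a ha ↦ hp.sphereHeight_eq_one (mt (inversionCone_eq_zero_iff hp.injective).2 ha))
    (fun a ha ↦ hq.sphereHeight_eq_one (mt (inversionCone_eq_zero_iff hq.injective).2 ha))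
    (isInnerVector_of_not_isBoundary hi)
    (isInnerVector_of_not_isBoundary (mt hcone.isBoundary_iff.2 hi))
    (hp.sphereHeight_eq_one h.ne) (hq.sphereHeight_eq_one h.ne) (fun b hb ↦ ?_) (hboundary.2 hb)
  · rwa [hp.powerForm_inversionCone hbj, hq.powerForm_inversionCone hbj,
      hcone.norm_eq (hboundary.2 hb), sub_left_inj,
      sq_eq_sq₀ (norm_nonneg _) (norm_nonneg _)] at heq
  · rcases eq_or_ne b j with rfl | hbj
    · simp only [inversionCone_self, map_zero, le_rfl]
    rw [hp.powerForm_inversionCone hbj, hq.powerForm_inversionCone hbj, hcone.norm_eq hb]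
    gcongr
    exact h.norm_inversionCone_sub_le hk H hp.injective hq.injective hbj (hboundary.1 hb)

/-- For a maximal pair `(i, j)` with ratio larger than `1`, the functional `sphereHeight c (p i)`
would be nonnegative on the boundary of the inverted cone at `p j`, but not at the image of
`p i`. -/
theorem BoundaryIsometric.norm_sub_le_of_three_le_finrank (H : BoundaryIsometric p q)
    (hp : IsInscribed p c ρ) (hq : IsInscribed q c' ρ')
    (hr : 3 ≤ Module.finrank ℝ (vectorSpan ℝ (range p))) (a b : ι) :
    ‖p a - p b‖ ≤ ‖q a - q b‖ := by
  by_contra! hlt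
  obtain ⟨k, hk, i, j, hij⟩ := exists_isMaximalPair hq.injective hlt
  refine (hp.sphereHeight_neg hij.ne).not_ge
    ((isPointed_inversionCone hp.isFace_singleton j).nonneg_of_nonneg_isBoundary
      (by rw [finrank_range_inversionCone]; lia) (fun b hb ↦ ?_) i)
  rw [isBoundary_inversionCone_iff hp.injective] at hb
  rcases eq_or_ne b j with rfl | hbj
  · rw [inversionCone_self, map_zero]
  · exact hij.sphereHeight_nonneg hk H hp hq.injective hbj hb
      (hij.norm_inversionCone_sub_eq_of_three_le_finrank hk H hp hq hr hbj hb)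

end Comparison

/-! ### Inscribed polygons -/

section Segments

variable {E : Type*} [NormedAddCommGroup E] [InnerProductSpace ℝ E] {o u v : E} {x y : ℝ}

theorem inner_sub_eq_of_foot (hxy : x + y = 1) (ho : o = x • u + y • v)
    (hou : inner ℝ o (v - u) = 0) : inner ℝ u (v - u) = -y * ‖v - u‖ ^ 2 := by
  have hu : u = o - y • (v - u) := by
    rw [ho, eq_sub_of_add_eq hxy]; module
  calc inner ℝ u (v - u) = inner ℝ (o - y • (v - u)) (v - u) := by rw [← hu]
    _ = -y * ‖v - u‖ ^ 2 := by
      rw [inner_sub_left, hou, real_inner_smul_left, real_inner_self_eq_norm_sq]; ring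

theorem mem_segment_of_foot (huv : u ≠ v) (hxy : x + y = 1) (ho : o = x • u + y • v)
    (hou : inner ℝ o (v - u) = 0) (hu : inner ℝ u (v - u) ≤ 0) (hv : inner ℝ v (u - v) ≤ 0) :
    o ∈ segment ℝ u v := by
  have hpos : 0 < ‖v - u‖ ^ 2 := pow_pos (norm_pos_iff.2 (sub_ne_zero.2 huv.symm)) 2
  rw [inner_sub_eq_of_foot hxy ho hou] at hu
  rw [inner_sub_eq_of_foot ((add_comm y x).trans hxy) (ho.trans (add_comm _ _))
    (by rw [← neg_sub, inner_neg_right, hou, neg_zero]), norm_sub_rev] at hv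
  exact ⟨x, y, by nlinarith, by nlinarith, hxy, ho.symm⟩

theorem norm_sub_midpoint_lt (h : ‖u‖ ^ 2 < inner ℝ v u) : ‖u - (1 / 2 : ℝ) • v‖ < ‖v‖ / 2 := by
  refine lt_of_pow_lt_pow_left₀ 2 (by positivity) ?_
  rw [norm_sub_sq_real, real_inner_smul_right, norm_smul, real_inner_comm, mul_pow]
  norm_num
  linarith

end Segments

section Corners

variable {ι E : Type*} [NormedAddCommGroup E] [InnerProductSpace ℝ E] {p : ι → E}
  {c : E} {ρ : ℝ} {a b d i j s t : ι}

/-- `p a` and `p b` are the two neighbours of the vertex `p j` of a convex polygon inscribed in a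
circle, expressed after inverting at `p j`. -/
structure IsCorner (p : ι → E) (j a b : ι) : Prop where
  left_ne : a ≠ j
  right_ne : b ≠ j
  ne : a ≠ b
  left : Cofacial p j a
  right : Cofacial p j b
  vectorSpan_le : vectorSpan ℝ (range p) ≤
    Submodule.span ℝ {inversionCone p j a, inversionCone p j b}
  mem_segment : ∀ d ≠ j, inversionCone p j d ∈
    segment ℝ (inversionCone p j a) (inversionCone p j b)

/-- The points indexed by `s` and `t` are the ends of a longest edge of a convex polygon. -/
structure IsLongestEdge (p : ι → E) (s t : ι) : Prop where
  ne : s ≠ t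
  cofacial : Cofacial p s t
  norm_sub_le : ∀ a b, Cofacial p a b → ‖p a - p b‖ ≤ ‖p s - p t‖

theorem IsCorner.symm (h : IsCorner p j a b) : IsCorner p j b a where
  left_ne := h.right_ne
  right_ne := h.left_ne
  ne := h.ne.symm
  left := h.right
  right := h.left
  vectorSpan_le := by rw [pair_comm]; exact h.vectorSpan_le
  mem_segment := by rw [segment_symm]; exact h.mem_segment

theorem norm_sq_lt_inner_of_inversionCone (ha : p a ≠ p j) (hd : p d ≠ p j)
    (h : ‖inversionCone p j a‖ ^ 2 < inner ℝ (inversionCone p j a) (inversionCone p j d)) :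
    ‖p d - p j‖ ^ 2 < inner ℝ (p a - p j) (p d - p j) := by
  have ha : 0 < ‖p a - p j‖ ^ 2 := pow_pos (norm_pos_iff.2 (sub_ne_zero.2 ha)) 2
  have hd : 0 < ‖p d - p j‖ ^ 2 := pow_pos (norm_pos_iff.2 (sub_ne_zero.2 hd)) 2
  rw [norm_inversionCone, inversionCone_apply, inversionCone_apply, real_inner_smul_left,
    real_inner_smul_right, inv_pow, lt_inv_mul_iff₀ ha, mul_inv_cancel₀ ha.ne',
    lt_inv_mul_iff₀ hd, mul_one] at h
  exact h

theorem IsCorner.norm_sub_midpoint_lt (h : IsCorner p j a b) (hp : Function.Injective p)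
    (hin : 0 < inner ℝ (inversionCone p j a) (inversionCone p j b - inversionCone p j a))
    (hdj : d ≠ j) (hda : d ≠ a) :
    ‖(p d - p j) - (1 / 2 : ℝ) • (p a - p j)‖ < ‖p a - p j‖ / 2 := by
  obtain ⟨x, y, -, hy, hxy, hd⟩ := h.mem_segment d hdj
  have hy : 0 < y := by
    refine hy.lt_of_ne' ?_
    rintro rfl
    rw [add_zero] at hxy
    rw [hxy, one_smul, zero_smul, add_zero, inversionCone, inversionCone, sub_left_inj,
      (EuclideanGeometry.inversion_injective _ one_ne_zero).eq_iff] at hd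
    exact hda (hp hd).symm
  refine InscribedPolytope.norm_sub_midpoint_lt
    (norm_sq_lt_inner_of_inversionCone (hp.ne h.left_ne) (hp.ne hdj) ?_)
  calc ‖inversionCone p j a‖ ^ 2
      < ‖inversionCone p j a‖ ^ 2 +
          y * inner ℝ (inversionCone p j a) (inversionCone p j b - inversionCone p j a) :=
        lt_add_of_pos_right _ (mul_pos hy hin)
    _ = inner ℝ (inversionCone p j a) (inversionCone p j d) := by
        rw [← hd, eq_sub_of_add_eq hxy, inner_add_right, inner_sub_right, real_inner_smul_right,
          real_inner_smul_right, real_inner_self_eq_norm_sq]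
        ring

/-- Otherwise all the vertices other than `p j` lie in the disc with diameter `[p j, p a]`, and an
edge avoiding `p j` is shorter than the edge `[p j, p a]`. -/
theorem IsCorner.inner_nonpos (h : IsCorner p j a b) (hp : Function.Injective p)
    (hst : IsLongestEdge p s t) (hs : s ≠ j) (ht : t ≠ j) :
    inner ℝ (inversionCone p j a) (inversionCone p j b - inversionCone p j a) ≤ 0 := by
  by_contra! hin
  set m : E := (1 / 2 : ℝ) • (p a - p j) with hm
  have hlt (d : ι) (hdj : d ≠ j) (hda : d ≠ a) : ‖p d - p j - m‖ < ‖p a - p j‖ / 2 :=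
    h.norm_sub_midpoint_lt hp hin hdj hda
  have hle (d : ι) (hdj : d ≠ j) : ‖p d - p j - m‖ ≤ ‖p a - p j‖ / 2 := by
    rcases eq_or_ne d a with rfl | hda
    · have : p d - p j - m = (1 / 2 : ℝ) • (p d - p j) := by rw [hm]; module
      rw [this, norm_smul]
      norm_num
      linarith
    · exact (hlt d hdj hda).le
  have htriangle : ‖p s - p t‖ ≤ ‖p s - p j - m‖ + ‖p t - p j - m‖ := by
    simpa using norm_sub_le (p s - p j - m) (p t - p j - m)
  have hmax := hst.norm_sub_le a j h.left.symm
  rcases eq_or_ne s a with rfl | hsa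
  · linarith [hlt t ht hst.ne.symm, hle s hs]
  · linarith [hlt s hs hsa, hle t ht]

/-- The foot of the perpendicular from the origin to the hyperplane `2 * ⟪v, x⟫ = 1`. -/
noncomputable def sphereFoot (v : E) : E :=
  (2 * ‖v‖ ^ 2)⁻¹ • v

theorem IsInscribed.radius_pos (hp : IsInscribed p c ρ) (h : i ≠ j) : 0 < ρ := by
  rw [← hp.norm_sub_center i]
  refine (norm_nonneg _).lt_of_ne' fun h0 ↦ ?_
  rw [norm_eq_zero, sub_eq_zero] at h0
  have := hp.two_mul_inner_center_sub i j
  rw [h0, sub_self, inner_zero_left, mul_zero, ← h0] at this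
  exact (pow_pos (hp.norm_sub_pos h.symm) 2).ne this

theorem IsInscribed.norm_sphereFoot (hp : IsInscribed p c ρ) (j : ι) :
    ‖sphereFoot (c - p j)‖ = (2 * ρ)⁻¹ := by
  rw [sphereFoot, norm_smul, norm_sub_rev, hp.norm_sub_center, ← hp.norm_sub_center j,
    Real.norm_of_nonneg (by positivity)]
  field_simp

theorem IsInscribed.inner_sphereFoot (hp : IsInscribed p c ρ) (h : a ≠ j) :
    inner ℝ (sphereFoot (c - p j)) (inversionCone p j a) = (2 * ρ)⁻¹ ^ 2 := by
  have hρ := hp.radius_pos h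
  have hheight := hp.sphereHeight_eq_one h
  simp only [sphereHeight, LinearMap.smul_apply, innerₛₗ_apply_apply, smul_eq_mul] at hheight
  rw [sphereFoot, real_inner_smul_left, norm_sub_rev, hp.norm_sub_center]
  field_simp
  linarith

theorem IsInscribed.norm_inversionCone_sub_sphereFoot (hp : IsInscribed p c ρ) (h : a ≠ j) :
    ‖inversionCone p j a - sphereFoot (c - p j)‖ = √(‖p a - p j‖⁻¹ ^ 2 - (2 * ρ)⁻¹ ^ 2) := by
  rw [← Real.sqrt_sq (norm_nonneg (inversionCone p j a - _)), norm_sub_sq_real,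
    norm_inversionCone, real_inner_comm, hp.inner_sphereFoot h, hp.norm_sphereFoot]
  ring_nf

theorem IsCorner.sphereFoot_mem_segment (h : IsCorner p j a b) (hp : IsInscribed p c ρ)
    (hst : IsLongestEdge p s t) (hs : s ≠ j) (ht : t ≠ j) :
    sphereFoot (c - p j) ∈ segment ℝ (inversionCone p j a) (inversionCone p j b) := by
  have hρ := hp.radius_pos h.left_ne
  obtain ⟨x, y, hxy⟩ := Submodule.mem_span_pair.1
    (h.vectorSpan_le (Submodule.smul_mem _ (2 * ‖c - p j‖ ^ 2)⁻¹ (hp.center_sub_mem j)))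
  have hxy : x • inversionCone p j a + y • inversionCone p j b = sphereFoot (c - p j) := hxy
  have hadd : x + y = 1 := by
    have hinner := real_inner_self_eq_norm_sq (sphereFoot (c - p j))
    nth_rw 2 [← hxy] at hinner
    rw [inner_add_right, real_inner_smul_right, real_inner_smul_right,
      hp.inner_sphereFoot h.left_ne, hp.inner_sphereFoot h.right_ne, hp.norm_sphereFoot,
      ← add_mul] at hinner
    exact (mul_eq_right₀ (by positivity)).1 hinner
  refine mem_segment_of_foot (fun heq ↦ h.ne (hp.injective
      (EuclideanGeometry.inversion_injective _ one_ne_zero (sub_left_injective heq))))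
    hadd hxy.symm ?_ (h.inner_nonpos hp.injective hst hs ht)
    (h.symm.inner_nonpos hp.injective hst hs ht)
  rw [inner_sub_right, hp.inner_sphereFoot h.left_ne, hp.inner_sphereFoot h.right_ne, sub_self]

theorem IsCorner.norm_sub_eq (h : IsCorner p j a b) (hp : IsInscribed p c ρ)
    (hst : IsLongestEdge p s t) (hs : s ≠ j) (ht : t ≠ j) :
    ‖inversionCone p j a - inversionCone p j b‖ =
      √(‖p a - p j‖⁻¹ ^ 2 - (2 * ρ)⁻¹ ^ 2) + √(‖p b - p j‖⁻¹ ^ 2 - (2 * ρ)⁻¹ ^ 2) := by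
  rw [← hp.norm_inversionCone_sub_sphereFoot h.left_ne,
    ← hp.norm_inversionCone_sub_sphereFoot h.right_ne, ← dist_eq_norm,
    ← dist_add_dist_of_mem_segment (h.sphereFoot_mem_segment hp hst hs ht),
    dist_eq_norm, dist_comm, dist_eq_norm]

theorem IsInscribed.isCorner [Finite ι] [FiniteDimensional ℝ E] (hp : IsInscribed p c ρ)
    (hr : Module.finrank ℝ (vectorSpan ℝ (range p)) = 2) (ha : IsExtremeRay (inversionCone p j) a)
    (hb : IsExtremeRay (inversionCone p j) b) (hab : b ∉ lineIndices (inversionCone p j) a) :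
    IsCorner p j a b := by
  have hne {d : ι} (hd : IsExtremeRay (inversionCone p j) d) : d ≠ j :=
    mt (inversionCone_eq_zero_iff hp.injective).2 hd.1
  have hcofacial {d : ι} (hd : IsExtremeRay (inversionCone p j) d) : Cofacial p j d :=
    (isBoundary_inversionCone_iff hp.injective).1
      (hd.isBoundary (by rw [finrank_range_inversionCone, hr]))
  have hspan : Submodule.span ℝ {inversionCone p j a, inversionCone p j b} =
      vectorSpan ℝ (range p) := by
    have hpair : range ![inversionCone p j a, inversionCone p j b] =
        {inversionCone p j a, inversionCone p j b} := by simp [pair_comm]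
    rw [← span_range_inversionCone p j]
    refine Submodule.eq_of_le_of_finrank_eq (Submodule.span_mono ?_) ?_
    · exact pair_subset (mem_range_self a) (mem_range_self b)
    · rw [← hpair, finrank_span_eq_card (ha.linearIndependent_pair hab), span_range_inversionCone,
        hr, Fintype.card_fin]
  refine ⟨hne ha, hne hb, ?_, hcofacial ha, hcofacial hb, hspan.ge, fun d hd ↦ ?_⟩
  · rintro rfl
    exact hab (mem_lineIndices_self _ _)
  · obtain ⟨x, y, hx, hy, hxy⟩ := ha.exists_nonneg_combination hb hab (a := d) (by
      rw [hspan, ← span_range_inversionCone p j]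
      exact Submodule.subset_span (mem_range_self d))
    have hheight := hp.sphereHeight_eq_one hd
    rw [hxy, map_add, map_smul, map_smul, hp.sphereHeight_eq_one (hne ha),
      hp.sphereHeight_eq_one (hne hb), smul_eq_mul, smul_eq_mul, mul_one, mul_one] at hheight
    exact ⟨x, y, hx, hy, hheight, hxy.symm⟩

end Corners

section Polygons

variable {ι E : Type*} [NormedAddCommGroup E] [InnerProductSpace ℝ E] {p q : ι → E}
  {c c' : E} {ρ ρ' k : ℝ} {a b i j s t : ι}

theorem BoundaryIsometric.isLongestEdge (H : BoundaryIsometric p q) (h : IsLongestEdge p s t) :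
    IsLongestEdge q s t where
  ne := h.ne
  cofacial := H.cofacial_iff.1 h.cofacial
  norm_sub_le a b hab := by
    have hab := H.cofacial_iff.2 hab
    rw [← H.norm_sub_eq a b hab, ← H.norm_sub_eq s t h.cofacial]
    exact h.norm_sub_le a b hab

theorem IsMaximalPair.norm_inversionCone_sub_lt_of_isCorner (h : IsMaximalPair p q k i j)
    (hk : 1 < k) (H : BoundaryIsometric p q) (hp : IsInscribed p c ρ) (hq : Function.Injective q)
    (hpc : IsCorner p j a b) (hqc : IsCorner q j a b) :
    ‖inversionCone p j a - inversionCone p j b‖ < ‖inversionCone q j a - inversionCone q j b‖ := by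
  have hsplit {r : ι → E} (hr : IsCorner r j a b) :
      ‖inversionCone r j a - inversionCone r j b‖ =
        ‖inversionCone r j a - inversionCone r j i‖ +
          ‖inversionCone r j b - inversionCone r j i‖ := by
    rw [norm_sub_rev (inversionCone r j b)]
    simpa only [dist_eq_norm] using (dist_add_dist_of_mem_segment (hr.mem_segment i h.ne)).symm
  have ha := h.norm_inversionCone_sub_le hk H hp.injective hq hpc.left_ne hpc.left
  have hb := h.norm_inversionCone_sub_le hk H hp.injective hq hpc.right_ne hpc.right
  rw [hsplit hpc, hsplit hqc]
  refine (add_le_add ha hb).lt_of_ne fun heq ↦ (hp.sphereHeight_neg h.ne).not_ge ?_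
  obtain ⟨ha, hb⟩ := (add_eq_add_iff_eq_and_eq ha hb).1 heq
  obtain ⟨x, y, hx, hy, -, hi⟩ := hpc.mem_segment i h.ne
  rw [← hi, map_add, map_smul, map_smul]
  exact add_nonneg
    (mul_nonneg hx (h.sphereHeight_nonneg hk H hp hq hpc.left_ne hpc.left ha))
    (mul_nonneg hy (h.sphereHeight_nonneg hk H hp hq hpc.right_ne hpc.right hb))

namespace BoundaryIsometric

theorem radius_lt_of_norm_inversionCone_sub_lt (H : BoundaryIsometric p q)
    (hp : IsInscribed p c ρ) (hq : IsInscribed q c' ρ')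
    (hpc : IsCorner p j a b) (hqc : IsCorner q j a b) (hst : IsLongestEdge p s t) (hs : s ≠ j)
    (ht : t ≠ j) (hlt : ‖inversionCone p j a - inversionCone p j b‖ <
      ‖inversionCone q j a - inversionCone q j b‖) : ρ < ρ' := by
  have hρ := hp.radius_pos hpc.left_ne
  have hρ' := hq.radius_pos hpc.left_ne
  contrapose! hlt
  rw [hpc.norm_sub_eq hp hst hs ht, hqc.norm_sub_eq hq (H.isLongestEdge hst) hs ht,
    H.norm_sub_eq a j hpc.left.symm, H.norm_sub_eq b j hpc.right.symm]
  gcongr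

theorem norm_sub_lt_of_norm_inversionCone_sub_lt (H : BoundaryIsometric p q)
    (hp : IsInscribed p c ρ) (hq : Function.Injective q) (h : IsCorner p j a b)
    (hlt : ‖inversionCone p j a - inversionCone p j b‖ <
      ‖inversionCone q j a - inversionCone q j b‖) : ‖p a - p b‖ < ‖q a - q b‖ := by
  rw [norm_inversionCone_sub (hp.injective.ne h.left_ne) (hp.injective.ne h.right_ne),
    norm_inversionCone_sub (hq.ne h.left_ne) (hq.ne h.right_ne),
    ← H.norm_sub_eq a j h.left.symm, ← H.norm_sub_eq b j h.right.symm] at hlt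
  exact (div_lt_div_iff_of_pos_right
    (mul_pos (hp.norm_sub_pos h.left_ne) (hp.norm_sub_pos h.right_ne))).1 hlt

theorem finrank_vectorSpan_eq [Finite ι] [Nonempty ι] (H : BoundaryIsometric p q)
    (hp : ∀ a, IsFace p {a}) (hq : ∀ a, IsFace q {a}) :
    Module.finrank ℝ (vectorSpan ℝ (range p)) = Module.finrank ℝ (vectorSpan ℝ (range q)) := by
  obtain ⟨j⟩ := ‹Nonempty ι›
  rw [← finrank_range_inversionCone p j, ← finrank_range_inversionCone q j,
    (H.faceIsometric_inversionCone hp hq j).finrank_eq]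

variable [Finite ι] [FiniteDimensional ℝ E]

theorem exists_isCorner (H : BoundaryIsometric p q) (hp : IsInscribed p c ρ)
    (hq : IsInscribed q c' ρ') (hr : Module.finrank ℝ (vectorSpan ℝ (range p)) = 2) (j : ι) :
    ∃ a b, IsCorner p j a b ∧ IsCorner q j a b := by
  have : Nonempty ι := ⟨j⟩
  have hcone := H.faceIsometric_inversionCone hp.isFace_singleton hq.isFace_singleton j
  have hrank := (finrank_range_inversionCone p j).trans hr
  obtain ⟨a, ha⟩ := hcone.pointed_left.exists_isExtremeRay (by lia)
  obtain ⟨b, -, hb, hab⟩ := (isConeFace_univ _).exists_isExtremeRay_notMem hcone.pointed_left ha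
    fun hsub ↦ by
      obtain ⟨d, hd⟩ := exists_notMem_span_singleton hrank.ge (inversionCone p j a)
      exact hd (hsub (mem_univ d))
  refine ⟨a, b, hp.isCorner hr ha hb hab, hq.isCorner ?_ (hcone.isExtremeRay ha)
    (hcone.isExtremeRay hb) (by rwa [hcone.lineIndices_eq ha])⟩
  rw [← H.finrank_vectorSpan_eq hp.isFace_singleton hq.isFace_singleton, hr]

theorem radius_lt_of_norm_sub_lt (H : BoundaryIsometric p q) (hp : IsInscribed p c ρ)
    (hq : IsInscribed q c' ρ') (hr : Module.finrank ℝ (vectorSpan ℝ (range p)) = 2)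
    (hst : IsLongestEdge p s t) (hlt : ‖q i - q j‖ < ‖p i - p j‖) :
    ρ < ρ' ∧ ∃ a b, ‖p a - p b‖ < ‖q a - q b‖ := by
  obtain ⟨k, hk, i, j, hij, hs, ht⟩ :
      ∃ k > 1, ∃ i j, IsMaximalPair p q k i j ∧ s ≠ j ∧ t ≠ j := by
    obtain ⟨k, hk, i, j, hij⟩ := exists_isMaximalPair hq.injective hlt
    by_cases hj : s ≠ j ∧ t ≠ j
    · exact ⟨k, hk, i, j, hij, hj⟩
    · have := hij.not_cofacial hk H hq.injective
      have := hst.cofacial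
      have := hst.cofacial.symm
      have := hij.ne
      exact ⟨k, hk, j, i, hij.symm, by grind, by grind⟩
  obtain ⟨a, b, hpc, hqc⟩ := H.exists_isCorner hp hq hr j
  have hlt := hij.norm_inversionCone_sub_lt_of_isCorner hk H hp hq.injective hpc hqc
  exact ⟨H.radius_lt_of_norm_inversionCone_sub_lt hp hq hpc hqc hst hs ht hlt, a, b,
    H.norm_sub_lt_of_norm_inversionCone_sub_lt hp hq.injective hpc hlt⟩

/-- If a distance decreases, the circumradius increases and some other distance increases, so
that, with the roles exchanged, the circumradius also decreases. -/
theorem norm_sub_le_of_finrank_eq_two (H : BoundaryIsometric p q) (hp : IsInscribed p c ρ)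
    (hq : IsInscribed q c' ρ') (hr : Module.finrank ℝ (vectorSpan ℝ (range p)) = 2) (i j : ι) :
    ‖p i - p j‖ ≤ ‖q i - q j‖ := by
  by_contra! hlt
  have : Nonempty ι := ⟨i⟩
  obtain ⟨a, b, hpc, -⟩ := H.exists_isCorner hp hq hr j
  obtain ⟨⟨s, t⟩, ⟨hne, hst⟩, hmax⟩ := exists_max_image
    {x : ι × ι | x.1 ≠ x.2 ∧ Cofacial p x.1 x.2} (fun x ↦ ‖p x.1 - p x.2‖) (toFinite _)
    ⟨(j, a), hpc.left_ne.symm, hpc.left⟩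
  have hst : IsLongestEdge p s t := ⟨hne, hst, fun x y hxy ↦ by
    rcases eq_or_ne x y with rfl | hne
    · simp
    · exact hmax (x, y) ⟨hne, hxy⟩⟩
  obtain ⟨hρ, a, b, hab⟩ := H.radius_lt_of_norm_sub_lt hp hq hr hst hlt
  rw [H.finrank_vectorSpan_eq hp.isFace_singleton hq.isFace_singleton] at hr
  exact hρ.not_gt (H.symm.radius_lt_of_norm_sub_lt hq hp hr (H.isLongestEdge hst) hab).1

end BoundaryIsometric

theorem IsInscribed.eq_or_eq_of_finrank_le_one [FiniteDimensional ℝ E] (hp : IsInscribed p c ρ)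
    (hr : Module.finrank ℝ (vectorSpan ℝ (range p)) ≤ 1) (hij : i ≠ j) (x : ι) :
    x = i ∨ x = j := by
  by_contra! hx
  have hsphere : EuclideanGeometry.Cospherical (range p) :=
    ⟨c, ρ, forall_mem_range.2 fun a ↦ by rw [dist_eq_norm, hp.norm_sub_center]⟩
  refine affineIndependent_iff_not_collinear_set.1 (hsphere.affineIndependent_of_mem_of_ne
    (mem_range_self x) (mem_range_self i) (mem_range_self j) (hp.injective.ne hx.1)
    (hp.injective.ne hx.2) (hp.injective.ne hij)) ?_
  refine (collinear_iff_finrank_le_one.2 hr).subset ?_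
  simp [insert_subset_iff]

end Polygons

/-! ### Congruence of inscribed polytopes -/

section Reconstruction

variable {ι E : Type*} [NormedAddCommGroup E] [InnerProductSpace ℝ E] {p q : ι → E}
  {c c' : E} {r r' ρ ρ' : ℝ}

theorem exists_isInscribed [FiniteDimensional ℝ E] (hface : ∀ a, IsFace p {a})
    (hp : ∀ a, ‖p a - c‖ = r) : ∃ c₀ ρ, IsInscribed p c₀ ρ := by
  rcases isEmpty_or_nonempty ι with hι | ⟨⟨j⟩⟩
  · exact ⟨0, 0, hface, isEmptyElim, isEmptyElim⟩
  have hmem (a : ι) : p a ∈ affineSpan ℝ (range p) := mem_affineSpan ℝ (mem_range_self a)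
  have : Nonempty (affineSpan ℝ (range p)) := ⟨⟨p j, hmem j⟩⟩
  obtain ⟨ρ, hρ⟩ := (EuclideanGeometry.exists_dist_eq_iff_exists_dist_orthogonalProjection_eq
    (subset_affineSpan ℝ (range p)) c).1 ⟨r, forall_mem_range.2 fun a ↦ by rw [dist_eq_norm, hp a]⟩
  refine ⟨EuclideanGeometry.orthogonalProjection (affineSpan ℝ (range p)) c, ρ, hface,
    fun a ↦ ?_, fun a ↦ ?_⟩
  · rw [← hρ (p a) (mem_range_self a), dist_eq_norm]
  · rw [← direction_affineSpan]
    exact AffineSubspace.vsub_mem_direction (EuclideanGeometry.orthogonalProjection_mem c) (hmem a)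

theorem BoundaryIsometric.norm_sub_le [Finite ι] [FiniteDimensional ℝ E]
    (H : BoundaryIsometric p q) (hp : IsInscribed p c ρ) (hq : IsInscribed q c' ρ')
    (hedge : ∀ a b, IsFace p {a, b} → ‖p a - p b‖ = ‖q a - q b‖) (i j : ι) :
    ‖p i - p j‖ ≤ ‖q i - q j‖ := by
  rcases lt_trichotomy (Module.finrank ℝ (vectorSpan ℝ (range p))) 2 with hr | hr | hr
  · rcases eq_or_ne i j with rfl | hij
    · simp
    have : {i, j} = univ := eq_univ_of_forall
      (hp.eq_or_eq_of_finrank_le_one (Nat.le_of_lt_succ hr) hij)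
    exact (hedge i j (this ▸ isFace_univ p)).le
  · exact H.norm_sub_le_of_finrank_eq_two hp hq hr i j
  · exact H.norm_sub_le_of_three_le_finrank hp hq hr i j

/-- Induction on the number of vertices: the proper faces are inscribed polytopes with fewer
vertices, so they are congruent. -/
theorem norm_sub_eq_of_isFace_iff [Finite ι] [FiniteDimensional ℝ E]
    (hface : ∀ F, IsFace p F ↔ IsFace q F) (hvertex : ∀ a, IsFace p {a})
    (hp : ∀ a, ‖p a - c‖ = r) (hq : ∀ a, ‖q a - c'‖ = r')
    (hedge : ∀ a b, IsFace p {a, b} → ‖p a - p b‖ = ‖q a - q b‖) (i j : ι) :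
    ‖p i - p j‖ = ‖q i - q j‖ := by
  induction hN : Nat.card ι using Nat.strong_induction_on generalizing ι with
  | _ N ih =>
    have H : BoundaryIsometric p q := by
      refine ⟨hface, fun a b ⟨F, hF, hne, ha, hb⟩ ↦ ?_⟩
      have hF' := (hface F).1 hF
      refine ih (Nat.card F) ?_ (p := fun x : F ↦ p x) (q := fun x : F ↦ q x) ?_ ?_
        (fun a ↦ hp a) (fun a ↦ hq a) ?_ ⟨a, ha⟩ ⟨b, hb⟩ rfl
      · rw [← hN, Nat.card_coe_set_eq, ← ncard_univ]
        exact ncard_lt_ncard (ssubset_univ_iff.2 hne)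
      · intro S
        rw [hF.isFace_restrict_iff, hF'.isFace_restrict_iff, hface]
      · intro x
        rw [hF.isFace_restrict_iff, image_singleton]
        exact hvertex x
      · intro x y hxy
        rw [hF.isFace_restrict_iff, image_pair] at hxy
        exact hedge x y hxy
    obtain ⟨c₀, ρ, hp⟩ := exists_isInscribed hvertex hp
    obtain ⟨c₀', ρ', hq⟩ := exists_isInscribed (fun a ↦ (hface _).1 (hvertex a)) hq
    refine le_antisymm (H.norm_sub_le hp hq hedge i j)
      (H.symm.norm_sub_le hq hp (fun a b h ↦ (hedge a b ((hface _).2 h)).symm) i j)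

end Reconstruction

/-! ### Extreme sets and faces -/

section ExtremeSets

theorem eq_of_forall_mem_lt {E : Type*} [AddCommGroup E] [Module ℝ E] {V : AffineSubspace ℝ E}
    {f : Module.Dual ℝ E} {v : ℝ} (hf : ∀ x ∈ V, v < f x) {x y : E} (hx : x ∈ V) (hy : y ∈ V) :
    f x = f y := by
  by_contra hne
  have hlt := hf _ (AffineMap.lineMap_mem ((v - f x) / (f y - f x)) hx hy)
  rw [AffineMap.lineMap_apply, vsub_eq_sub, vadd_eq_add, map_add, map_smul, map_sub, smul_eq_mul,
    div_mul_cancel₀ _ (sub_ne_zero.2 (Ne.symm hne)), sub_add_cancel] at hlt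
  exact hlt.false

section Module

variable {ι E : Type*} [AddCommGroup E] [Module ℝ E] {p : ι → E} {S : Set ι}

theorem mem_convexHull_image_or_lt {n : Module.Dual ℝ E} {v : ℝ} (hS : ∀ a ∈ S, n (p a) = v)
    (hlt : ∀ a ∉ S, v < n (p a)) {x : E} (hx : x ∈ convexHull ℝ (range p)) :
    x ∈ convexHull ℝ (p '' S) ∨ v < n x := by
  have hcompl : convexHull ℝ (p '' Sᶜ) ⊆ {x | v < n x} :=
    convexHull_min (forall_mem_image.2 hlt) (convex_halfSpace_gt n.isLinear v)
  rcases S.eq_empty_or_nonempty with rfl | hne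
  · exact .inr (hcompl (by rwa [compl_empty, image_univ]))
  rcases Sᶜ.eq_empty_or_nonempty with hempty | hne'
  · exact .inl (by rwa [compl_empty_iff.1 hempty, image_univ])
  rw [← image_univ, ← union_compl_self S, image_union,
    convexHull_union (hne.image p) (hne'.image p), mem_convexJoin] at hx
  obtain ⟨y, hy, z, hz, a, b, -, hb, hab, rfl⟩ := hx
  rcases hb.eq_or_lt with rfl | hb
  · rw [add_zero] at hab
    exact .inl (by rwa [hab, one_smul, zero_smul, add_zero])
  · right
    have hy : n y = v := convexHull_min (forall_mem_image.2 hS) (convex_hyperplane n.isLinear v) hy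
    rw [map_add, map_smul, map_smul, hy, eq_sub_of_add_eq hab, smul_eq_mul, smul_eq_mul]
    linarith [mul_lt_mul_of_pos_left (hcompl hz) hb]

theorem IsFace.isExtreme (h : IsFace p S) :
    IsExtreme ℝ (convexHull ℝ (range p)) (convexHull ℝ (p '' S)) := by
  obtain ⟨n, v, hS, hlt⟩ := h
  have hv {x : E} (hx : x ∈ convexHull ℝ (p '' S)) : n x = v :=
    convexHull_min (forall_mem_image.2 hS) (convex_hyperplane n.isLinear v) hx
  refine ⟨convexHull_mono (image_subset_range p S), ?_⟩
  rintro x hx y hy _ hz ⟨a, b, ha, hb, hab, rfl⟩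
  refine (mem_convexHull_image_or_lt hS hlt hx).resolve_right fun hx ↦ ?_
  have hy : v ≤ n y := (mem_convexHull_image_or_lt hS hlt hy).elim (fun hy ↦ (hv hy).ge) le_of_lt
  have hz := hv hz
  rw [map_add, map_smul, map_smul, eq_sub_of_add_eq hab, smul_eq_mul, smul_eq_mul] at hz
  rw [eq_sub_of_add_eq hab] at ha
  nlinarith

end Module

variable {ι E : Type*} [NormedAddCommGroup E] [NormedSpace ℝ E] [FiniteDimensional ℝ E]
  {p : ι → E} {S : Set ι} {A C : Set E}

/-- Extend the segment from a point of the affine span to a relative interior point of `C` slightly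
beyond the latter. -/
theorem inter_affineSpan_subset_of_isExtreme (h : IsExtreme ℝ A C) (hC : Convex ℝ C) :
    A ∩ affineSpan ℝ C ⊆ C := by
  rintro x ⟨hxA, hx⟩
  obtain ⟨_, b, hb, rfl⟩ := ((affineSpan_nonempty ℝ).1 ⟨x, hx⟩).intrinsicInterior hC
  have hmem (t : ℝ) : AffineMap.lineMap x (b : E) t ∈ affineSpan ℝ C :=
    AffineMap.lineMap_mem t hx b.2
  have hcont : Continuous fun t ↦ (⟨AffineMap.lineMap x (b : E) t, hmem t⟩ : affineSpan ℝ C) :=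
    Continuous.subtype_mk AffineMap.lineMap_continuous hmem
  have hnhds : ∀ᶠ t in nhds (1 : ℝ), AffineMap.lineMap x (b : E) t ∈ C :=
    hcont.continuousAt.eventually (p := fun y : affineSpan ℝ C ↦ (y : E) ∈ C)
      (mem_interior_iff_mem_nhds.1 (by simp only [AffineMap.lineMap_apply_one]; exact hb))
  obtain ⟨t, htC, ht⟩ := ((hnhds.filter_mono nhdsWithin_le_nhds).and
    (self_mem_nhdsWithin (s := Ioi (1 : ℝ)))).exists
  have ht : 1 < t := ht
  have hsegment : (b : E) ∈ openSegment ℝ x (AffineMap.lineMap x (b : E) t) := by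
    refine ⟨1 - t⁻¹, t⁻¹, sub_pos.2 (inv_lt_one_of_one_lt₀ ht), by positivity,
      sub_add_cancel _ _, ?_⟩
    rw [AffineMap.lineMap_apply, vsub_eq_sub, vadd_eq_add, smul_add, inv_smul_smul₀ (by positivity)]
    module
  exact h.left_mem_of_mem_openSegment hxA (h.subset htC)
    (intrinsicInterior_subset ⟨b, hb, rfl⟩) hsegment

theorem isFace_of_isExtreme [Finite ι] (hp : Function.Injective p)
    (hvert : range p = extremePoints ℝ (convexHull ℝ (range p)))
    (h : IsExtreme ℝ (convexHull ℝ (range p)) (convexHull ℝ (p '' S))) : IsFace p S := by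
  rcases S.eq_empty_or_nonempty with rfl | ⟨s, hs⟩
  · exact ⟨0, -1, by simp, by simp⟩
  have hnotMem : p '' Sᶜ ⊆ convexHull ℝ (range p) \ convexHull ℝ (p '' S) := by
    rintro _ ⟨a, ha, rfl⟩
    refine ⟨subset_convexHull ℝ _ (mem_range_self a), fun hmem ↦ ha ?_⟩
    have hext : p a ∈ extremePoints ℝ (convexHull ℝ (p '' S)) :=
      h.extremePoints_eq ▸ ⟨hmem, hvert ▸ mem_range_self a⟩
    exact (hp.mem_set_image).1 (extremePoints_convexHull_subset hext)
  have hdisj : Disjoint (convexHull ℝ (p '' Sᶜ)) (affineSpan ℝ (p '' S) : Set E) := by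
    rw [disjoint_left, ← affineSpan_convexHull]
    intro x hx hxS
    have hx := convexHull_min hnotMem (h.convex_sdiff (convex_convexHull ℝ _)) hx
    exact hx.2 (inter_affineSpan_subset_of_isExtreme h (convex_convexHull ℝ _) ⟨hx.1, hxS⟩)
  obtain ⟨f, u, v, hu, huv, hv⟩ := geometric_hahn_banach_compact_closed
    (convex_convexHull ℝ (p '' Sᶜ)) ((toFinite (p '' Sᶜ)).isCompact_convexHull (𝕜 := ℝ))
    (AffineSubspace.convex (affineSpan ℝ (p '' S)))
    (AffineSubspace.closed_of_finiteDimensional (affineSpan ℝ (p '' S))) hdisj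
  have hmem {a : ι} (ha : a ∈ S) : p a ∈ affineSpan ℝ (p '' S) :=
    subset_affineSpan ℝ _ ⟨a, ha, rfl⟩
  refine ⟨-f, -f (p s), fun a ha ↦ ?_, fun a ha ↦ ?_⟩
  · exact congrArg Neg.neg (eq_of_forall_mem_lt (f := f) hv (hmem ha) (hmem hs))
  · exact neg_lt_neg ((hu _ (subset_convexHull ℝ _ (mem_image_of_mem p ha))).trans
      (huv.trans (hv _ (hmem hs))))

theorem isFace_iff_isExtreme [Finite ι] (hp : Function.Injective p)
    (hvert : range p = extremePoints ℝ (convexHull ℝ (range p))) :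
    IsFace p S ↔ IsExtreme ℝ (convexHull ℝ (range p)) (convexHull ℝ (p '' S)) :=
  ⟨IsFace.isExtreme, isFace_of_isExtreme hp hvert⟩

end ExtremeSets

section Isometries

variable {ι E : Type*} [NormedAddCommGroup E] [InnerProductSpace ℝ E] [FiniteDimensional ℝ E]
  {p q : ι → E}

theorem exists_isometryEquiv_of_norm_sub_eq (h : ∀ i j, ‖p i - p j‖ = ‖q i - q j‖) :
    ∃ e : E ≃ᵢ E, ∀ i, e (p i) = q i := by
  rcases isEmpty_or_nonempty ι with hι | ⟨⟨o⟩⟩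
  · exact ⟨IsometryEquiv.refl E, isEmptyElim⟩
  obtain ⟨L, hL⟩ := exists_linearIsometry_of_inner_eq (g := fun i ↦ p i - p o)
    (g' := fun i ↦ q i - q o) fun i j ↦ by
      simp only [real_inner_eq_norm_mul_self_add_norm_mul_self_sub_norm_sub_mul_self_div_two,
        sub_sub_sub_cancel_right, h]
  refine ⟨(IsometryEquiv.subRight (p o)).trans
    ((L.toLinearIsometryEquiv rfl).toIsometryEquiv.trans (IsometryEquiv.addRight (q o))),
    fun i ↦ ?_⟩
  exact (congrArg (· + q o) (hL i)).trans (sub_add_cancel _ _)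

end Isometries

end InscribedPolytope

theorem inscribed_unique_reconstruction_general {ι E : Type*} [Finite ι] [NormedAddCommGroup E]
    [InnerProductSpace ℝ E] [FiniteDimensional ℝ E] {p q : ι → E}
    (hpinj : Function.Injective p) (hqinj : Function.Injective q)
    (hpvert : Set.range p = Set.extremePoints ℝ (convexHull ℝ (Set.range p)))
    (hqvert : Set.range q = Set.extremePoints ℝ (convexHull ℝ (Set.range q)))
    (hcomb : ∀ S : Set ι,
      IsExtreme ℝ (convexHull ℝ (Set.range p)) (convexHull ℝ (p '' S)) ↔
        IsExtreme ℝ (convexHull ℝ (Set.range q)) (convexHull ℝ (q '' S)))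
    {cP cQ : E} {rP rQ : ℝ} (hinsP : ∀ i, ‖p i - cP‖ = rP) (hinsQ : ∀ i, ‖q i - cQ‖ = rQ)
    (hedge : ∀ i j, i ≠ j → IsExtreme ℝ (convexHull ℝ (Set.range p)) (segment ℝ (p i) (p j)) →
      ‖q i - q j‖ = ‖p i - p j‖) :
    ∃ e : E ≃ᵢ E, ∀ i, e (p i) = q i := by
  have hface (S : Set ι) : InscribedPolytope.IsFace p S ↔ InscribedPolytope.IsFace q S := by
    rw [InscribedPolytope.isFace_iff_isExtreme hpinj hpvert,
      InscribedPolytope.isFace_iff_isExtreme hqinj hqvert, hcomb S]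
  have hvertex (a : ι) : InscribedPolytope.IsFace p {a} := by
    rw [InscribedPolytope.isFace_iff_isExtreme hpinj hpvert, Set.image_singleton,
      convexHull_singleton, isExtreme_singleton, ← hpvert]
    exact Set.mem_range_self a
  have hnorm (a b : ι) (h : InscribedPolytope.IsFace p {a, b}) : ‖p a - p b‖ = ‖q a - q b‖ := by
    rcases eq_or_ne a b with rfl | hab
    · rw [sub_self, sub_self]
    · have hextreme := h.isExtreme
      rw [Set.image_pair, convexHull_pair] at hextreme
      exact (hedge a b hab hextreme).symm
  exact InscribedPolytope.exists_isometryEquiv_of_norm_sub_eq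
    (InscribedPolytope.norm_sub_eq_of_isFace_iff hface hvertex hinsP hinsQ hnorm)

theorem inscribed_unique_reconstruction {n d : ℕ}
    (p q : Fin n → EuclideanSpace ℝ (Fin d))
    (hpinj : Function.Injective p) (hqinj : Function.Injective q)
    (hpvert : Set.range p = Set.extremePoints ℝ (convexHull ℝ (Set.range p)))
    (hqvert : Set.range q = Set.extremePoints ℝ (convexHull ℝ (Set.range q)))
    (hcomb : CombEquiv p q)
    (cP cQ : EuclideanSpace ℝ (Fin d)) (rP rQ : ℝ)
    (hrP : 0 ≤ rP) (hrQ : 0 ≤ rQ)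
    (hinsP : ∀ i, ‖p i - cP‖ = rP) (hinsQ : ∀ i, ‖q i - cQ‖ = rQ)
    (h1 : ∀ i j, IsEdge p i j → ‖q i - q j‖ = ‖p i - p j‖) :
    ∃ e : EuclideanSpace ℝ (Fin d) ≃ᵢ EuclideanSpace ℝ (Fin d),
      ∀ i, e (p i) = q i :=
  inscribed_unique_reconstruction_general hpinj hqinj hpvert hqvert hcomb hinsP hinsQ
    fun i j hij h ↦ h1 i j ⟨hij, h⟩
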